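/- Let γ ∈ Γ_g be a non-trivial element. Then the core surface Core(⟨γ⟩) is connected and compact, its thick version is homeomorphic to an annulus, and both boundary cycles of Core(⟨γ⟩) have length ℓ(γ^{Γ_g}), the minimal length of a word in {a_1^{±1}, …, b_g^{±1}} representing the conjugacy class of γ in Γ_g. -/

import Mathlib

/-!
Formalization preamble for "Core Surfaces" (Magee–Puder).

We work with a fixed combinatorial (CW) model.  The surface `Σ_g` has one vertex,
`2g` directed labeled edges (the label `2i` plays the role of `a_{i+1}` and `2i+1`
the role of `b_{i+1}`), and one `4g`-gon glued along `[a₁,b₁]⋯[a_g,b_g]`.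

* `Gamma g` is the surface group, presented by the single relator.
* A `Complex g` is a combinatorial 2-complex with directed, labeled edges and
  2-cells given by their boundary walks; coverings of `Σ_g` are the complexes in
  which every vertex has exactly one incoming/outgoing edge of each label, every
  walk reading the relator is closed, and every closed walk reading the relator
  bounds exactly one face (`IsCovering`).  A tiled surface is a complex that
  embeds into such a covering (`IsTiledSurface`).
* Blocks, chains, boundary cycles (via the ribbon structure coming from the fixed
  cyclic order of the `4g` half-edges around a vertex of `Σ_g`), boundary-reduced
  and strongly boundary-reduced surfaces are defined combinatorially.
* Homotopy of edge-walks is the edge-path-group homotopy: backtrack insertions and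
  insertions of boundaries of (present) faces.
* `cover g J` is the covering space `J\~Σ_g` of `Σ_g` associated to a subgroup
  `J ≤ Γ_g` (vertices = right cosets), and `coreSub g J` is the core surface of
  `J`, defined exactly as in the paper: the union of all shortest representative
  cycles of essential free-homotopy classes, together with all components of the
  complement containing finitely many `4g`-gons.
-/

noncomputable section

namespace CS

/-- Signed letters over the generators `a₁,b₁,…,a_g,b_g` of `Γ_g`
(`a_{i+1} ↦ 2i`, `b_{i+1} ↦ 2i+1`); `true` means a positive letter. -/
abbrev Letter (g : ℕ) := Fin (2 * g) × Bool

/-- The label of the `p`-th letter of the relator `[a₁,b₁][a₂,b₂]⋯[a_g,b_g]`. -/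
def relLabel (g : ℕ) (p : Fin (4 * g)) : Fin (2 * g) :=
  ⟨2 * ((p : ℕ) / 4) + ((p : ℕ) % 4) % 2, by have := p.2; omega⟩

/-- The sign of the `p`-th letter of the relator. -/
def relSign (g : ℕ) (p : Fin (4 * g)) : Bool := decide ((p : ℕ) % 4 < 2)

/-- The relator `[a₁,b₁][a₂,b₂]⋯[a_g,b_g]` as a word (list of signed letters). -/
def relatorWord (g : ℕ) : List (Letter g) :=
  (List.finRange (4 * g)).map fun p => (relLabel g p, relSign g p)

/-- The relator as an element of the free group on the `2g` generators. -/
def relatorF (g : ℕ) : FreeGroup (Fin (2 * g)) :=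
  ((relatorWord g).map fun l => if l.2 then FreeGroup.of l.1 else (FreeGroup.of l.1)⁻¹).prod

/-- The surface group `Γ_g = ⟨a₁,b₁,…,a_g,b_g ∣ [a₁,b₁]⋯[a_g,b_g]⟩`. -/
abbrev Gamma (g : ℕ) := PresentedGroup ({relatorF g} : Set (FreeGroup (Fin (2 * g))))

/-- The image of a signed letter in `Γ_g`. -/
def letterG {g : ℕ} (l : Letter g) : Gamma g :=
  if l.2 then PresentedGroup.of l.1 else (PresentedGroup.of l.1)⁻¹

/-- The image of a word in `Γ_g`. -/
def wordG {g : ℕ} (w : List (Letter g)) : Gamma g := (w.map letterG).prod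

/-- `ℓ(γ^{Γ_g})`: the minimal length of a word in the generators representing the
conjugacy class of `γ` in `Γ_g`. -/
def conjLen {g : ℕ} (γ : Gamma g) : ℕ :=
  sInf {n | ∃ w : List (Letter g), w.length = n ∧ ∃ x : Gamma g, x * wordG w * x⁻¹ = γ}

/-! ### Half-edge positions around a vertex of `Σ_g`

The `4g` half-edges around the vertex `o` of `Σ_g` come in the (clockwise) cyclic
order `a₁`-out, `b₁`-in, `a₁`-in, `b₁`-out, `a₂`-out, `b₂`-in, `a₂`-in, `b₂`-out, …
-/

/-- Position of the outgoing `ℓ`-labeled half-edge in the cyclic order. -/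
def posOut {g : ℕ} (ℓ : Fin (2 * g)) : ℕ :=
  if (ℓ : ℕ) % 2 = 0 then 2 * (ℓ : ℕ) else 2 * (ℓ : ℕ) + 1

/-- Position of the incoming `ℓ`-labeled half-edge in the cyclic order. -/
def posIn {g : ℕ} (ℓ : Fin (2 * g)) : ℕ :=
  if (ℓ : ℕ) % 2 = 0 then 2 * (ℓ : ℕ) + 2 else 2 * (ℓ : ℕ) - 1

/-- The position of the half-edge through which a traversal of a dart with signed
letter `s` *arrives* at its terminal vertex. -/
def posArr {g : ℕ} (s : Letter g) : ℕ := if s.2 then posIn s.1 else posOut s.1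

/-- The position of the half-edge through which a traversal of a dart with signed
letter `s` *leaves* its initial vertex. -/
def posLv {g : ℕ} (s : Letter g) : ℕ := if s.2 then posOut s.1 else posIn s.1

/-- The number of half-edges strictly between the arrival half-edge of `s` and the
departure half-edge of `t`, in the clockwise cyclic order of the `4g` half-edges
around a vertex. -/
def gapN {g : ℕ} (s t : Letter g) : ℕ := (posLv t + 4 * g - (posArr s + 1)) % (4 * g)

/-! ### Combinatorial complexes -/

/-- A combinatorial at-most-2-dimensional CW-complex with directed edges labeled by
the generators of `Γ_g`, and 2-cells recorded by their boundary walks (lists of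
darts, i.e. edges with a direction of traversal). -/
structure Complex (g : ℕ) where
  V : Type
  E : Type
  F : Type
  src : E → V
  dst : E → V
  lab : E → Fin (2 * g)
  bdry : F → List (E × Bool)

namespace Complex

variable {g : ℕ} (Y : Complex g)

/-- Darts: edges together with a direction of traversal (`true` = forward). -/
abbrev D := Y.E × Bool

/-- The initial vertex of a dart. -/
def dTail (d : Y.D) : Y.V := if d.2 then Y.src d.1 else Y.dst d.1

/-- The terminal vertex of a dart. -/
def dHead (d : Y.D) : Y.V := if d.2 then Y.dst d.1 else Y.src d.1

/-- The reversal of a dart. -/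
def dRev (d : Y.D) : Y.D := (d.1, !d.2)

/-- The signed letter read by a dart. -/
def dLet (d : Y.D) : Letter g := (Y.lab d.1, d.2)

/-- The word read along a list of darts. -/
def wordOf (l : List Y.D) : List (Letter g) := l.map Y.dLet

/-- The reversed walk. -/
def revW (l : List Y.D) : List Y.D := (l.map Y.dRev).reverse

/-- `WalkFrom u v l` : `l` is a walk (edge-path) from `u` to `v`. -/
inductive WalkFrom : Y.V → Y.V → List Y.D → Prop
  | nil (v : Y.V) : WalkFrom v v []
  | cons (d : Y.D) {v : Y.V} {l : List Y.D} :
      WalkFrom (Y.dHead d) v l → WalkFrom (Y.dTail d) v (d :: l)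

/-- All darts of `l` use edges from the set `sE`. -/
def InSet (sE : Set Y.E) (l : List Y.D) : Prop := ∀ d ∈ l, d.1 ∈ sE

/-- Two darts are adjacent (can be traversed consecutively). -/
def adj (d d' : Y.D) : Prop := Y.dHead d = Y.dTail d'

/-- A nonempty closed walk. -/
def IsCycle (c : List Y.D) : Prop := c ≠ [] ∧ ∃ v, Y.WalkFrom v v c

/-- **P1**: at most one incoming and at most one outgoing `ℓ`-labeled edge at every
vertex, for every label `ℓ`. -/
def P1 : Prop :=
  (∀ e e' : Y.E, Y.src e = Y.src e' → Y.lab e = Y.lab e' → e = e') ∧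
  (∀ e e' : Y.E, Y.dst e = Y.dst e' → Y.lab e = Y.lab e' → e = e')

/-- **P2**: every walk reading a word equal to `1` in `Γ_g` is closed. -/
def P2 : Prop :=
  ∀ (u v : Y.V) (l : List Y.D), Y.WalkFrom u v l → wordG (Y.wordOf l) = 1 → u = v

/-- **P3**: every 2-cell is glued along a closed walk reading the relator
`[a₁,b₁]⋯[a_g,b_g]`, and every such closed walk bounds at most one 2-cell. -/
def P3 : Prop :=
  (∀ f : Y.F, (∃ v, Y.WalkFrom v v (Y.bdry f)) ∧ Y.wordOf (Y.bdry f) = relatorWord g) ∧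
  Function.Injective Y.bdry

/-- A combinatorial covering space of `Σ_g`: every vertex has exactly one outgoing
and one incoming edge of each label, every walk reading the relator is closed, and
every closed walk reading the relator bounds exactly one `4g`-gon. -/
def IsCovering : Prop :=
  Y.P1 ∧ Y.P3 ∧
  (∀ (v : Y.V) (ℓ : Fin (2 * g)), ∃ e, Y.src e = v ∧ Y.lab e = ℓ) ∧
  (∀ (v : Y.V) (ℓ : Fin (2 * g)), ∃ e, Y.dst e = v ∧ Y.lab e = ℓ) ∧
  (∀ (u v : Y.V) (l : List Y.D), Y.WalkFrom u v l → Y.wordOf l = relatorWord g → u = v) ∧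
  (∀ (v : Y.V) (l : List Y.D), Y.WalkFrom v v l → Y.wordOf l = relatorWord g →
    ∃ f, Y.bdry f = l)

end Complex

/-- A morphism of labeled complexes: maps cells to cells of the same dimension and
respects sources, targets, labels and face boundaries (equivalently, commutes with
the immersions to `Σ_g`). -/
structure Hom {g : ℕ} (Y Z : Complex g) where
  mV : Y.V → Z.V
  mE : Y.E → Z.E
  mF : Y.F → Z.F
  hsrc : ∀ e, Z.src (mE e) = mV (Y.src e)
  hdst : ∀ e, Z.dst (mE e) = mV (Y.dst e)
  hlab : ∀ e, Z.lab (mE e) = Y.lab e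
  hbdry : ∀ f, Z.bdry (mF f) = (Y.bdry f).map fun d => (mE d.1, d.2)

namespace Hom

variable {g : ℕ} {Y Z : Complex g}

/-- The induced map on darts. -/
def mD (φ : Hom Y Z) (d : Y.D) : Z.D := (φ.mE d.1, d.2)

/-- Injectivity (an embedding of complexes). -/
def Inj (φ : Hom Y Z) : Prop :=
  Function.Injective φ.mV ∧ Function.Injective φ.mE ∧ Function.Injective φ.mF

end Hom

namespace Complex

variable {g : ℕ} (Y : Complex g)

/-- A tiled surface: a complex which embeds into a combinatorial covering space of
`Σ_g` (compatibly with directions and labels). -/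
def IsTiledSurface : Prop :=
  ∃ Z : Complex g, Z.IsCovering ∧ ∃ φ : Hom Y Z, φ.Inj

/-- Connectivity of a complex (any two vertices are joined by a walk). -/
def Connected : Prop := Nonempty Y.V ∧ ∀ v w : Y.V, ∃ l, Y.WalkFrom v w l

/-! ### Blocks and chains -/

/-- A block: a nonempty walk such that successive darts have no half-edges between
them (hence it reads a subword of the cyclic relator, of length at most `4g`). -/
def IsBlock (l : List Y.D) : Prop :=
  l ≠ [] ∧ l.length ≤ 4 * g ∧
  List.Chain' (fun d d' => Y.adj d d' ∧ gapN (Y.dLet d) (Y.dLet d') = 0) l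

/-- Two blocks are consecutive: concatenation is a walk and there is exactly one
half-edge between the last dart of the first and the first dart of the second. -/
def chainStep (b b' : List Y.D) : Prop :=
  ∃ d d', b.getLast? = some d ∧ b'.head? = some d' ∧ Y.adj d d' ∧
    gapN (Y.dLet d) (Y.dLet d') = 1

/-- A chain: a nonempty sequence of consecutive blocks. -/
def IsChain (bs : List (List Y.D)) : Prop :=
  bs ≠ [] ∧ (∀ b ∈ bs, Y.IsBlock b) ∧ List.Chain' Y.chainStep bs

/-- A cyclic chain: a chain whose blocks pave an entire cycle. -/
def IsCyclicChain (bs : List (List Y.D)) : Prop :=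
  Y.IsChain bs ∧ ∃ b b', bs.getLast? = some b ∧ bs.head? = some b' ∧ Y.chainStep b b'

/-- A long chain: a chain of consecutive blocks of lengths `2g, 2g−1, …, 2g−1, 2g`. -/
def IsLongChain (bs : List (List Y.D)) : Prop :=
  Y.IsChain bs ∧ ∃ k, bs.map List.length = 2 * g :: (List.replicate k (2 * g - 1) ++ [2 * g])

/-- A half-chain: a cyclic chain all of whose blocks have length `2g − 1`. -/
def IsHalfChain (bs : List (List Y.D)) : Prop :=
  Y.IsCyclicChain bs ∧ ∀ b ∈ bs, b.length = 2 * g - 1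

/-! ### Boundary cycles of the thick version (relative to sets of present edges and
faces), via the ribbon structure -/

/-- `nextD sE d d'`: among darts (with edge in `sE`) leaving the head of `d`, the
dart `d'` is the first one in clockwise order after the arrival half-edge of `d`.
This is the successor map whose orbits trace the boundary components of the thick
version of the ribbon graph. -/
def nextD (sE : Set Y.E) (d d' : Y.D) : Prop :=
  d'.1 ∈ sE ∧ Y.adj d d' ∧
  ∀ d'' : Y.D, d''.1 ∈ sE → Y.adj d d'' →
    gapN (Y.dLet d) (Y.dLet d') ≤ gapN (Y.dLet d) (Y.dLet d'')

/-- The corner between the consecutive darts `d, d'` is filled by a face from `sF`. -/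
def faceStep (sF : Set Y.F) (d d' : Y.D) : Prop :=
  ∃ f ∈ sF, [d, d'] <:+: (Y.bdry f ++ Y.bdry f)

/-- One step along the boundary of the thick version. -/
def bStep (sE : Set Y.E) (sF : Set Y.F) (d d' : Y.D) : Prop :=
  d.1 ∈ sE ∧ Y.nextD sE d d' ∧ ¬ Y.faceStep sF d d'

/-- A (finite segment of a) boundary cycle of the thick version. -/
def BPath (sE : Set Y.E) (sF : Set Y.F) (l : List Y.D) : Prop :=
  l ≠ [] ∧ Y.InSet sE l ∧ List.Chain' (Y.bStep sE sF) l

/-- A (finite) boundary cycle of the thick version. -/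
def BCycle (sE : Set Y.E) (sF : Set Y.F) (l : List Y.D) : Prop :=
  Y.BPath sE sF l ∧ ∃ d d', l.getLast? = some d ∧ l.head? = some d' ∧ Y.bStep sE sF d d'

/-- A dart lying on the boundary of the thick version. -/
def IsBDart (sE : Set Y.E) (sF : Set Y.F) (d : Y.D) : Prop :=
  d.1 ∈ sE ∧ ∃ d', Y.nextD sE d d' ∧ ¬ Y.faceStep sF d d'

/-- Boundary reduced: no boundary cycle contains a long block (length `≥ 2g+1`) or
a long chain. -/
def BoundaryReduced (sE : Set Y.E) (sF : Set Y.F) : Prop :=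
  (∀ l, Y.BPath sE sF l → ¬ (Y.IsBlock l ∧ 2 * g + 1 ≤ l.length)) ∧
  (∀ bs, Y.IsLongChain bs → ¬ Y.BPath sE sF bs.flatten)

/-- Strongly boundary reduced: no boundary cycle contains a half-block (length
exactly `2g`) or a half-chain. -/
def StronglyBoundaryReduced (sE : Set Y.E) (sF : Set Y.F) : Prop :=
  (∀ l, Y.BPath sE sF l → ¬ (Y.IsBlock l ∧ l.length = 2 * g)) ∧
  (∀ bs, Y.IsHalfChain bs → ¬ Y.BCycle sE sF bs.flatten)

/-! ### Combinatorial homotopy of walks -/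

/-- A closed walk traversing the boundary of a face from `sF` (in either direction,
starting anywhere). -/
def faceLoop (sF : Set Y.F) (b : List Y.D) : Prop :=
  ∃ f ∈ sF, ∃ n, b = (Y.bdry f).rotate n ∨ b = Y.revW ((Y.bdry f).rotate n)

/-- Elementary homotopy move: insertion of a backtrack or of a face boundary. -/
def elemMove (sE : Set Y.E) (sF : Set Y.F) (l l' : List Y.D) : Prop :=
  (∃ (l₁ l₂ : List Y.D) (d : Y.D), d.1 ∈ sE ∧ l = l₁ ++ l₂ ∧ l' = l₁ ++ d :: Y.dRev d :: l₂) ∨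
  (∃ l₁ l₂ b, Y.faceLoop sF b ∧ l = l₁ ++ l₂ ∧ l' = l₁ ++ b ++ l₂)

/-- Homotopy (rel endpoints) of walks from `u` to `v`, inside the subcomplex with
edge set `sE` and face set `sF`. -/
def Homotopic (sE : Set Y.E) (sF : Set Y.F) (u v : Y.V) (c c' : List Y.D) : Prop :=
  Relation.EqvGen
    (fun a b =>
      Y.WalkFrom u v a ∧ Y.WalkFrom u v b ∧ Y.InSet sE a ∧ Y.InSet sE b ∧
        (Y.elemMove sE sF a b ∨ Y.elemMove sE sF b a)) c c'

/-- A closed walk which is null-homotopic. -/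
def NullHomotopic (sE : Set Y.E) (sF : Set Y.F) (c : List Y.D) : Prop :=
  ∃ v, Y.WalkFrom v v c ∧ Y.Homotopic sE sF v v c []

/-- An essential cycle: a nonempty closed walk which is not null-homotopic. -/
def Essential (sE : Set Y.E) (sF : Set Y.F) (c : List Y.D) : Prop :=
  Y.IsCycle c ∧ Y.InSet sE c ∧ ¬ Y.NullHomotopic sE sF c

/-- Free homotopy of closed walks. -/
def FreelyHomotopic (sE : Set Y.E) (sF : Set Y.F) (c c' : List Y.D) : Prop :=
  ∃ u v q, Y.WalkFrom u u c ∧ Y.WalkFrom v v c' ∧ Y.WalkFrom u v q ∧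
    Y.InSet sE q ∧ Y.InSet sE c ∧ Y.InSet sE c' ∧
    Y.Homotopic sE sF u u c (q ++ c' ++ Y.revW q)

/-- `c` is a shortest representative of its free homotopy class. -/
def ShortestRep (sE : Set Y.E) (sF : Set Y.F) (c : List Y.D) : Prop :=
  ∀ c', Y.FreelyHomotopic sE sF c c' → c.length ≤ c'.length

end Complex

/-- `s` occurs as a contiguous subword of the cyclic word `c`. -/
def cycContains {α : Type*} (c s : List α) : Prop :=
  s ≠ [] ∧ s.length ≤ c.length ∧ s <:+: (c ++ c)

namespace Complex

variable {g : ℕ} (Y : Complex g)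

/-- The cycle `c` contains no long block and no long chain. -/
def NoLongBlockOrChainCyc (c : List Y.D) : Prop :=
  (∀ s, cycContains c s → ¬ (Y.IsBlock s ∧ 2 * g + 1 ≤ s.length)) ∧
  (∀ bs, Y.IsLongChain bs → ¬ cycContains c bs.flatten)

/-- A (cyclically) non-backtracking cycle. -/
def NonBacktrackingCyc (c : List Y.D) : Prop :=
  ¬ ∃ d : Y.D, cycContains c [d, Y.dRev d]

/-- A cycle which is essential and a shortest representative of its
free homotopy class. -/
def GoodCycle (c : List Y.D) : Prop :=
  Y.IsCycle c ∧ Y.Essential Set.univ Set.univ c ∧ Y.ShortestRep Set.univ Set.univ c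

/-! ### Cells and components of complements -/

/-- The cells of a complex. -/
def Cell := Y.V ⊕ Y.E ⊕ Y.F

def vCell (v : Y.V) : Y.Cell := Sum.inl v
def eCell (e : Y.E) : Y.Cell := Sum.inr (Sum.inl e)
def fCell (f : Y.F) : Y.Cell := Sum.inr (Sum.inr f)

/-- Basic incidence of (open) cells. -/
def inc0 : Y.Cell → Y.Cell → Prop := fun c c' =>
  match c, c' with
  | Sum.inl v, Sum.inr (Sum.inl e) => Y.src e = v ∨ Y.dst e = v
  | Sum.inl v, Sum.inr (Sum.inr f) => ∃ d ∈ Y.bdry f, Y.dTail d = v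
  | Sum.inr (Sum.inl e), Sum.inr (Sum.inr f) => ∃ b, (e, b) ∈ Y.bdry f
  | _, _ => False

/-- Symmetrized incidence of cells. -/
def incid (c c' : Y.Cell) : Prop := Y.inc0 c c' ∨ Y.inc0 c' c

end Complex

/-- A triple of subsets of the cells of a complex `Y` (a prospective subcomplex). -/
structure SubC {g : ℕ} (Y : Complex g) where
  sV : Set Y.V
  sE : Set Y.E
  sF : Set Y.F

namespace SubC

variable {g : ℕ} {Y : Complex g}

/-- `S` is an actual subcomplex: closed under taking boundaries of cells. -/
def IsSub (S : SubC Y) : Prop :=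
  (∀ e ∈ S.sE, Y.src e ∈ S.sV ∧ Y.dst e ∈ S.sV) ∧
  (∀ f ∈ S.sF, ∀ d ∈ Y.bdry f, d.1 ∈ S.sE)

/-- Containment of subcomplexes. -/
def le (S T : SubC Y) : Prop := S.sV ⊆ T.sV ∧ S.sE ⊆ T.sE ∧ S.sF ⊆ T.sF

/-- Compactness: finitely many cells. -/
def Compact (S : SubC Y) : Prop := S.sV.Finite ∧ S.sE.Finite ∧ S.sF.Finite

/-- Connectivity of the subcomplex. -/
def Connected (S : SubC Y) : Prop :=
  S.sV.Nonempty ∧ ∀ v ∈ S.sV, ∀ w ∈ S.sV, ∃ l, Y.WalkFrom v w l ∧ Y.InSet S.sE l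

/-- Image of a subcomplex under a morphism. -/
def image {Z : Complex g} (φ : Hom Y Z) (S : SubC Y) : SubC Z :=
  ⟨φ.mV '' S.sV, φ.mE '' S.sE, φ.mF '' S.sF⟩

end SubC

/-- The whole complex, as a subcomplex of itself. -/
def fullSub {g : ℕ} (Y : Complex g) : SubC Y := ⟨Set.univ, Set.univ, Set.univ⟩

namespace Complex

variable {g : ℕ} (Y : Complex g)

/-- Membership of a cell in a subcomplex. -/
def inSub (S : SubC Y) : Y.Cell → Prop := fun c =>
  match c with
  | Sum.inl v => v ∈ S.sV
  | Sum.inr (Sum.inl e) => e ∈ S.sE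
  | Sum.inr (Sum.inr f) => f ∈ S.sF

/-- Reachability of cells through the open complement of the subcomplex `S`
(= lying in the same connected component of the complement). -/
def reachS (S : SubC Y) (c c' : Y.Cell) : Prop :=
  Relation.ReflTransGen (fun a b => Y.incid a b ∧ ¬ Y.inSub S a ∧ ¬ Y.inSub S b) c c'

end Complex

/-- The closure (as a subcomplex) of the connected component of the cell `c₀` in the
complement of the subcomplex `S`. -/
def compCl {g : ℕ} (Y : Complex g) (S : SubC Y) (c₀ : Y.Cell) : SubC Y :=
  let cF : Set Y.F := {f | Y.reachS S c₀ (Y.fCell f)}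
  let cE : Set Y.E :=
    {e | Y.reachS S c₀ (Y.eCell e)} ∪ {e | ∃ f ∈ cF, ∃ b, (e, b) ∈ Y.bdry f}
  let cV : Set Y.V :=
    {v | Y.reachS S c₀ (Y.vCell v)} ∪ {v | ∃ e ∈ cE, Y.src e = v ∨ Y.dst e = v}
  ⟨cV, cE, cF⟩

/-- The subcomplex has exactly one boundary cycle (which covers all boundary darts). -/
def OneBdry {g : ℕ} (Y : Complex g) (S : SubC Y) : Prop :=
  ∃ δ, Y.BCycle S.sE S.sF δ ∧ ∀ d, Y.IsBDart S.sE S.sF d → d ∈ δ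

/-- The subcomplex has exactly two (disjoint) boundary cycles, covering all
boundary darts. -/
def TwoBdry {g : ℕ} (Y : Complex g) (S : SubC Y) : Prop :=
  ∃ δ₁ δ₂, Y.BCycle S.sE S.sF δ₁ ∧ Y.BCycle S.sE S.sF δ₂ ∧ δ₁.Disjoint δ₂ ∧
    ∀ d, Y.IsBDart S.sE S.sF d → d ∈ δ₁ ∨ d ∈ δ₂

/-- The boundary-reduced closure of `S` inside `Y`: the intersection of all
intermediate boundary reduced subcomplexes. -/
def BRcl {g : ℕ} (Y : Complex g) (S : SubC Y) : SubC Y where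
  sV := ⋂ T ∈ {T : SubC Y | T.IsSub ∧ S.le T ∧ Y.BoundaryReduced T.sE T.sF}, T.sV
  sE := ⋂ T ∈ {T : SubC Y | T.IsSub ∧ S.le T ∧ Y.BoundaryReduced T.sE T.sF}, T.sE
  sF := ⋂ T ∈ {T : SubC Y | T.IsSub ∧ S.le T ∧ Y.BoundaryReduced T.sE T.sF}, T.sF

/-- The strongly-boundary-reduced closure of `S` inside `Y`. -/
def SBRcl {g : ℕ} (Y : Complex g) (S : SubC Y) : SubC Y where
  sV := ⋂ T ∈ {T : SubC Y | T.IsSub ∧ S.le T ∧ Y.StronglyBoundaryReduced T.sE T.sF}, T.sV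
  sE := ⋂ T ∈ {T : SubC Y | T.IsSub ∧ S.le T ∧ Y.StronglyBoundaryReduced T.sE T.sF}, T.sE
  sF := ⋂ T ∈ {T : SubC Y | T.IsSub ∧ S.le T ∧ Y.StronglyBoundaryReduced T.sE T.sF}, T.sF

/-- An isomorphism between the subcomplex `S` of `Y` and the subcomplex `T` of `Z`. -/
structure SubEquiv {g : ℕ} (Y : Complex g) (S : SubC Y) (Z : Complex g) (T : SubC Z) where
  fV : Y.V → Z.V
  fE : Y.E → Z.E
  fF : Y.F → Z.F
  bijV : Set.BijOn fV S.sV T.sV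
  bijE : Set.BijOn fE S.sE T.sE
  bijF : Set.BijOn fF S.sF T.sF
  hsrc : ∀ e ∈ S.sE, Z.src (fE e) = fV (Y.src e)
  hdst : ∀ e ∈ S.sE, Z.dst (fE e) = fV (Y.dst e)
  hlab : ∀ e ∈ S.sE, Z.lab (fE e) = Y.lab e
  hbdry : ∀ f ∈ S.sF, Z.bdry (fF f) = (Y.bdry f).map fun d => (fE d.1, d.2)

/-- `FunnelComponent Y S c₀`: the connected component of the cell `c₀` in the
complement of the subcomplex `S` is a twice-punctured sphere with one funnel and
one fake-puncture.  Rendered combinatorially: the component contains infinitely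
many `4g`-gons (the funnel); there is a boundary cycle `δ` of `S` adjacent to the
component, it is unique (one fake-puncture), and every closed walk inside the
closure of the component is freely homotopic there to a power of `δ` or of its
inverse (so the closure is a half-open annulus bounded by `δ`). -/
def FunnelComponent {g : ℕ} (Y : Complex g) (S : SubC Y) (c₀ : Y.Cell) : Prop :=
  {f : Y.F | Y.reachS S c₀ (Y.fCell f)}.Infinite ∧
  ∃ δ : List Y.D, Y.BCycle S.sE S.sF δ ∧
    (∃ d ∈ δ, ∃ c', Y.incid (Y.eCell d.1) c' ∧ Y.reachS S c₀ c') ∧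
    (∀ δ', Y.BCycle S.sE S.sF δ' →
      (∃ d ∈ δ', ∃ c', Y.incid (Y.eCell d.1) c' ∧ Y.reachS S c₀ c') →
      ∃ n, δ' = δ.rotate n) ∧
    (∀ (v : Y.V) (l : List Y.D), Y.WalkFrom v v l →
      Y.InSet ({e | Y.reachS S c₀ (Y.eCell e)} ∪ {e | ∃ b, (e, b) ∈ δ}) l →
      ∃ n,
        Y.FreelyHomotopic ({e | Y.reachS S c₀ (Y.eCell e)} ∪ {e | ∃ b, (e, b) ∈ δ})
          {f | Y.reachS S c₀ (Y.fCell f)} l ((List.replicate n δ).flatten) ∨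
        Y.FreelyHomotopic ({e | Y.reachS S c₀ (Y.eCell e)} ∪ {e | ∃ b, (e, b) ∈ δ})
          {f | Y.reachS S c₀ (Y.fCell f)} l ((List.replicate n (Y.revW δ)).flatten))

/-- `Y` contains a funnel: an essential cycle `δ` of `Y` cutting off an infinite
region of `Y` which is attached to the rest of `Y` only along `δ`, contains no
boundary of `Y`, and is a half-open annulus (every loop inside is freely homotopic
to a power of `δ`); i.e. an end of `Y` which is a puncture of the ambient covering. -/
def HasFunnel {g : ℕ} (Y : Complex g) : Prop :=
  ∃ (δ : List Y.D) (sE : Set Y.E) (sF : Set Y.F),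
    Y.IsCycle δ ∧ Y.Essential Set.univ Set.univ δ ∧
    (∀ d ∈ δ, d.1 ∉ sE) ∧ sE.Nonempty ∧ sF.Infinite ∧
    (∀ f ∈ sF, ∀ d ∈ Y.bdry f, d.1 ∈ sE ∨ ∃ b, (d.1, b) ∈ δ) ∧
    (∀ f : Y.F, (∃ d ∈ Y.bdry f, d.1 ∈ sE) → f ∈ sF) ∧
    (∀ d : Y.D, d.1 ∈ sE → ¬ Y.IsBDart Set.univ Set.univ d) ∧
    (∀ v : Y.V, (∃ e ∈ sE, Y.src e = v ∨ Y.dst e = v) → (∀ d ∈ δ, Y.dTail d ≠ v) →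
      ∀ e' : Y.E, (Y.src e' = v ∨ Y.dst e' = v) → e' ∈ sE) ∧
    (∀ (v : Y.V) (l : List Y.D), Y.WalkFrom v v l →
      Y.InSet (sE ∪ {e | ∃ b, (e, b) ∈ δ}) l →
      ∃ n,
        Y.FreelyHomotopic (sE ∪ {e | ∃ b, (e, b) ∈ δ}) sF l
          ((List.replicate n δ).flatten) ∨
        Y.FreelyHomotopic (sE ∪ {e | ∃ b, (e, b) ∈ δ}) sF l
          ((List.replicate n (Y.revW δ)).flatten))

/-- The fundamental group of `Y` is cyclic: some closed walk `c` generates all free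
homotopy classes of loops.  (For a connected surface this is *equivalent to NOT
having genus ≥ 1 or at least 3 boundary components/punctures*.) -/
def CyclicPi1 {g : ℕ} (Y : Complex g) : Prop :=
  ∃ c : List Y.D, ∀ (v : Y.V) (l : List Y.D), Y.WalkFrom v v l →
    ∃ n,
      Y.FreelyHomotopic Set.univ Set.univ l ((List.replicate n c).flatten) ∨
      Y.FreelyHomotopic Set.univ Set.univ l ((List.replicate n (Y.revW c)).flatten)

/-! ### The covering space `J\~Σ_g` and the core surface of `J` -/

/-- Right cosets `Jx` of `J` in `Γ_g` — the vertices (and faces) of `J\~Σ_g`. -/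
abbrev Cos (g : ℕ) (J : Subgroup (Gamma g)) := Quotient (QuotientGroup.rightRel J)

/-- The coset `Jx`. -/
def mkCos (g : ℕ) (J : Subgroup (Gamma g)) (x : Gamma g) : Cos g J :=
  Quotient.mk _ x

/-- Right multiplication on right cosets. -/
def rmul (g : ℕ) (J : Subgroup (Gamma g)) (x : Gamma g) : Cos g J → Cos g J :=
  Quotient.map (· * x) (by
    intro a b hab
    have h1 : b * a⁻¹ ∈ J := QuotientGroup.rightRel_apply.mp hab
    refine QuotientGroup.rightRel_apply.mpr ?_
    have h2 : b * x * (a * x)⁻¹ = b * a⁻¹ := by group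
    rw [h2]; exact h1)

/-- The walk in `J\~Σ_g` starting at a vertex and reading a given word. -/
def relWalk (g : ℕ) (J : Subgroup (Gamma g)) :
    Cos g J → List (Letter g) → List ((Cos g J × Fin (2 * g)) × Bool)
  | _, [] => []
  | v, (ℓ, true) :: w =>
      ((v, ℓ), true) :: relWalk g J (rmul g J (PresentedGroup.of ℓ) v) w
  | v, (ℓ, false) :: w =>
      ((rmul g J (PresentedGroup.of ℓ)⁻¹ v, ℓ), false) ::
        relWalk g J (rmul g J (PresentedGroup.of ℓ)⁻¹ v) w

/-- The covering space `Υ = J\~Σ_g` of `Σ_g` corresponding to the subgroup `J`,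
with the CW-structure pulled back from `Σ_g`: vertices and `4g`-gons are the right
cosets of `J`, and each vertex carries one outgoing edge per label. -/
def cover (g : ℕ) (J : Subgroup (Gamma g)) : Complex g where
  V := Cos g J
  E := Cos g J × Fin (2 * g)
  F := Cos g J
  src e := e.1
  dst e := rmul g J (PresentedGroup.of e.2) e.1
  lab e := e.2
  bdry v := relWalk g J v (relatorWord g)

/-- The map `J₁\~Σ_g → J₂\~Σ_g` on vertices, for `J₁ ≤ J₂`. -/
def coverMapV {g : ℕ} {J₁ J₂ : Subgroup (Gamma g)} (h : J₁ ≤ J₂) :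
    Cos g J₁ → Cos g J₂ :=
  Quotient.map id (by
    intro a b hab
    have h1 : b * a⁻¹ ∈ J₁ := QuotientGroup.rightRel_apply.mp hab
    exact QuotientGroup.rightRel_apply.mpr (h h1))

/-- The natural covering morphism on edges. -/
def coverMapE {g : ℕ} {J₁ J₂ : Subgroup (Gamma g)} (h : J₁ ≤ J₂)
    (e : (cover g J₁).E) : (cover g J₂).E :=
  (coverMapV h e.1, e.2)

/-- The natural covering morphism on darts. -/
def coverMapD {g : ℕ} {J₁ J₂ : Subgroup (Gamma g)} (h : J₁ ≤ J₂)
    (d : (cover g J₁).D) : (cover g J₂).D :=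
  (coverMapE h d.1, d.2)

/-- The cycle `c` in `J\~Σ_g` represents the conjugacy class of `γ` in `J`
(conjugacy classes in `J` ↔ free homotopy classes of essential loops in `J\~Σ_g`). -/
def RepCls {g : ℕ} (J : Subgroup (Gamma g)) (c : List ((cover g J).D))
    (γ : Gamma g) : Prop :=
  ∃ x j : Gamma g, j ∈ J ∧
    (cover g J).WalkFrom (mkCos g J x) (mkCos g J x) c ∧
    x * wordG ((cover g J).wordOf c) * x⁻¹ = j * γ * j⁻¹

/-- Step (i) of the definition of the core surface: the edges lying on some
shortest representative cycle of an essential free homotopy class. -/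
def coreE1 (g : ℕ) (J : Subgroup (Gamma g)) : Set (cover g J).E :=
  {e | ∃ c, (cover g J).GoodCycle c ∧ ∃ b, (e, b) ∈ c}

/-- The vertices of step (i) of the definition of the core surface. -/
def coreV1 (g : ℕ) (J : Subgroup (Gamma g)) : Set (cover g J).V :=
  {v | ∃ e ∈ coreE1 g J, (cover g J).src e = v ∨ (cover g J).dst e = v}

/-- Step (i) of the definition of the core surface, as a subcomplex of `J\~Σ_g`. -/
def coreS1 (g : ℕ) (J : Subgroup (Gamma g)) : SubC (cover g J) :=
  ⟨coreV1 g J, coreE1 g J, ∅⟩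

/-- A cell of `J\~Σ_g` lying in a connected component of the complement of step (i)
which contains only finitely many `4g`-gons. -/
def coreFin (g : ℕ) (J : Subgroup (Gamma g)) (c : (cover g J).Cell) : Prop :=
  ¬ (cover g J).inSub (coreS1 g J) c ∧
  {f : (cover g J).F | (cover g J).reachS (coreS1 g J) c ((cover g J).fCell f)}.Finite

open Classical in
/-- The core surface `Core(J)` of a subgroup `J ≤ Γ_g`, as a subcomplex of
`Υ = J\~Σ_g`: (i) the union of all shortest representative cycles of essential
free homotopy classes in `Υ`, together with (ii) all connected components of the
complement containing finitely many `4g`-gons.  For the trivial subgroup it is a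
single vertex. -/
def coreSub (g : ℕ) (J : Subgroup (Gamma g)) : SubC (cover g J) :=
  if J = ⊥ then ⟨{mkCos g J 1}, ∅, ∅⟩
  else
    ⟨coreV1 g J ∪ {v | coreFin g J ((cover g J).vCell v)},
     coreE1 g J ∪ {e | coreFin g J ((cover g J).eCell e)},
     {f | coreFin g J ((cover g J).fCell f)}⟩

section
set_option linter.unusedSimpArgs false
set_option linter.deprecated false
set_option linter.unusedVariables false

/-! ### Letters -/
section Letters
variable {g : ℕ}

def linv (s : Letter g) : Letter g := (s.1, !s.2)

@[simp] lemma linv_linv (s : Letter g) : linv (linv s) = s := by simp [linv]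

lemma linv_ne (s : Letter g) : linv s ≠ s := by
  rcases s with ⟨a, b⟩; cases b <;> simp [linv]

lemma letterG_linv (s : Letter g) : letterG (linv s) = (letterG s)⁻¹ := by
  rcases s with ⟨a, b⟩; cases b <;> simp [linv, letterG]

lemma posArr_eq (s : Letter g) : posArr s = posLv (linv s) := by
  rcases s with ⟨a, b⟩; cases b <;> simp [linv, posArr, posLv]

lemma posLv_lt (s : Letter g) : posLv s < 4 * g := by
  rcases s with ⟨⟨a, ha⟩, b⟩; cases b <;> simp [posLv, posIn, posOut] <;> split_ifs <;> omega

lemma posLv_inj {s t : Letter g} (h : posLv s = posLv t) : s = t := by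
  rcases s with ⟨⟨a, ha⟩, b⟩; rcases t with ⟨⟨a', ha'⟩, b'⟩
  cases b <;> cases b' <;> simp [posLv, posIn, posOut] at h ⊢ <;> split_ifs at h <;> omega

/-- letter with a given position -/
def lt (p : ℕ) (hp : p < 4 * g) : Letter g :=
  (⟨2 * (p / 4) + (if p % 4 = 0 ∨ p % 4 = 2 then 0 else 1), by split_ifs <;> omega⟩,
    decide (p % 4 = 0 ∨ p % 4 = 3))

lemma posLv_lt_eq (p : ℕ) (hp : p < 4 * g) : posLv (lt p hp) = p := by
  have h4 : p % 4 = 0 ∨ p % 4 = 1 ∨ p % 4 = 2 ∨ p % 4 = 3 := by omega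
  rcases h4 with h | h | h | h <;> simp [lt, posLv, posIn, posOut, h] <;> omega

/-- vertex successor (clockwise) -/
def vs (s : Letter g) : Letter g :=
  lt ((posLv s + 1) % (4 * g)) (Nat.mod_lt _ (by have := posLv_lt s; omega))

lemma posLv_vs (s : Letter g) : posLv (vs s) = (posLv s + 1) % (4 * g) := posLv_lt_eq _ _

lemma vs_inj : Function.Injective (vs : Letter g → Letter g) := by
  intro s t h
  apply posLv_inj
  have h1 := congrArg posLv h
  rw [posLv_vs, posLv_vs] at h1
  have hs := posLv_lt s
  have ht := posLv_lt t
  by_cases a : posLv s + 1 = 4 * g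
  · by_cases b : posLv t + 1 = 4 * g
    · omega
    · rw [a, Nat.mod_self, Nat.mod_eq_of_lt (by omega)] at h1; omega
  · by_cases b : posLv t + 1 = 4 * g
    · rw [b, Nat.mod_self, Nat.mod_eq_of_lt (by omega)] at h1; omega
    · rw [Nat.mod_eq_of_lt (by omega), Nat.mod_eq_of_lt (by omega)] at h1; omega

lemma vs_bij : Function.Bijective (vs : Letter g → Letter g) :=
  Finite.injective_iff_bijective.mp vs_inj

lemma posLv_vs_iter (k : ℕ) (s : Letter g) : posLv (vs^[k] s) = (posLv s + k) % (4 * g) := by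
  induction k with
  | zero => simp [Nat.mod_eq_of_lt (posLv_lt s)]
  | succ k ih =>
    rw [Function.iterate_succ_apply', posLv_vs, ih, Nat.mod_add_mod]; rfl

lemma exists_vs_iter (s t : Letter g) : ∃ k, k < 4 * g ∧ vs^[k] s = t := by
  have hs := posLv_lt s
  have ht := posLv_lt t
  refine ⟨(posLv t + 4 * g - posLv s) % (4 * g), Nat.mod_lt _ (by omega), ?_⟩
  apply posLv_inj
  rw [posLv_vs_iter, Nat.add_mod_mod, ← Nat.add_sub_assoc (by omega), Nat.add_sub_cancel_left,
    Nat.add_mod_right, Nat.mod_eq_of_lt ht]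

lemma vs_const {α : Type*} (p : Letter g → α) (h : ∀ s, p (vs s) = p s) (s t : Letter g) :
    p s = p t := by
  obtain ⟨k, -, rfl⟩ := exists_vs_iter s t
  induction k with
  | zero => rfl
  | succ k ih => rw [Function.iterate_succ_apply', h, ih]

lemma vs_iter_period (s : Letter g) : vs^[4 * g] s = s := by
  apply posLv_inj
  rw [posLv_vs_iter, Nat.add_mod_right, Nat.mod_eq_of_lt (posLv_lt s)]

/-- next letter in the relator -/
def nx (s : Letter g) : Letter g := vs (linv s)

lemma gapN_iter (s : Letter g) (j : ℕ) (hj : j < 4 * g) : gapN s (vs^[j] (nx s)) = j := by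
  have h0 := posLv_lt (linv s)
  unfold gapN nx
  rw [← Function.iterate_succ_apply, posLv_vs_iter, posArr_eq]
  generalize posLv (linv s) = a at *
  by_cases h : a + (j + 1) < 4 * g
  · rw [Nat.succ_eq_add_one, Nat.mod_eq_of_lt h]
    have : a + (j + 1) + 4 * g - (a + 1) = j + 4 * g := by omega
    rw [this, Nat.add_mod_right, Nat.mod_eq_of_lt hj]
  · have h3 : (a + (j + 1)) % (4 * g) = a + (j + 1) - 4 * g := by
      rw [Nat.mod_eq_sub_mod (by omega), Nat.mod_eq_of_lt (by omega)]
    rw [Nat.succ_eq_add_one, h3]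
    have : a + (j + 1) - 4 * g + 4 * g - (a + 1) = j := by omega
    rw [this, Nat.mod_eq_of_lt hj]

lemma gapN_lt (s t : Letter g) : gapN s t < 4 * g := by
  have := posLv_lt s
  exact Nat.mod_lt _ (by omega)

lemma iter_gapN (s t : Letter g) : vs^[gapN s t] (nx s) = t := by
  obtain ⟨k, hk, rfl⟩ := exists_vs_iter (nx s) t
  rw [gapN_iter _ _ hk]

/-! relator positions -/
def rp (s : Letter g) : ℕ :=
  if (s.1 : ℕ) % 2 = 0 then (if s.2 then 2 * (s.1 : ℕ) else 2 * (s.1 : ℕ) + 2)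
  else (if s.2 then 2 * (s.1 : ℕ) - 1 else 2 * (s.1 : ℕ) + 1)

lemma rp_lt (s : Letter g) : rp s < 4 * g := by
  rcases s with ⟨⟨a, ha⟩, b⟩; cases b <;> simp [rp] <;> split_ifs <;> omega

lemma length_relator : (relatorWord g).length = 4 * g := by simp [relatorWord]

def rl (p : ℕ) (hp : p < 4 * g) : Letter g := (relLabel g ⟨p, hp⟩, relSign g ⟨p, hp⟩)

lemma relator_get (p : ℕ) (hp : p < (relatorWord g).length) :
    (relatorWord g)[p] = rl p (by rwa [length_relator] at hp) := by
  simp [relatorWord, rl]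

lemma rl_rp (s : Letter g) : rl (rp s) (rp_lt s) = s := by
  rcases s with ⟨⟨a, ha⟩, b⟩
  rcases Nat.mod_two_eq_zero_or_one a with h | h <;> cases b <;>
    simp [rl, rp, relLabel, relSign, h] <;> omega

lemma rp_rl (p : ℕ) (hp : p < 4 * g) : rp (rl p hp) = p := by
  have h4 : p % 4 = 0 ∨ p % 4 = 1 ∨ p % 4 = 2 ∨ p % 4 = 3 := by omega
  rcases h4 with h | h | h | h <;> simp [rl, rp, relLabel, relSign, h] <;> omega

lemma rp_inj {s t : Letter g} (h : rp s = rp t) : s = t := by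
  rw [← rl_rp s, ← rl_rp t]; congr 1

lemma nx_rl (p : ℕ) (hp : p < 4 * g) :
    nx (rl p hp) = rl ((p + 1) % (4 * g)) (Nat.mod_lt _ (by omega)) := by
  apply posLv_inj
  unfold nx
  rw [posLv_vs]
  by_cases hl : p + 1 = 4 * g
  · have h : p % 4 = 3 := by omega
    have h1 : posLv (linv (rl p hp)) = p := by
      simp [rl, linv, posLv, posIn, posOut, relLabel, relSign, h]; omega
    rw [h1]
    simp only [hl, Nat.mod_self]
    simp [rl, posLv, posOut, relLabel, relSign]
  · have h2 : (p + 1) % (4 * g) = p + 1 := Nat.mod_eq_of_lt (by omega)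
    simp only [h2]
    have h4 : p % 4 = 0 ∨ p % 4 = 1 ∨ p % 4 = 2 ∨ p % 4 = 3 := by omega
    have hp1 : p + 1 < 4 * g := by omega
    have key : posLv (linv (rl p hp)) + 1 = posLv (rl (p + 1) hp1) := by
      rcases h4 with h | h | h | h
      · have h' : (p + 1) % 4 = 1 := by omega
        simp [rl, linv, posLv, posIn, posOut, relLabel, relSign, h, h']; omega
      · have h' : (p + 1) % 4 = 2 := by omega
        simp [rl, linv, posLv, posIn, posOut, relLabel, relSign, h, h']; omega
      · have h' : (p + 1) % 4 = 3 := by omega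
        simp [rl, linv, posLv, posIn, posOut, relLabel, relSign, h, h']; omega
      · have h' : (p + 1) % 4 = 0 := by omega
        simp [rl, linv, posLv, posIn, posOut, relLabel, relSign, h, h']; omega
    rw [key, Nat.mod_eq_of_lt (posLv_lt _)]

/-! words -/
@[simp] lemma wordG_nil : wordG ([] : List (Letter g)) = 1 := rfl
@[simp] lemma wordG_cons (s : Letter g) (w) : wordG (s :: w) = letterG s * wordG w := by
  simp [wordG]
@[simp] lemma wordG_append (w w' : List (Letter g)) : wordG (w ++ w') = wordG w * wordG w' := by
  simp [wordG]

lemma wordG_relator : wordG (relatorWord g) = 1 := by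
  have h : (PresentedGroup.mk ({relatorF g} : Set (FreeGroup (Fin (2 * g))))) (relatorF g) = 1 :=
    PresentedGroup.one_of_mem rfl
  rw [← h]
  unfold wordG
  have h2 : relatorF g = ((relatorWord g).map fun l => if l.2 then FreeGroup.of l.1 else
    (FreeGroup.of l.1)⁻¹).prod := rfl
  rw [congrArg (PresentedGroup.mk ({relatorF g} : Set (FreeGroup (Fin (2 * g))))) h2,
    map_list_prod, List.map_map]
  congr 1
  apply List.map_congr_left
  intro l _
  rcases l with ⟨a, b⟩
  cases b <;> simp [letterG, PresentedGroup.of]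

def invW (w : List (Letter g)) : List (Letter g) := (w.map linv).reverse

lemma wordG_invW (w : List (Letter g)) : wordG (invW w) = (wordG w)⁻¹ := by
  induction w with
  | nil => simp [invW]
  | cons s w ih =>
    have : invW (s :: w) = invW w ++ [linv s] := by simp [invW]
    rw [this]; simp [ih, letterG_linv]

lemma wordG_surj (x : Gamma g) : ∃ w : List (Letter g), wordG w = x := by
  induction x using PresentedGroup.induction_on with
  | _ x =>
    induction x using FreeGroup.induction_on with
    | C1 => exact ⟨[], by simp⟩
    | of a => exact ⟨[(a, true)], by simp [letterG]; rfl⟩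
    | inv_of a _ => exact ⟨[(a, false)], by simp [letterG]; rfl⟩
    | mul x y hx hy =>
      obtain ⟨w, hw⟩ := hx
      obtain ⟨w', hw'⟩ := hy
      exact ⟨w ++ w', by simp [hw, hw']⟩

/-- The universal property used for well-definedness. -/
lemma cong_words (R : List (Letter g) → List (Letter g) → Prop) (hE : Equivalence R)
    (hA : ∀ a b c d, R a b → R c d → R (a ++ c) (b ++ d))
    (hI : ∀ s, R [s, linv s] []) (hR : R (relatorWord g) [])
    {w w' : List (Letter g)} (h : wordG w = wordG w') : R w w' := by
  let c : Con (FreeMonoid (Letter g)) :=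
    { r := fun a b => R a.toList b.toList
      iseqv := ⟨fun a => hE.refl _, fun h => hE.symm h, fun h h' => hE.trans h h'⟩
      mul' := fun h h' => hA _ _ _ _ h h' }
  let u : Fin (2 * g) → (c.Quotient)ˣ := fun a =>
    ⟨c.mk' (FreeMonoid.of (a, true)), c.mk' (FreeMonoid.of (a, false)),
      by rw [← map_mul, ← map_one c.mk']; exact (c.eq).mpr (hI (a, true)),
      by rw [← map_mul, ← map_one c.mk']; exact (c.eq).mpr (hI (a, false))⟩
  have hl : ∀ w : List (Letter g),
      (((w.map fun l => if l.2 then u l.1 else (u l.1)⁻¹).prod : (c.Quotient)ˣ) : c.Quotient) =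
      c.mk' (FreeMonoid.ofList w) := by
    intro w
    induction w with
    | nil => simp
    | cons s w ih =>
      rw [List.map_cons, List.prod_cons, Units.val_mul, ih, FreeMonoid.ofList_cons, map_mul]
      congr 1
      rcases s with ⟨a, b⟩
      cases b <;> rfl
  let φ : Gamma g →* (c.Quotient)ˣ := PresentedGroup.toGroup (f := u) (by
    intro r hr
    rw [Set.mem_singleton_iff] at hr
    subst hr
    apply Units.ext
    have h1 : (FreeGroup.lift u) (relatorF g) =
        ((relatorWord g).map fun l => if l.2 then u l.1 else (u l.1)⁻¹).prod := by
      unfold relatorF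
      rw [map_list_prod, List.map_map]
      congr 1
      apply List.map_congr_left
      intro l _
      rcases l with ⟨a, b⟩
      cases b <;> simp
    rw [h1, hl]
    exact (c.eq).mpr hR)
  have hφ : ∀ w, φ (wordG w) = (w.map fun l => if l.2 then u l.1 else (u l.1)⁻¹).prod := by
    intro w
    unfold wordG
    rw [map_list_prod, List.map_map]
    congr 1
    apply List.map_congr_left
    intro l _
    rcases l with ⟨a, b⟩
    cases b <;> simp [letterG, φ]
  have := congrArg (fun x => ((φ x : (c.Quotient)ˣ) : c.Quotient)) h
  simp only [hφ, hl] at this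
  exact (c.eq).mp this

end Letters
end

section
set_option linter.unusedSimpArgs false
set_option linter.deprecated false
set_option linter.unusedVariables false
open Classical

section Darts
variable {g : ℕ} {J : Subgroup (Gamma g)}

def act (x : Cos g J) (a : Gamma g) : Cos g J := rmul g J a x

lemma act_mk (x a : Gamma g) : act (mkCos g J x) a = mkCos g J (x * a) := rfl

lemma mk_surj (v : Cos g J) : ∃ x, mkCos g J x = v := Quotient.exists_rep v

lemma mk_eq {x y : Gamma g} : mkCos g J x = mkCos g J y ↔ y * x⁻¹ ∈ J := by
  unfold mkCos
  rw [Quotient.eq]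
  exact QuotientGroup.rightRel_apply

@[simp] lemma act_one (v : Cos g J) : act v 1 = v := by
  obtain ⟨x, rfl⟩ := mk_surj v; rw [act_mk, mul_one]

lemma act_mul (v : Cos g J) (a b : Gamma g) : act v (a * b) = act (act v a) b := by
  obtain ⟨x, rfl⟩ := mk_surj v; rw [act_mk, act_mk, act_mk, mul_assoc]

@[simp] lemma act_inv_act (v : Cos g J) (a : Gamma g) : act (act v a) a⁻¹ = v := by
  rw [← act_mul]; simp

@[simp] lemma act_act_inv (v : Cos g J) (a : Gamma g) : act (act v a⁻¹) a = v := by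
  rw [← act_mul]; simp

variable (g J) in
/-- darts as pairs (tail, letter) -/
abbrev DT := Cos g J × Letter g

def hd (d : DT g J) : Cos g J := act d.1 (letterG d.2)

def rev (d : DT g J) : DT g J := (hd d, linv d.2)

@[simp] lemma hd_rev (d : DT g J) : hd (rev d) = d.1 := by
  simp [hd, rev, letterG_linv]

@[simp] lemma rev_rev (d : DT g J) : rev (rev d) = d := by
  have := hd_rev d
  rcases d with ⟨x, s⟩
  simp only [rev] at *
  simp [this]

@[simp] lemma rev_fst (d : DT g J) : (rev d).1 = hd d := rfl
@[simp] lemma rev_snd (d : DT g J) : (rev d).2 = linv d.2 := rfl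

lemma rev_inj : Function.Injective (rev : DT g J → DT g J) :=
  Function.LeftInverse.injective rev_rev

lemma rev_ne (d : DT g J) : rev d ≠ d := fun h => linv_ne d.2 (congrArg Prod.snd h)

lemma rev_eq_iff {d e : DT g J} : rev d = e ↔ d = rev e :=
  ⟨fun h => by rw [← h, rev_rev], fun h => by rw [h, rev_rev]⟩

/-- conversion to darts of the cover -/
def toD (d : DT g J) : (cover g J).D :=
  if d.2.2 then ((d.1, d.2.1), true) else ((act d.1 (letterG d.2), d.2.1), false)

def ofD (d : (cover g J).D) : DT g J := ((cover g J).dTail d, (cover g J).dLet d)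

lemma ofD_toD (d : DT g J) : ofD (toD d) = d := by
  rcases d with ⟨x, ⟨a, b⟩⟩
  cases b
  · simp only [toD, ofD, Complex.dTail, Complex.dLet, cover, letterG]
    refine Prod.ext ?_ rfl
    exact act_act_inv x _
  · simp only [toD, ofD, Complex.dTail, Complex.dLet, cover]
    rfl

lemma toD_ofD (d : (cover g J).D) : toD (ofD d) = d := by
  rcases d with ⟨⟨x, a⟩, b⟩
  cases b
  · simp only [toD, ofD, Complex.dTail, Complex.dLet, cover, letterG]
    refine Prod.ext (Prod.ext ?_ rfl) rfl
    exact act_inv_act x _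
  · simp only [toD, ofD, Complex.dTail, Complex.dLet, cover]
    rfl

lemma toD_inj : Function.Injective (toD : DT g J → _) :=
  Function.LeftInverse.injective ofD_toD
lemma ofD_inj : Function.Injective (ofD : _ → DT g J) :=
  Function.LeftInverse.injective toD_ofD

lemma dLet_toD (d : DT g J) : (cover g J).dLet (toD d) = d.2 := congrArg Prod.snd (ofD_toD d)
lemma dTail_toD (d : DT g J) : (cover g J).dTail (toD d) = d.1 := congrArg Prod.fst (ofD_toD d)
lemma dHead_toD (d : DT g J) : (cover g J).dHead (toD d) = hd d := by
  rcases d with ⟨x, ⟨a, b⟩⟩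
  cases b <;> rfl
lemma dRev_toD (d : DT g J) : (cover g J).dRev (toD d) = toD (rev d) := by
  rcases d with ⟨x, ⟨a, b⟩⟩
  cases b
  · rfl
  · simp only [toD, rev, hd, linv, Complex.dRev]
    refine Prod.ext (Prod.ext ?_ rfl) rfl
    simp [letterG]

lemma toD_fst_rev (d : DT g J) : (toD (rev d)).1 = (toD d).1 := by
  rw [← dRev_toD]; rfl

lemma toD_fst_eq {d e : DT g J} (h : (toD d).1 = (toD e).1) : d = e ∨ d = rev e := by
  by_cases hb : (toD d).2 = (toD e).2
  · left; exact toD_inj (Prod.ext h hb)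
  · right
    apply toD_inj
    rw [← dRev_toD]
    refine Prod.ext h ?_
    simp only [Complex.dRev]
    revert hb
    cases (toD d).2 <;> cases (toD e).2 <;> simp

lemma adj_toD (d e : DT g J) : (cover g J).adj (toD d) (toD e) ↔ hd d = e.1 := by
  unfold Complex.adj; rw [dHead_toD, dTail_toD]; exact Iff.rfl

/-! walks -/
def wk : Cos g J → List (Letter g) → List (DT g J)
  | _, [] => []
  | v, s :: w => (v, s) :: wk (act v (letterG s)) w

lemma wk_append (v : Cos g J) (w w' : List (Letter g)) :
    wk v (w ++ w') = wk v w ++ wk (act v (wordG w)) w' := by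
  induction w generalizing v with
  | nil => simp [wk]
  | cons s w ih => simp [wk, ih, act_mul]

lemma relWalk_eq (v : Cos g J) (w : List (Letter g)) : relWalk g J v w = (wk v w).map toD := by
  induction w generalizing v with
  | nil => rfl
  | cons s w ih =>
    rcases s with ⟨a, b⟩
    cases b
    · simp only [relWalk, wk, List.map_cons, ih]
      rfl
    · simp only [relWalk, wk, List.map_cons, ih]
      rfl

lemma wk_length (v : Cos g J) (w) : (wk v w).length = w.length := by
  induction w generalizing v with
  | nil => rfl
  | cons s w ih => simp [wk, ih]

lemma wk_map_snd (v : Cos g J) (w) : (wk v w).map Prod.snd = w := by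
  induction w generalizing v with
  | nil => rfl
  | cons s w ih => simp [wk, ih]

lemma wk_get (v : Cos g J) (w) (p : ℕ) (hp : p < (wk v w).length) :
    (wk v w)[p] = (act v (wordG (w.take p)), w[p]'(by rwa [wk_length] at hp)) := by
  induction w generalizing v p with
  | nil => simp [wk] at hp
  | cons s w ih =>
    cases p with
    | zero => simp [wk]
    | succ p => simp [wk, ih, act_mul]

lemma walkFrom_wk (v : Cos g J) (w) :
    (cover g J).WalkFrom v (act v (wordG w)) ((wk v w).map toD) := by
  induction w generalizing v with
  | nil => simp [wk]; exact Complex.WalkFrom.nil _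
  | cons s w ih =>
    have := ih (act v (letterG s))
    rw [← act_mul] at this
    have h2 : act v (letterG s) = (cover g J).dHead (toD (v, s)) := by rw [dHead_toD]; rfl
    rw [h2] at this
    have h3 := Complex.WalkFrom.cons (toD (v, s)) this
    rw [dTail_toD] at h3
    simp only [wk, List.map_cons, wordG_cons]
    rw [h2]
    exact h3

lemma walkFrom_iff {u v : (cover g J).V} {l : List (cover g J).D} :
    (cover g J).WalkFrom u v l ↔
      ∃ w, l = (wk (u : Cos g J) w).map toD ∧ v = act (u : Cos g J) (wordG w) := by
  constructor
  · intro h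
    induction h with
    | nil v => exact ⟨[], rfl, (act_one (J := J) v).symm⟩
    | cons d h ih =>
      obtain ⟨w, hw, hv⟩ := ih
      obtain ⟨d, rfl⟩ : ∃ e, d = toD e := ⟨ofD d, (toD_ofD d).symm⟩
      rw [dHead_toD] at hw hv
      refine ⟨d.2 :: w, ?_, ?_⟩
      · rw [dTail_toD]; simp only [wk, List.map_cons]; rw [hw]; rfl
      · rw [dTail_toD, hv, wordG_cons, act_mul]; rfl
  · rintro ⟨w, rfl, rfl⟩
    exact walkFrom_wk _ _

lemma wordOf_wk (v : Cos g J) (w) : (cover g J).wordOf ((wk v w).map toD) = w := by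
  unfold Complex.wordOf
  rw [List.map_map]
  conv_rhs => rw [← wk_map_snd v w]
  apply List.map_congr_left
  intro d _
  exact dLet_toD d

lemma wk_invW (v : Cos g J) (w : List (Letter g)) :
    wk (act v (wordG w)) (invW w) = ((wk v w).map rev).reverse := by
  induction w generalizing v with
  | nil => simp [wk, invW]
  | cons s w ih =>
    have h1 : invW (s :: w) = invW w ++ [linv s] := by simp [invW]
    rw [h1, wk_append, wordG_cons, act_mul, ih]
    simp only [wk, List.map_cons, List.reverse_cons]
    congr 1
    rw [wordG_invW, act_inv_act]
    rfl

lemma revW_map (l : List (DT g J)) :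
    (cover g J).revW (l.map toD) = ((l.map rev).reverse).map toD := by
  unfold Complex.revW
  rw [List.map_map, List.map_reverse, List.map_map]
  congr 1
  apply List.map_congr_left
  intro d _
  exact dRev_toD d

/-! faces -/
def pre (s : Letter g) : Gamma g := wordG ((relatorWord g).take (rp s))

/-- the face whose boundary contains the dart -/
def Lf (d : DT g J) : Cos g J := act d.1 (pre d.2)⁻¹

def fnx (d : DT g J) : DT g J := (hd d, nx d.2)

lemma pre_nx (s : Letter g) : pre (nx s) = pre s * letterG s := by
  have hs := rp_lt s
  have hlen : rp s < (relatorWord g).length := by rw [length_relator]; exact hs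
  have h1 : wordG ((relatorWord g).take (rp s + 1)) = pre s * letterG s := by
    rw [List.take_succ_eq_append_getElem hlen, wordG_append, relator_get, rl_rp]
    simp [pre]
  have h2 : rp (nx s) = (rp s + 1) % (4 * g) := by
    conv_lhs => rw [← rl_rp s]
    rw [nx_rl, rp_rl]
  rw [← h1]
  unfold pre
  rw [h2]
  by_cases h : rp s + 1 = 4 * g
  · rw [h, Nat.mod_self, ← length_relator, List.take_length, wordG_relator]; simp
  · rw [Nat.mod_eq_of_lt (by omega)]

lemma Lf_fnx (d : DT g J) : Lf (fnx d) = Lf d := by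
  simp only [Lf, fnx, hd, pre_nx, mul_inv_rev, act_mul, act_inv_act]

lemma Lf_rev (d : DT g J) : Lf (rev d) = Lf (d.1, vs d.2) := by
  rw [← Lf_fnx (rev d)]
  simp [fnx, nx]

lemma mem_bdry {f : Cos g J} {d : DT g J} : d ∈ wk f (relatorWord g) ↔ Lf d = f := by
  rw [List.mem_iff_getElem]
  constructor
  · rintro ⟨p, hp, rfl⟩
    rw [wk_get]
    have hp' : p < 4 * g := by rwa [wk_length, length_relator] at hp
    simp only [Lf]
    rw [relator_get, pre, rp_rl, act_inv_act]
  · intro h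
    have hl : rp d.2 < (wk f (relatorWord g)).length := by
      rw [wk_length, length_relator]; exact rp_lt _
    refine ⟨rp d.2, hl, ?_⟩
    rw [wk_get, relator_get, rl_rp, ← h]
    refine Prod.ext ?_ rfl
    simp only [Lf]
    rw [← pre, act_act_inv]

lemma nodup_bdry (f : Cos g J) : (wk f (relatorWord g)).Nodup := by
  rw [List.nodup_iff_injective_getElem]
  rintro ⟨p, hp⟩ ⟨q, hq⟩ h
  simp only at h
  rw [wk_get, wk_get] at h
  have h2 := congrArg (fun d => rp d.2) h
  simp only [relator_get, rp_rl] at h2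
  exact Fin.ext h2

lemma bdry_eq (f : Cos g J) : (cover g J).bdry f = (wk f (relatorWord g)).map toD :=
  relWalk_eq f _

/-- chains -/
def zc (l : List (DT g J)) (d : DT g J) : ℤ := (l.count d : ℤ) - l.count (rev d)

def Dc (f : Cos g J → ℤ) (d : DT g J) : ℤ := f (Lf d) - f (Lf (rev d))

lemma zc_nil : zc ([] : List (DT g J)) = 0 := by ext d; simp [zc]

lemma zc_append (l l' : List (DT g J)) : zc (l ++ l') = zc l + zc l' := by
  ext d; simp [zc]; ring

lemma zc_cons (d : DT g J) (l : List (DT g J)) : zc (d :: l) = zc [d] + zc l := by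
  rw [← zc_append]; rfl

lemma zc_rev (l : List (DT g J)) (d : DT g J) : zc l (rev d) = - zc l d := by
  simp [zc]

lemma zc_map_rev (l : List (DT g J)) : zc ((l.map rev).reverse) = - zc l := by
  ext d
  have : ∀ e, ((l.map rev).reverse).count e = l.count (rev e) := by
    intro e
    rw [List.count_reverse]
    conv_lhs => rw [← rev_rev e]
    exact List.count_map_of_injective l rev rev_inj (rev e)
  simp [zc, this]

lemma Dc_rev (f : Cos g J → ℤ) (d : DT g J) : Dc f (rev d) = - Dc f d := by simp [Dc]

lemma Dc_add (f f' : Cos g J → ℤ) : Dc (f + f') = Dc f + Dc f' := by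
  ext d; simp [Dc]; ring
lemma Dc_sub (f f' : Cos g J → ℤ) : Dc (f - f') = Dc f - Dc f' := by
  ext d; simp [Dc]; ring
lemma Dc_smul (k : ℤ) (f : Cos g J → ℤ) : Dc (k • f) = k • Dc f := by
  ext d; simp [Dc]; ring

lemma zc_bdry (f : Cos g J) : zc (wk f (relatorWord g)) = Dc (Pi.single f 1) := by
  ext d
  have h : ∀ e : DT g J, ((wk f (relatorWord g)).count e : ℤ) = (Pi.single f 1 : Cos g J → ℤ) (Lf e) := by
    intro e
    by_cases he : Lf e = f
    · rw [List.count_eq_one_of_mem (nodup_bdry f) (mem_bdry.mpr he), he]; simp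
    · rw [List.count_eq_zero_of_not_mem (fun h => he (mem_bdry.mp h))]
      simp [he]
  simp only [zc, Dc, h]

/-- finitely supported antisymmetric 1-cycles -/
structure IsCyc (z : DT g J → ℤ) : Prop where
  anti : ∀ d, z (rev d) = - z d
  cons : ∀ x, ∑ s, z (x, s) = 0
  fin : (Function.support z).Finite

/-- indicator of a proposition -/
def ind (p : Prop) : ℤ := if p then 1 else 0
lemma ind_true {p : Prop} (h : p) : ind p = 1 := by simp [ind, h]
lemma ind_false {p : Prop} (h : ¬ p) : ind p = 0 := by simp [ind, h]
lemma ind_nonneg (p : Prop) : 0 ≤ ind p := by unfold ind; split_ifs <;> simp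
lemma ind_le_one (p : Prop) : ind p ≤ 1 := by unfold ind; split_ifs <;> simp

lemma sum_zc_single (d : DT g J) (x : Cos g J) :
    ∑ s, zc [d] (x, s) = ind (d.1 = x) - ind (hd d = x) := by
  have h1 : ∀ s, zc [d] (x, s) = (if s = d.2 then ind (d.1 = x) else 0) -
      (if s = linv d.2 then ind (hd d = x) else 0) := by
    intro s
    simp only [zc, List.count_singleton, beq_iff_eq]
    have e1 : (d = (x, s)) ↔ (s = d.2 ∧ d.1 = x) := by
      constructor
      · rintro rfl; simp
      · rintro ⟨rfl, rfl⟩; rfl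
    have e2 : (d = rev (x, s)) ↔ (s = linv d.2 ∧ hd d = x) := by
      rw [← rev_eq_iff]
      constructor
      · intro h
        have := congrArg Prod.fst h
        have h' := congrArg Prod.snd h
        exact ⟨h'.symm, this⟩
      · rintro ⟨rfl, rfl⟩; rfl
    simp only [e1, e2]
    simp only [ind, ite_and, Nat.cast_ite, Nat.cast_one, Nat.cast_zero]
    congr!
  simp only [h1, Finset.sum_sub_distrib, Finset.sum_ite_eq', Finset.mem_univ, if_true]

lemma sum_zc_wk (v : Cos g J) (w) (x : Cos g J) :
    ∑ s, zc (wk v w) (x, s) =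
      ind (v = x) - ind (act v (wordG w) = x) := by
  induction w generalizing v with
  | nil => simp [wk, zc_nil]
  | cons s w ih =>
    simp only [wk]
    rw [zc_cons]
    simp only [Pi.add_apply, Finset.sum_add_distrib]
    rw [ih, sum_zc_single, wordG_cons, act_mul]
    simp only [hd]
    ring

lemma zc_support (l : List (DT g J)) : (Function.support (zc l)).Finite := by
  refine Set.Finite.subset ((l.toFinset ∪ (l.map rev).toFinset).finite_toSet) ?_
  intro d hd
  by_contra h
  apply hd
  simp only [Finset.coe_union, Set.mem_union, Finset.mem_coe, List.mem_toFinset, not_or] at h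
  have h2 : rev d ∉ l := fun h' => h.2 (by
    rw [List.mem_map]; exact ⟨_, h', rev_rev d⟩)
  simp [zc, List.count_eq_zero_of_not_mem h.1, List.count_eq_zero_of_not_mem h2]

lemma isCyc_wk {v : Cos g J} {w} (h : act v (wordG w) = v) : IsCyc (zc (wk v w)) where
  anti := zc_rev _
  cons x := by rw [sum_zc_wk, h]; simp
  fin := zc_support _

lemma sum_Dc (f : Cos g J → ℤ) (x : Cos g J) : ∑ s, Dc f (x, s) = 0 := by
  simp only [Dc, Lf_rev, Finset.sum_sub_distrib]
  rw [sub_eq_zero]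
  exact (Function.Bijective.sum_comp vs_bij (fun s => f (Lf (x, s)))).symm

lemma isCyc_Dc {f : Cos g J → ℤ} (h : (Function.support (Dc f)).Finite) : IsCyc (Dc f) :=
  ⟨Dc_rev f, sum_Dc f, h⟩

/-- darts with face in a finite set -/
lemma finite_Lf {A : Set (Cos g J)} (h : A.Finite) : {d : DT g J | Lf d ∈ A}.Finite := by
  have : {d : DT g J | Lf d ∈ A} ⊆
      (fun p : Cos g J × Letter g => ((act p.1 (pre p.2), p.2) : DT g J)) '' (A ×ˢ Set.univ) := by
    intro d hd
    refine ⟨(Lf d, d.2), ⟨hd, trivial⟩, ?_⟩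
    simp [Lf]
  exact ((h.prod Set.finite_univ).image _).subset this

lemma Dc_support {f : Cos g J → ℤ} (h : (Function.support f).Finite) :
    (Function.support (Dc f)).Finite := by
  have h1 := finite_Lf h
  have h2 : {d : DT g J | Lf (rev d) ∈ Function.support f}.Finite :=
    Set.Finite.preimage (f := rev) rev_inj.injOn h1
  refine (h1.union h2).subset ?_
  intro d hd
  by_contra hc
  apply hd
  simp only [Set.mem_union, Set.mem_setOf_eq, Function.mem_support, not_or, not_not] at hc
  simp [Dc, hc.1, hc.2]

/-- connectivity of the dual graph -/
lemma dual_conn {α : Type*} (f : Cos g J → α) (h : ∀ d, f (Lf d) = f (Lf (rev d)))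
    (hg : 0 < g) (u v : Cos g J) : f u = f v := by
  have s0 : Letter g := rl 0 (by omega)
  have h1 : ∀ x s t, f (Lf (x, s)) = f (Lf (x, t)) := by
    intro x s t
    apply vs_const (fun s => f (Lf (x, s)))
    intro s
    rw [h (x, s), Lf_rev]
  let G : Cos g J → α := fun x => f (Lf (x, s0))
  have h2 : ∀ d, G (hd d) = G d.1 := by
    intro d
    have e1 : G (hd d) = f (Lf (fnx d)) := h1 _ _ _
    rw [e1, Lf_fnx]
    exact h1 _ _ _
  have h3 : ∀ w x, G (act x (wordG w)) = G x := by
    intro w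
    induction w with
    | nil => simp
    | cons s w ih => intro x; rw [wordG_cons, act_mul, ih]; exact h2 (x, s)
  have h4 : ∀ x, f x = G (act x (pre s0)) := by
    intro x; simp [G, Lf]
  rw [h4, h4]
  obtain ⟨x, rfl⟩ := mk_surj u
  obtain ⟨y, rfl⟩ := mk_surj v
  rw [act_mk, act_mk]
  obtain ⟨w, hw⟩ := wordG_surj ((x * pre s0)⁻¹ * (y * pre s0))
  rw [← h3 w, hw, act_mk]
  congr 2; group

end Darts
end

section
set_option linter.unusedSimpArgs false
set_option linter.deprecated false
set_option linter.unusedVariables false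
open Classical

section Hom1
variable {g : ℕ} {J : Subgroup (Gamma g)} {A : Type*} [AddCommGroup A]

def sm (t : DT g J → A) (l : List (DT g J)) : A := (l.map t).sum

@[simp] lemma sm_nil (t : DT g J → A) : sm t [] = 0 := rfl
@[simp] lemma sm_cons (t : DT g J → A) (d l) : sm t (d :: l) = t d + sm t l := by simp [sm]
@[simp] lemma sm_append (t : DT g J → A) (l l') : sm t (l ++ l') = sm t l + sm t l' := by simp [sm]

lemma sm_congr {t : DT g J → A} (ht : ∀ d, t (rev d) = - t d)
    (hf : ∀ f, sm t (wk f (relatorWord g)) = 0) {w w' : List (Letter g)}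
    (h : wordG w = wordG w') (v : Cos g J) : sm t (wk v w) = sm t (wk v w') := by
  let R : List (Letter g) → List (Letter g) → Prop := fun a b => wordG a = wordG b ∧ ∀ v : Cos g J, sm t (wk v a) = sm t (wk v b)
  have key : R w w' := by
    refine cong_words R ⟨fun a => ⟨rfl, fun _ => rfl⟩, fun h => ⟨h.1.symm, fun v => (h.2 v).symm⟩,
      fun h h' => ⟨h.1.trans h'.1, fun v => (h.2 v).trans (h'.2 v)⟩⟩ ?_ ?_ ?_ h
    · rintro a b c d ⟨h1, h2⟩ ⟨h3, h4⟩
      refine ⟨by simp [h1, h3], fun v => ?_⟩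
      rw [wk_append, wk_append, sm_append, sm_append, h2, h4, h1]
    · intro s
      refine ⟨by simp [letterG_linv], fun v => ?_⟩
      have := ht (v, s)
      simp only [wk, sm_cons, sm_nil]
      simp only [rev, hd] at this
      rw [this]; simp
    · exact ⟨by simp [wordG_relator], fun v => by rw [hf]; rfl⟩
  exact key.2 v

/-- a word for a group element -/
def wd (x : Gamma g) : List (Letter g) := Classical.choose (wordG_surj x)
@[simp] lemma wordG_wd (x : Gamma g) : wordG (wd x) = x := Classical.choose_spec (wordG_surj x)

def It (t : DT g J → A) (v : Cos g J) (x : Gamma g) : A := sm t (wk v (wd x))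

lemma sm_It {t : DT g J → A} (ht : ∀ d, t (rev d) = - t d)
    (hf : ∀ f, sm t (wk f (relatorWord g)) = 0) (v w) : sm t (wk v w) = It t v (wordG w) :=
  sm_congr ht hf (by simp) v

lemma It_mul {t : DT g J → A} (ht : ∀ d, t (rev d) = - t d)
    (hf : ∀ f, sm t (wk f (relatorWord g)) = 0) (v x y) :
    It t v (x * y) = It t v x + It t (act v x) y := by
  have : It t v (x * y) = sm t (wk v (wd x ++ wd y)) := sm_congr ht hf (by simp) v
  rw [this, wk_append, sm_append]
  simp [It]

lemma It_one {t : DT g J → A} (ht : ∀ d, t (rev d) = - t d)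
    (hf : ∀ f, sm t (wk f (relatorWord g)) = 0) (v) : It t v 1 = 0 := by
  have := sm_It ht hf v []
  simpa [wk] using this.symm

def out (v : Cos g J) : Gamma g := Classical.choose (mk_surj v)
@[simp] lemma mk_out (v : Cos g J) : mkCos g J (out v) = v := Classical.choose_spec (mk_surj v)

variable (g J) in
def bs : Cos g J := mkCos g J 1

lemma act_bs (x : Gamma g) : act (bs g J) x = mkCos g J x := by simp [bs, act_mk]

lemma bs_fix {x : Gamma g} (h : x ∈ J) : act (bs g J) x = bs g J := by
  rw [act_bs, bs, mk_eq]; simpa using J.inv_mem h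

lemma It_zpow {t : DT g J → A} (ht : ∀ d, t (rev d) = - t d)
    (hf : ∀ f, sm t (wk f (relatorWord g)) = 0) {γ : Gamma g} (h : γ ∈ J) (k : ℤ) :
    It t (bs g J) (γ ^ k) = k • It t (bs g J) γ := by
  have hn : ∀ n : ℕ, It t (bs g J) (γ ^ n) = n • It t (bs g J) γ := by
    intro n
    induction n with
    | zero => simp [It_one ht hf]
    | succ n ih => rw [pow_succ, It_mul ht hf, ih, bs_fix (J.pow_mem h n), succ_nsmul]
  obtain ⟨n, rfl | rfl⟩ := k.eq_nat_or_neg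
  · simpa using hn n
  · have := It_mul ht hf (bs g J) (γ ^ n) (γ ^ (-(n : ℤ)))
    rw [bs_fix (J.pow_mem h n), hn] at this
    simp only [zpow_neg, zpow_natCast, mul_inv_cancel, It_one ht hf] at this ⊢
    rw [eq_comm, add_comm, add_eq_zero_iff_eq_neg] at this
    rw [this]; simp

/-- closed walk of class γ^k -/
lemma sm_closed {t : DT g J → A} (ht : ∀ d, t (rev d) = - t d)
    (hf : ∀ f, sm t (wk f (relatorWord g)) = 0) {γ : Gamma g} (h : γ ∈ J) {k : ℤ}
    {x : Gamma g} {w} (hw : x * wordG w * x⁻¹ = γ ^ k) :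
    sm t (wk (mkCos g J x) w) = k • It t (bs g J) γ := by
  have h1 := It_mul ht hf (bs g J) x (wordG w)
  have h2 := It_mul ht hf (bs g J) (γ ^ k) x
  have h3 : x * wordG w = γ ^ k * x := by rw [← hw]; group
  rw [h3, h2, bs_fix (J.zpow_mem h k), It_zpow ht hf h, act_bs, ← sm_It ht hf, add_comm] at h1
  exact (add_left_cancel h1).symm

lemma qpot {t : DT g J → A} (ht : ∀ d, t (rev d) = - t d)
    (hf : ∀ f, sm t (wk f (relatorWord g)) = 0) {γ : Gamma g} (h : J = Subgroup.zpowers γ) :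
    ∃ (P : Cos g J → A) (κ : DT g J → ℤ), ∀ d, t d = P (hd d) - P d.1 + κ d • It t (bs g J) γ := by
  have hm : γ ∈ J := by rw [h]; exact Subgroup.mem_zpowers γ
  have : ∀ d : DT g J, ∃ k : ℤ, out d.1 * letterG d.2 * (out (hd d))⁻¹ = γ ^ k := by
    intro d
    have h1 : mkCos g J (out (hd d)) = mkCos g J (out d.1 * letterG d.2) := by
      rw [mk_out, ← act_mk, mk_out]; rfl
    rw [mk_eq] at h1
    have h2 := h.le h1
    rw [Subgroup.mem_zpowers_iff] at h2
    obtain ⟨k, hk⟩ := h2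
    exact ⟨k, hk.symm⟩
  choose κ hκ using this
  refine ⟨fun v => It t (bs g J) (out v), κ, fun d => ?_⟩
  have h1 : out d.1 * letterG d.2 = γ ^ κ d * out (hd d) := by rw [← hκ]; group
  have h2 := It_mul ht hf (bs g J) (out d.1) (letterG d.2)
  have h3 : It t d.1 (letterG d.2) = t d := by
    have := sm_It ht hf d.1 [d.2]
    simpa [wk] using this.symm
  rw [h1, It_mul ht hf, bs_fix (J.zpow_mem hm _), It_zpow ht hf hm, act_bs, mk_out, h3] at h2
  rw [eq_sub_of_add_eq' h2.symm]; abel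

/-! pairing -/
def pr (z : DT g J → ℤ) (t : DT g J → A) : A := ∑ᶠ d : DT g J, if d.2.2 = true then z d • t d else 0

lemma pr_supp {z : DT g J → ℤ} (hz : (Function.support z).Finite) (t : DT g J → A) :
    Function.HasFiniteSupport fun d : DT g J => if d.2.2 = true then z d • t d else 0 := by
  refine hz.subset ?_
  intro d hd h
  apply hd
  simp [h]

lemma pr_suppn {z : DT g J → ℤ} (hz : (Function.support z).Finite) (t : DT g J → A) :
    Function.HasFiniteSupport fun d : DT g J => if ¬ d.2.2 = true then - (z d • t d) else 0 := by
  refine hz.subset ?_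
  intro d hd h
  apply hd
  simp [h]

lemma pr_add {z z' : DT g J → ℤ} (hz : (Function.support z).Finite) (hz' : (Function.support z').Finite)
    (t : DT g J → A) : pr (z + z') t = pr z t + pr z' t := by
  unfold pr
  rw [← finsum_add_distrib (pr_supp hz t) (pr_supp hz' t)]
  congr 1; ext d
  split_ifs <;> simp [add_smul]

lemma pr_smul {z : DT g J → ℤ} (hz : (Function.support z).Finite) (k : ℤ)
    (t : DT g J → A) : pr (k • z) t = k • pr z t := by
  unfold pr
  rw [smul_finsum' _ (pr_supp hz t)]
  congr 1; ext d
  split_ifs <;> simp [mul_smul]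

lemma linv_snd (s : Letter g) : (linv s).2 = !s.2 := rfl

lemma zc_single (d e : DT g J) : zc [d] e = (if d = e then 1 else 0) - (if d = rev e then 1 else 0) := by
  simp only [zc, List.count_singleton, beq_iff_eq]
  split_ifs <;> rfl

lemma pr_zc_single {t : DT g J → A} (ht : ∀ d, t (rev d) = - t d) (d : DT g J) : pr (zc [d]) t = t d := by
  unfold pr
  by_cases hd : d.2.2 = true
  · rw [finsum_eq_single _ d]
    · have := rev_ne d
      simp [hd, zc_single, Ne.symm this]
    · intro e he
      split_ifs with h
      · have h1 : d ≠ rev e := by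
          rintro rfl
          simp [linv_snd, h] at hd
        simp [zc_single, Ne.symm he, h1]
      · rfl
  · rw [finsum_eq_single _ (rev d)]
    · have := rev_ne d
      simp [hd, zc_single, Ne.symm this, linv_snd, ht]
    · intro e he
      split_ifs with h
      · have h1 : d ≠ e := by
          rintro rfl
          exact hd h
        have h2 : d ≠ rev e := fun h => he (by rw [h, rev_rev])
        simp [zc_single, h1, h2]
      · rfl

lemma pr_zc {t : DT g J → A} (ht : ∀ d, t (rev d) = - t d) (l : List (DT g J)) : pr (zc l) t = sm t l := by
  induction l with
  | nil => simp [zc_nil, pr]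
  | cons d l ih =>
    rw [zc_cons, pr_add (zc_support _) (zc_support _), ih, pr_zc_single ht, sm_cons]

lemma pr_pot {z : DT g J → ℤ} (hz : IsCyc z) (P : Cos g J → A) :
    pr z (fun d => P (hd d) - P d.1) = 0 := by
  have h1 : pr z (fun d => P (hd d) - P d.1) =
      - ∑ᶠ d : DT g J, z d • P d.1 := by
    have e1 : (∑ᶠ d : DT g J, if d.2.2 = true then z d • P (hd d) else 0)
        = ∑ᶠ d : DT g J, if ¬ d.2.2 = true then - (z d • P d.1) else 0 := by
      rw [← finsum_comp_equiv (⟨rev, rev, rev_rev, rev_rev⟩ : DT g J ≃ DT g J)]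
      congr 1; ext d
      simp only [Equiv.coe_fn_mk, rev_snd, linv_snd, hd_rev, hz.anti]
      cases d.2.2 <;> simp
    have e2 : pr z (fun d => P (hd d) - P d.1) =
      (∑ᶠ d : DT g J, if d.2.2 = true then z d • P (hd d) else 0) -
      (∑ᶠ d : DT g J, if d.2.2 = true then z d • P d.1 else 0) := by
      rw [← finsum_sub_distrib (pr_supp hz.fin (fun d => P (hd d))) (pr_supp hz.fin (fun d => P d.1))]
      unfold pr
      congr 1; ext d
      split_ifs <;> simp [smul_sub]
    rw [e2, e1, ← finsum_sub_distrib, ← finsum_neg_distrib]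
    · congr 1; ext d
      split_ifs <;> simp
    · exact pr_suppn hz.fin (fun d => P d.1)
    · exact pr_supp hz.fin (fun d => P d.1)
  rw [h1, neg_eq_zero]
  rw [finsum_eq_sum_of_support_subset (s := (hz.fin.toFinset.image Prod.fst) ×ˢ Finset.univ)]
  · rw [Finset.sum_product]
    apply Finset.sum_eq_zero
    intro x _
    simp only
    rw [← Finset.sum_smul, hz.cons, zero_smul]
  · intro d hd
    have : z d ≠ 0 := fun h => hd (by simp [h])
    simp only [Finset.coe_product, Set.mem_prod, Finset.mem_coe, Finset.mem_image, Set.Finite.mem_toFinset,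
      Function.mem_support, Finset.mem_univ, and_true]
    exact ⟨d, this, rfl⟩

lemma pr_map {B : Type*} [AddCommGroup B] (q : A →+ B) {z : DT g J → ℤ}
    (hz : (Function.support z).Finite) (t : DT g J → A) : pr z (fun d => q (t d)) = q (pr z t) := by
  unfold pr
  rw [AddMonoidHom.map_finsum _ (pr_supp hz t)]
  congr 1; ext d
  split_ifs <;> simp

lemma pr_self {z : DT g J → ℤ} (hz : IsCyc z) : pr z (fun d => zc [d]) = z := by
  ext e
  have := pr_map (Pi.evalAddMonoidHom (fun _ : DT g J => ℤ) e) hz.fin (fun d => zc [d])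
  simp only [Pi.evalAddMonoidHom_apply] at this
  rw [← this]
  have h2 : pr z (fun d => zc [d] e) = pr (zc [e]) z := by
    unfold pr
    congr 1; ext d
    have : zc [d] e = zc [e] d := by
      simp only [zc_single]
      congr 1
      · simp only [eq_comm]
      · have : d = rev e ↔ e = rev d := by
          rw [← rev_eq_iff, eq_comm]
        simp only [this]
    simp [this, mul_comm]
  rw [h2, pr_zc_single hz.anti]

variable (g J) in
/-- boundaries -/
def Bd : AddSubgroup (DT g J → ℤ) where
  carrier := {z | ∃ h : Cos g J → ℤ, (Function.support h).Finite ∧ z = Dc h}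
  zero_mem' := ⟨0, by simp, by ext; simp [Dc]⟩
  add_mem' := by
    rintro _ _ ⟨h, hh, rfl⟩ ⟨h', hh', rfl⟩
    exact ⟨h + h', (hh.union hh').subset (Function.support_add h h'), (Dc_add h h').symm⟩
  neg_mem' := by
    rintro _ ⟨h, hh, rfl⟩
    exact ⟨-h, by simpa using hh, by ext; simp [Dc]; ring⟩

lemma Bd_single (f : Cos g J) : zc (wk f (relatorWord g)) ∈ Bd g J := by
  refine ⟨Pi.single f 1, ?_, zc_bdry f⟩
  exact (Set.finite_singleton f).subset Pi.support_single_subset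

lemma zc_singleton_rev (d : DT g J) : zc [rev d] = - zc [d] := by
  have := zc_map_rev [d]; simpa using this

variable (g J) in
def tq (d : DT g J) : (DT g J → ℤ) ⧸ Bd g J := QuotientAddGroup.mk (zc [d])

lemma tq_rev (d : DT g J) : tq g J (rev d) = - tq g J d := by
  simp only [tq, zc_singleton_rev]; rfl

lemma sm_tq (l : List (DT g J)) : sm (tq g J) l = QuotientAddGroup.mk (zc l) := by
  induction l with
  | nil => rw [zc_nil]; rfl
  | cons d l ih => rw [sm_cons, ih, zc_cons]; rfl

lemma tq_face (f : Cos g J) : sm (tq g J) (wk f (relatorWord g)) = 0 := by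
  rw [sm_tq, QuotientAddGroup.eq_zero_iff]; exact Bd_single f

variable (J) in
/-- base chain -/
def c0 (γ : Gamma g) : DT g J → ℤ := zc (wk (bs g J) (wd γ))

lemma It_tq (γ : Gamma g) : It (tq g J) (bs g J) γ = QuotientAddGroup.mk (c0 J γ) := sm_tq _

lemma c0_cyc {γ : Gamma g} (h : γ ∈ J) : IsCyc (c0 J γ) := isCyc_wk (by rw [wordG_wd, bs_fix h])

lemma H1 {γ : Gamma g} (h : J = Subgroup.zpowers γ) {z : DT g J → ℤ} (hz : IsCyc z) :
    ∃ N : ℤ, ∃ h : Cos g J → ℤ, (Function.support h).Finite ∧ z = N • c0 J γ + Dc h := by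
  obtain ⟨P, κ, hP⟩ := qpot (tq_rev (g := g) (J := J)) tq_face h
  have h1 : pr z (tq g J) = QuotientAddGroup.mk z := by
    conv_rhs => rw [← pr_self hz]
    exact pr_map (QuotientAddGroup.mk' (Bd g J)) hz.fin (fun d => zc [d])
  have h2 : pr z (tq g J) = pr z κ • It (tq g J) (bs g J) γ := by
    have e1 : pr z (tq g J) = pr z (fun d => P (hd d) - P d.1) +
        pr z (fun d => κ d • It (tq g J) (bs g J) γ) := by
      unfold pr
      rw [← finsum_add_distrib (pr_supp hz.fin _) (pr_supp hz.fin _)]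
      congr 1; ext d
      rw [hP d]
      split_ifs
      · exact zsmul_add _ _ _
      · simp
    rw [e1, pr_pot hz, zero_add]
    exact pr_map ((zmultiplesHom _) (It (tq g J) (bs g J) γ)) hz.fin κ
  rw [h1, It_tq] at h2
  have h3 : QuotientAddGroup.mk (s := Bd g J) z = QuotientAddGroup.mk (pr z κ • c0 J γ) := h2
  rw [eq_comm, QuotientAddGroup.eq] at h3
  obtain ⟨h, hh, e⟩ := h3
  exact ⟨pr z κ, h, hh, by rw [← e]; abel⟩

lemma closed_class {γ : Gamma g} (h : γ ∈ J) {k : ℤ}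
    {x : Gamma g} {w} (hw : x * wordG w * x⁻¹ = γ ^ k) :
    ∃ h : Cos g J → ℤ, (Function.support h).Finite ∧ zc (wk (mkCos g J x) w) = k • c0 J γ + Dc h := by
  have h1 := sm_closed (tq_rev (g := g) (J := J)) tq_face h hw
  rw [It_tq, sm_tq] at h1
  have h3 : QuotientAddGroup.mk (s := Bd g J) (zc (wk (mkCos g J x) w)) = QuotientAddGroup.mk (k • c0 J γ) := h1
  rw [eq_comm, QuotientAddGroup.eq] at h3
  obtain ⟨h, hh, e⟩ := h3
  exact ⟨h, hh, by rw [← e]; abel⟩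

lemma pr_Dc {t : DT g J → A} (ht : ∀ d, t (rev d) = - t d)
    (hf : ∀ f, sm t (wk f (relatorWord g)) = 0) (h : Cos g J → ℤ) (hh : (Function.support h).Finite) :
    pr (Dc h) t = 0 := by
  have key : ∀ F : Cos g J →₀ ℤ, pr (Dc F) t = 0 := by
    intro F
    induction F using Finsupp.induction_linear with
    | zero =>
      have : Dc (⇑(0 : Cos g J →₀ ℤ)) = zc [] := by ext; simp [Dc, zc]
      rw [this, pr_zc ht]; rfl
    | add F G h1 h2 =>
      rw [Finsupp.coe_add, Dc_add, pr_add (Dc_support F.finite_support) (Dc_support G.finite_support), h1, h2, add_zero]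
    | single f n =>
      have : Dc (⇑(Finsupp.single f n)) = n • zc (wk f (relatorWord g)) := by
        rw [zc_bdry, ← Dc_smul]
        congr 1
        ext x
        by_cases hx : f = x
        · subst hx; simp
        · simp [Finsupp.single_apply, Pi.single_apply, hx, Ne.symm hx]
      rw [this, pr_smul (zc_support _), pr_zc ht, hf, smul_zero]
  exact key (Finsupp.ofSupportFinite h hh)

lemma nontriv {γ : Gamma g} (h : J = Subgroup.zpowers γ) {v : Cos g J} {w}
    (hc : act v (wordG w) = v) {f : Cos g J → ℤ} (hf : (Function.support f).Finite)
    (hz : zc (wk v w) = Dc f) : wordG w = 1 := by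
  let _ : CommGroup J := { (inferInstance : Group J) with
    mul_comm := by
      rintro ⟨a, ha⟩ ⟨b, hb⟩
      rw [h, Subgroup.mem_zpowers_iff] at ha hb
      obtain ⟨m, rfl⟩ := ha
      obtain ⟨n, rfl⟩ := hb
      apply Subtype.ext
      show γ ^ m * γ ^ n = γ ^ n * γ ^ m
      rw [← zpow_add, add_comm, zpow_add] }
  have hm : ∀ (v : Cos g J) x, out v * x * (out (act v x))⁻¹ ∈ J := by
    intro v x
    rw [← mk_eq, mk_out, ← act_mk, mk_out]
  let t : DT g J → Additive J := fun d => Additive.ofMul ⟨_, hm d.1 (letterG d.2)⟩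
  have hs : ∀ w (v : Cos g J), sm t (wk v w) = Additive.ofMul (⟨_, hm v (wordG w)⟩ : J) := by
    intro w
    induction w with
    | nil =>
      intro v
      simp only [wk, sm_nil, wordG_nil]
      rw [← ofMul_one]
      congr 1
      apply Subtype.ext
      simp
    | cons s w ih =>
      intro v
      simp only [wk, sm_cons, ih]
      rw [← ofMul_mul]
      congr 1
      apply Subtype.ext
      show _ * _ = _
      simp only [wordG_cons, act_mul]
      group
  have hrev : ∀ d, t (rev d) = - t d := by
    intro d
    show Additive.ofMul _ = - Additive.ofMul _
    rw [← ofMul_inv]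
    congr 1
    apply Subtype.ext
    show _ = (_ : Gamma g)⁻¹
    have e : act (hd d) (letterG (linv d.2)) = d.1 := hd_rev d
    simp only [rev, e]
    simp only [letterG_linv, hd]
    group
  have hface : ∀ f, sm t (wk f (relatorWord g)) = 0 := by
    intro f
    rw [hs, ← ofMul_one]
    congr 1
    apply Subtype.ext
    simp [wordG_relator]
  have h1 := pr_Dc hrev hface f hf
  rw [← hz, pr_zc hrev, hs, ← ofMul_one] at h1
  have h2 := congrArg Subtype.val (Additive.ofMul.injective h1)
  simp only [hc] at h2
  have h3 : out v * wordG w * (out v)⁻¹ = 1 := h2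
  have h4 : wordG w = (out v)⁻¹ * (out v * wordG w * (out v)⁻¹) * out v := by group
  rw [h4, h3]; simp

end Hom1
end

section
set_option linter.unusedSimpArgs false
set_option linter.deprecated false
set_option linter.unusedVariables false
open Classical

section FF
variable {g : ℕ} {J : Subgroup (Gamma g)}

lemma exists_phi (a : Letter g → ℤ) (h : ∑ s, a s = 0) : ∃ φ : Letter g → ℤ, ∀ s, φ (vs s) = φ s - a s := by
  refine ⟨fun s => - ∑ s' ∈ Finset.univ.filter (fun s' => posLv s' < posLv s), a s', fun s => ?_⟩
  simp only
  have h0 := posLv_lt s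
  have h1 : (Finset.univ.filter (fun s' : Letter g => posLv s' < posLv s + 1)) =
      insert s (Finset.univ.filter (fun s' => posLv s' < posLv s)) := by
    ext t
    simp only [Finset.mem_filter, Finset.mem_univ, true_and, Finset.mem_insert]
    constructor
    · intro ht
      by_cases e : posLv t = posLv s
      · left; exact posLv_inj e
      · right; omega
    · rintro (rfl | h) <;> omega
  have h2 : ∑ s' ∈ Finset.univ.filter (fun s' : Letter g => posLv s' < posLv s + 1), a s' =
      a s + ∑ s' ∈ Finset.univ.filter (fun s' : Letter g => posLv s' < posLv s), a s' := by
    rw [h1, Finset.sum_insert (by simp)]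
  rw [posLv_vs]
  by_cases hs : posLv s + 1 = 4 * g
  · rw [hs, Nat.mod_self]
    rw [hs] at h2
    have h3 : (Finset.univ.filter (fun s' : Letter g => posLv s' < 4 * g)) = Finset.univ := by
      ext t; simp [posLv_lt]
    rw [h3, h] at h2
    simp
    linarith
  · rw [Nat.mod_eq_of_lt (by omega), h2]; ring

lemma phi_sum {a φ : Letter g → ℤ} (h : ∀ s, φ (vs s) = φ s - a s) : ∑ s, (2 * (a s * φ s) - a s * a s) = 0 := by
  have h1 := Function.Bijective.sum_comp vs_bij (fun s => φ s * φ s)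
  have h2 : ∑ s, (φ s * φ s - φ (vs s) * φ (vs s)) = 0 := by
    rw [Finset.sum_sub_distrib, h1, sub_self]
  rw [← h2]
  apply Finset.sum_congr rfl
  intro s _
  rw [h]; ring

lemma nx_const {α : Type*} (p : Letter g → α) (h : ∀ s, p (nx s) = p s) (s t : Letter g) : p s = p t := by
  have hg : 0 < 4 * g := by have := rp_lt s; omega
  have key : ∀ n (hn : n < 4 * g), p (rl n hn) = p (rl 0 hg) := by
    intro n
    induction n with
    | zero => intro _; rfl
    | succ n ih =>
      intro hn
      rw [← ih (by omega), ← h (rl n (by omega)), nx_rl]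
      congr 2
      rw [Nat.mod_eq_of_lt hn]
  rw [← rl_rp s, ← rl_rp t, key]; exact (key _ _).symm

lemma face_const {α : Type*} (Ψ : DT g J → α) (h : ∀ d, Ψ (fnx d) = Ψ d) {d e : DT g J} (he : Lf d = Lf e) :
    Ψ d = Ψ e := by
  have h1 : ∀ d : DT g J, (act (Lf d) (pre d.2), d.2) = d := by
    intro d; simp [Lf]
  rw [← h1 d, ← h1 e, he]
  apply nx_const (fun s => Ψ (act (Lf e) (pre s), s))
  intro s
  rw [← h (act (Lf e) (pre s), s)]
  simp [fnx, hd, pre_nx, act_mul]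

lemma sm_fnx (φ : DT g J → ℤ) (f : Cos g J) :
    sm (fun d => φ d - φ (fnx d)) (wk f (relatorWord g)) = 0 := by
  have h0 : ∀ (t : DT g J → ℤ), sm t (wk f (relatorWord g)) = ∑ d ∈ (wk f (relatorWord g)).toFinset, t d := by
    intro t
    rw [List.sum_toFinset _ (nodup_bdry f)]; rfl
  rw [h0, Finset.sum_sub_distrib, sub_eq_zero]
  symm
  have hinj : Function.Injective (fnx : DT g J → DT g J) := by
    intro d e h
    have h2 : d.2 = e.2 := by
      have := congrArg Prod.snd h
      have h3 := vs_inj this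
      rw [← linv_linv d.2, h3, linv_linv]
    have h1 : hd d = hd e := congrArg Prod.fst h
    apply rev_inj
    exact Prod.ext h1 (by simp [h2])
  refine Finset.sum_bij (fun d _ => fnx d) ?_ ?_ ?_ ?_
  · intro d hd
    rw [List.mem_toFinset, mem_bdry] at hd ⊢
    rw [Lf_fnx, hd]
  · intro d _ e _ h; exact hinj h
  · intro e he
    have := Finset.surj_on_of_inj_on_of_card_le (s := (wk f (relatorWord g)).toFinset) (t := (wk f (relatorWord g)).toFinset)
      (fun d _ => fnx d) (by
        intro d hd
        rw [List.mem_toFinset, mem_bdry] at hd ⊢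
        rw [Lf_fnx, hd]) (fun d e _ _ h => hinj h) le_rfl e he
    obtain ⟨d, hd, h⟩ := this
    exact ⟨d, hd, h.symm⟩
  · intros; rfl

lemma hfs {z : DT g J → ℤ} (hz : (Function.support z).Finite) (t : DT g J → ℤ) :
    Function.HasFiniteSupport fun d : DT g J => z d * t d := by
  refine hz.subset ?_
  intro d hd h
  apply hd
  simp [h]

lemma pr_two {z t : DT g J → ℤ} (hz : IsCyc z) (ht : ∀ d, t (rev d) = - t d) :
    2 * pr z t = ∑ᶠ d : DT g J, z d * t d := by
  have e1 : pr z t = ∑ᶠ d : DT g J, if ¬ d.2.2 = true then z d * t d else 0 := by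
    unfold pr
    rw [← finsum_comp_equiv (⟨rev, rev, rev_rev, rev_rev⟩ : DT g J ≃ DT g J)]
    congr 1; ext d
    simp only [Equiv.coe_fn_mk, rev_snd, linv_snd, hz.anti, ht]
    cases d.2.2 <;> simp
  rw [two_mul]
  nth_rw 2 [e1]
  unfold pr
  rw [← finsum_add_distrib (pr_supp hz.fin t)]
  · congr 1; ext d; split_ifs <;> simp
  · have := pr_suppn hz.fin (fun d => - t d)
    simpa using this

lemma finsum_vert {z : DT g J → ℤ} (hz : (Function.support z).Finite) (F : DT g J → ℤ)
    (hF : ∀ d, z d = 0 → F d = 0) (h : ∀ x, ∑ s, F (x, s) = 0) : ∑ᶠ d, F d = 0 := by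
  rw [finsum_eq_sum_of_support_subset (s := (hz.toFinset.image Prod.fst) ×ˢ Finset.univ)]
  · rw [Finset.sum_product]
    apply Finset.sum_eq_zero
    intro x _
    exact h x
  · intro d hd
    have : z d ≠ 0 := fun h => hd (hF d h)
    simp only [Finset.coe_product, Set.mem_prod, Finset.mem_coe, Finset.mem_image, Set.Finite.mem_toFinset,
      Function.mem_support, Finset.mem_univ, and_true]
    exact ⟨d, this, rfl⟩

lemma exists_f0 {γ : Gamma g} (h : J = Subgroup.zpowers γ) (hg : 0 < g) : ∃ f : Cos g J → ℤ, Dc f = c0 J γ := by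
  have hm : γ ∈ J := by rw [h]; exact Subgroup.mem_zpowers γ
  have hz := c0_cyc hm
  set z := c0 J γ with hzdef
  have : ∀ x : Cos g J, ∃ φ : Letter g → ℤ, ∀ s, φ (vs s) = φ s - z (x, s) := fun x => exists_phi _ (hz.cons x)
  choose φ' hφ' using this
  let φ : DT g J → ℤ := fun d => φ' d.1 d.2
  have hφ : ∀ d : DT g J, φ (d.1, vs d.2) = φ d - z d := fun d => hφ' d.1 d.2
  have hf : ∀ d : DT g J, φ (fnx d) = φ (rev d) + z d := by
    intro d
    have := hφ (rev d)
    rw [hz.anti] at this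
    have e : ((rev d).1, vs (rev d).2) = fnx d := rfl
    rw [e] at this
    linarith
  let T : DT g J → ℤ := fun d => φ d - φ (fnx d)
  have hT : ∀ d, T (rev d) = - T d := by
    intro d
    simp only [T, hf, hz.anti, rev_rev]; ring
  have hTf : ∀ f, sm T (wk f (relatorWord g)) = 0 := sm_fnx φ
  have hI : It T (bs g J) γ = 0 := by
    have e1 : It T (bs g J) γ = pr z T := (pr_zc hT _).symm
    have e2 := pr_two hz hT
    have e3 : ∑ᶠ d : DT g J, z d * T d = 0 := by
      have a1 : ∑ᶠ d : DT g J, z d * φ (rev d) = - ∑ᶠ d : DT g J, z d * φ d := by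
        rw [← finsum_comp_equiv (⟨rev, rev, rev_rev, rev_rev⟩ : DT g J ≃ DT g J), ← finsum_neg_distrib]
        congr 1; ext d
        simp [hz.anti]
      have a2 : ∑ᶠ d : DT g J, z d * T d = ∑ᶠ d : DT g J, z d * φ d - ∑ᶠ d : DT g J, z d * φ (rev d)
          - ∑ᶠ d : DT g J, z d * z d := by
        rw [← finsum_sub_distrib (hfs hz.fin φ) (hfs hz.fin _), ← finsum_sub_distrib _ (hfs hz.fin z)]
        · congr 1; ext d; simp only [T, hf]; ring
        · have := hfs hz.fin (fun d => φ d - φ (rev d))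
          simpa only [mul_sub] using this
      have a3 : ∑ᶠ d : DT g J, (2 * (z d * φ d) - z d * z d) = 0 :=
        finsum_vert hz.fin _ (fun d hd => by simp [hd]) (fun x => phi_sum (hφ' x))
      have a4 : ∑ᶠ d : DT g J, (2 * (z d * φ d) - z d * z d) =
          ∑ᶠ d : DT g J, z d * φ d + ∑ᶠ d : DT g J, z d * φ d - ∑ᶠ d : DT g J, z d * z d := by
        rw [← finsum_add_distrib (hfs hz.fin φ) (hfs hz.fin _), ← finsum_sub_distrib _ (hfs hz.fin z)]
        · congr 1; ext d; ring
        · have := hfs hz.fin (fun d => φ d + φ d)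
          simpa only [mul_add] using this
      rw [a2, a1]; linarith
    rw [e1]; omega
  obtain ⟨P, κ, hP⟩ := qpot hT hTf h
  let Ψ : DT g J → ℤ := fun d => P d.1 + φ d
  have hΨ : ∀ d, Ψ (fnx d) = Ψ d := by
    intro d
    have := hP d
    rw [hI, smul_zero, add_zero] at this
    simp only [Ψ, T] at *
    have e : (fnx d).1 = hd d := rfl
    rw [e]; linarith
  let s0 : Letter g := rl 0 (by omega)
  let f : Cos g J → ℤ := fun y => Ψ (act y (pre s0), s0)
  have hfΨ : ∀ d : DT g J, f (Lf d) = Ψ d := by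
    intro d
    apply face_const Ψ hΨ
    simp [Lf]
  refine ⟨f, ?_⟩
  ext d
  unfold Dc
  rw [Lf_rev, hfΨ, hfΨ]
  simp only [Ψ]
  rw [hφ]; ring

lemma sum_letters (u : Letter g → ℤ) (hu : ∀ s, u (linv s) = - u s) : ((relatorWord g).map u).sum = 0 := by
  have h1 : ((relatorWord g).map u).sum = ∑ p : Fin (4 * g), u (rl p.1 p.2) := by
    rw [← List.sum_ofFn]
    congr 1
    unfold relatorWord
    rw [List.map_map, List.ofFn_eq_map]; rfl
  have h2 : ∑ p : Fin (4 * g), u (rl p.1 p.2) = ∑ s, u s := by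
    refine Fintype.sum_bijective (fun p : Fin (4 * g) => rl p.1 p.2) ⟨?_, ?_⟩ _ _ (fun _ => rfl)
    · intro p q h
      have := congrArg rp h
      simp only [rp_rl] at this
      exact Fin.ext this
    · intro s; exact ⟨⟨rp s, rp_lt s⟩, rl_rp s⟩
  have h3 : ∑ s, u s = ∑ s, u (linv s) :=
    (Equiv.sum_comp (⟨linv, linv, linv_linv, linv_linv⟩ : Letter g ≃ Letter g) u).symm
  simp only [hu, Finset.sum_neg_distrib] at h3
  rw [h1, h2]; omega

lemma exists_hom (c : Fin (2 * g) → ℤ) : ∃ φ : Gamma g →* Multiplicative ℤ,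
    ∀ i, φ (PresentedGroup.of i) = Multiplicative.ofAdd (c i) := by
  have : ∀ r ∈ ({relatorF g} : Set (FreeGroup (Fin (2 * g)))),
      FreeGroup.lift (fun i => Multiplicative.ofAdd (c i)) r = 1 := by
    intro r hr
    rw [Set.mem_singleton_iff] at hr
    subst hr
    have := sum_letters (fun s : Letter g => if s.2 then c s.1 else - c s.1) (by
      intro s; rcases s with ⟨a, b⟩; cases b <;> simp [linv])
    apply Multiplicative.toAdd.injective
    rw [toAdd_one, ← this]
    unfold relatorF
    rw [map_list_prod, toAdd_list_sum]
    simp only [List.map_map]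
    congr 1
    apply List.map_congr_left
    intro s _
    rcases s with ⟨a, b⟩; cases b <;> simp
  exact ⟨PresentedGroup.toGroup this, fun i => PresentedGroup.toGroup.of this⟩

lemma cos_infinite {γ : Gamma g} (h : J = Subgroup.zpowers γ) (hg : 0 < g) : Infinite (Cos g J) := by
  obtain ⟨u, hu⟩ := exists_hom (g := g) (fun i => if i.1 = 0 then 1 else 0)
  obtain ⟨v, hv⟩ := exists_hom (g := g) (fun i => if i.1 = 1 then 1 else 0)
  have key : ∃ φ : Gamma g →* Multiplicative ℤ, φ γ = 1 ∧ ∃ y, φ y ≠ 1 := by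
    by_cases hm : u γ = 1
    · refine ⟨u, hm, PresentedGroup.of ⟨0, by omega⟩, ?_⟩
      rw [hu]; simp
    · refine ⟨u ^ (Multiplicative.toAdd (v γ)) / v ^ (Multiplicative.toAdd (u γ)), ?_, PresentedGroup.of ⟨1, by omega⟩, ?_⟩
      · apply Multiplicative.toAdd.injective
        simp [MonoidHom.div_apply, mul_comm]
      · intro h
        apply hm
        have := congrArg Multiplicative.toAdd h
        apply Multiplicative.toAdd.injective
        simpa [hu, hv, MonoidHom.div_apply] using this
  obtain ⟨φ, hφ, y, hy⟩ := key
  apply Infinite.of_injective (fun n : ℤ => mkCos g J (y ^ n))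
  intro m n hmn
  have h1 := h.le (mk_eq.mp hmn)
  rw [Subgroup.mem_zpowers_iff] at h1
  obtain ⟨k, hk⟩ := h1
  have h2 := congrArg φ hk
  rw [map_zpow, hφ, one_zpow, map_mul, map_inv, map_zpow, map_zpow] at h2
  have h3 := congrArg Multiplicative.toAdd h2
  simp only [toAdd_one, toAdd_mul, toAdd_inv, toAdd_zpow, smul_eq_mul] at h3
  have h4 : Multiplicative.toAdd (φ y) ≠ 0 := fun h => hy (Multiplicative.toAdd.injective h)
  have h5 : (n - m) * Multiplicative.toAdd (φ y) = 0 := by linarith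
  rcases mul_eq_zero.mp h5 with h | h
  · omega
  · exact absurd h h4

end FF
end

section
set_option linter.unusedSimpArgs false
set_option linter.deprecated false
set_option linter.unusedVariables false
open Classical

section Cuts
variable {g : ℕ} {J : Subgroup (Gamma g)}

def I (A : Set (Cos g J)) : Cos g J → ℤ := fun x => ind (x ∈ A)

lemma I_mem {A : Set (Cos g J)} {x} (h : x ∈ A) : I A x = 1 := ind_true h
lemma I_not {A : Set (Cos g J)} {x} (h : x ∉ A) : I A x = 0 := ind_false h
lemma I_compl (A : Set (Cos g J)) (x) : I Aᶜ x = 1 - I A x := by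
  by_cases h : x ∈ A
  · rw [I_mem h, I_not (by simpa using h)]; rfl
  · rw [I_not h, I_mem (by simpa using h)]; rfl

lemma Dc_ext {F G : Cos g J → ℤ} (hg : 0 < g) (h : Dc F = Dc G) : ∃ c, ∀ x, F x = G x + c := by
  have h1 : ∀ d, (F - G) (Lf d) = (F - G) (Lf (rev d)) := by
    intro d
    have := congrFun h d
    simp only [Dc] at this
    simp only [Pi.sub_apply]; linarith
  refine ⟨(F - G) (bs g J), fun x => ?_⟩
  have := dual_conn _ h1 hg x (bs g J)
  simp only [Pi.sub_apply] at this ⊢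
  linarith

def Cut (B : Set (Cos g J)) : Set (DT g J) := {d | Lf d ∈ B ∧ Lf (rev d) ∉ B}

lemma Dc_I (B : Set (Cos g J)) (d : DT g J) : Dc (I B) d = ind (d ∈ Cut B) - ind (rev d ∈ Cut B) := by
  simp only [Dc, I, Cut, Set.mem_setOf_eq, rev_rev]
  by_cases h1 : Lf d ∈ B <;> by_cases h2 : Lf (rev d) ∈ B <;> simp [ind, h1, h2]

lemma mem_Cut_compl {B : Set (Cos g J)} {d : DT g J} : d ∈ Cut Bᶜ ↔ rev d ∈ Cut B := by
  simp [Cut, and_comm]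

/-- the main structural context -/
structure Ctx (γ : Gamma g) (A₀ : Set (Cos g J)) : Prop where
  hg : 2 ≤ g
  hJ : J = Subgroup.zpowers γ
  ne : γ ≠ 1
  inf : A₀.Infinite
  cinf : A₀ᶜ.Infinite
  cut : (Cut A₀).Finite
  cyc : ∀ z : DT g J → ℤ, IsCyc z → ∃ N : ℤ, ∃ h : Cos g J → ℤ, (Function.support h).Finite ∧
    z = Dc (N • I A₀ + h)
  cls : ∀ (x : Gamma g) w (k : ℤ), x * wordG w * x⁻¹ = γ ^ k →
    ∃ h : Cos g J → ℤ, (Function.support h).Finite ∧ zc (wk (mkCos g J x) w) = Dc (k • I A₀ + h)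

lemma Dc_const_add (c : ℤ) (F G : Cos g J → ℤ) (h : ∀ x, F x = c + G x) : Dc F = Dc G := by
  ext d; simp [Dc, h]

lemma Ctx.symm {γ : Gamma g} {A₀ : Set (Cos g J)} (C : Ctx γ A₀) : Ctx γ⁻¹ A₀ᶜ where
  hg := C.hg
  hJ := by rw [Subgroup.zpowers_inv]; exact C.hJ
  ne := by simpa using C.ne
  inf := C.cinf
  cinf := by rw [compl_compl]; exact C.inf
  cut := by
    have : Cut A₀ᶜ = rev ⁻¹' (Cut A₀) := by ext d; exact mem_Cut_compl
    rw [this]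
    exact C.cut.preimage rev_inj.injOn
  cyc := by
    intro z hz
    obtain ⟨N, h, hh, e⟩ := C.cyc z hz
    refine ⟨-N, h, hh, ?_⟩
    rw [e]
    apply Dc_const_add N
    intro x
    simp [I_compl]; ring
  cls := by
    intro x w k hk
    obtain ⟨h, hh, e⟩ := C.cls x w (-k) (by rw [hk]; simp)
    refine ⟨h, hh, ?_⟩
    rw [e]
    apply Dc_const_add (-k)
    intro x
    simp [I_compl]; ring

lemma exists_ctx {γ : Gamma g} (hg : 2 ≤ g) (h : J = Subgroup.zpowers γ) (hγ : γ ≠ 1) :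
    ∃ A₀ : Set (Cos g J), Ctx γ A₀ := by
  have hg0 : 0 < g := by omega
  have hm : γ ∈ J := by rw [h]; exact Subgroup.mem_zpowers γ
  have hz := c0_cyc hm
  have hinf := cos_infinite h hg0
  obtain ⟨f, hf⟩ := exists_f0 h hg0
  have hfd : ∀ d, f (Lf d) - f (Lf (rev d)) = c0 J γ d := fun d => congrFun hf d
  have hrange : (Set.range f).Finite := by
    have hfin : ((fun d => f (Lf d)) '' (Function.support (c0 J γ)) ∪ {f (bs g J)}).Finite :=
      (hz.fin.image _).union (Set.finite_singleton _)
    refine hfin.subset ?_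
    rintro _ ⟨y, rfl⟩
    by_contra hy
    simp only [Set.mem_union, Set.mem_image, Set.mem_singleton_iff, not_or, not_exists, not_and,
      Function.mem_support] at hy
    have := dual_conn (fun x => f x = f y) (by
      intro d
      by_cases hd : c0 J γ d = 0
      · have := hfd d
        rw [hd, sub_eq_zero] at this
        simp only [this]
      · have h1 := hy.1 d hd
        have h2 := hy.1 (rev d) (by rw [hz.anti]; simpa using hd)
        simp only [h1, h2]) hg0 y (bs g J)
    simp only [eq_iff_iff, true_iff] at this
    exact hy.2 this.symm
  have key : ∀ j, ¬ {x | f x ≠ j}.Finite := by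
    intro j hj
    have e : Dc (fun x => f x - j) = c0 J γ := by
      rw [← hf]; apply Dc_const_add (-j); intro x; ring
    have : (Function.support fun x => f x - j).Finite := by
      refine hj.subset ?_
      intro x hx hx'
      exact hx (by simp [hx'])
    have := nontriv h (v := bs g J) (w := wd γ) (by rw [wordG_wd, bs_fix hm]) this e.symm
    rw [wordG_wd] at this
    exact hγ this
  obtain ⟨j, hj⟩ : ∃ j, {x | f x = j}.Infinite := by
    by_contra hc
    push Not at hc
    have : (⋃ j ∈ Set.range f, {x | f x = j}).Finite :=
      hrange.biUnion (fun j _ => hc j)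
    apply Set.infinite_univ (α := Cos g J)
    refine this.subset ?_
    intro x _
    simp
  set A : Set (Cos g J) := {x | f x = j} with hA
  have hcut : (Function.support (Dc (I A))).Finite := by
    refine hz.fin.subset ?_
    intro d hd hd'
    apply hd
    have := hfd d
    rw [hd', sub_eq_zero] at this
    simp [Dc, I, A, this]
  obtain ⟨k, h', hh', e⟩ := H1 h (isCyc_Dc hcut)
  rw [← hf, ← Dc_smul, ← Dc_add] at e
  obtain ⟨c, hc⟩ := Dc_ext hg0 e
  have hc' : ∀ x, x ∉ Function.support h' → I A x = k * f x + c := by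
    intro x hx
    have := hc x
    simp only [Function.mem_support, not_not] at hx
    simpa [hx] using this
  obtain ⟨x1, hx1, hx1'⟩ := (hj.diff hh').nonempty
  have e1 := hc' x1 hx1'
  rw [I_mem hx1] at e1
  have hx1j : f x1 = j := hx1
  rw [hx1j] at e1
  have hcA : Aᶜ.Infinite := key j
  obtain ⟨x2, hx2, hx2'⟩ := (hcA.diff hh').nonempty
  have e2 := hc' x2 hx2'
  rw [I_not hx2] at e2
  have e3 : k * (f x2 - j) = -1 := by linarith
  have hk : k = 1 ∨ k = -1 := by
    have : k ∣ 1 := ⟨j - f x2, by linarith⟩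
    exact Int.isUnit_iff.mp (isUnit_of_dvd_one this)
  have hIA : Dc (I A) = k • c0 J γ + Dc h' := by rw [e, Dc_add, Dc_smul, hf]
  have hCutA : (Cut A).Finite := by
    refine hcut.subset ?_
    intro d hd
    have : rev d ∉ Cut A := fun h => hd.2 h.1
    rw [Function.mem_support, Dc_I, ind_true hd, ind_false this]; simp
  -- general builder
  have build : ∀ (A₀ : Set (Cos g J)) (h₀ : Cos g J → ℤ), (Function.support h₀).Finite →
      Dc (I A₀) = c0 J γ + Dc h₀ → A₀.Infinite → A₀ᶜ.Infinite → (Cut A₀).Finite → Ctx γ A₀ := by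
    intro A₀ h₀ hh₀ e₀ i1 i2 i3
    have c0e : c0 J γ = Dc (I A₀) - Dc h₀ := by rw [e₀]; abel
    have comb : ∀ (N : ℤ) (h : Cos g J → ℤ), (Function.support h).Finite →
        ∃ h' : Cos g J → ℤ, (Function.support h').Finite ∧ N • c0 J γ + Dc h = Dc (N • I A₀ + h') := by
      intro N h hh
      refine ⟨h - N • h₀, ?_, ?_⟩
      · refine (hh.union hh₀).subset ?_
        intro x hx
        by_contra hn
        simp only [Set.mem_union, Function.mem_support, not_or, not_not] at hn
        exact hx (by simp [hn.1, hn.2])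
      · rw [Dc_add, Dc_sub, Dc_smul, Dc_smul, c0e, smul_sub]; abel
    refine ⟨hg, h, hγ, i1, i2, i3, ?_, ?_⟩
    · intro z hz
      obtain ⟨N, h1, hh1, e1⟩ := H1 h hz
      obtain ⟨h2, hh2, e2⟩ := comb N h1 hh1
      exact ⟨N, h2, hh2, e1.trans e2⟩
    · intro x w k hk
      obtain ⟨h1, hh1, e1⟩ := closed_class hm hk
      obtain ⟨h2, hh2, e2⟩ := comb k h1 hh1
      exact ⟨h2, hh2, e1.trans e2⟩
  rcases hk with rfl | rfl
  · exact ⟨A, build A h' hh' (by rw [hIA, one_smul]) hj hcA hCutA⟩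
  · refine ⟨Aᶜ, build Aᶜ (-h') (by simpa using hh') ?_ hcA (by rwa [compl_compl]) ?_⟩
    · have e1 : Dc (I Aᶜ) = - Dc (I A) := by
        ext d; simp [Dc, I_compl]
      have e2 : Dc (-h') = - Dc h' := by ext d; simp [Dc]; ring
      rw [e1, hIA, e2]; simp; exact add_comm _ _
    · have : Cut Aᶜ = rev ⁻¹' (Cut A) := by ext d; exact mem_Cut_compl
      rw [this]
      exact hCutA.preimage rev_inj.injOn

/-! near sets -/
def Near (A A₀ : Set (Cos g J)) : Prop := (symmDiff A A₀).Finite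

lemma near_iff {A A₀ : Set (Cos g J)} : Near A A₀ ↔ ∃ K : Set (Cos g J), K.Finite ∧ ∀ x, x ∉ K → (x ∈ A ↔ x ∈ A₀) := by
  constructor
  · intro h
    refine ⟨_, h, fun x hx => ?_⟩
    rw [Set.mem_symmDiff] at hx; tauto
  · rintro ⟨K, hK, h⟩
    refine hK.subset ?_
    intro x hx
    by_contra hn
    rw [Set.mem_symmDiff] at hx
    have := h x hn
    tauto

lemma Near.refl (A : Set (Cos g J)) : Near A A := near_iff.mpr ⟨∅, Set.finite_empty, fun _ _ => Iff.rfl⟩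

lemma Near.compl {A A₀ : Set (Cos g J)} (h : Near A A₀) : Near Aᶜ A₀ᶜ := by
  obtain ⟨K, hK, h⟩ := near_iff.mp h
  exact near_iff.mpr ⟨K, hK, fun x hx => not_congr (h x hx)⟩

lemma Near.inter {A B A₀ : Set (Cos g J)} (h : Near A A₀) (h' : Near B A₀) : Near (A ∩ B) A₀ := by
  obtain ⟨K, hK, h⟩ := near_iff.mp h
  obtain ⟨K', hK', h'⟩ := near_iff.mp h'
  refine near_iff.mpr ⟨K ∪ K', hK.union hK', fun x hx => ?_⟩
  simp only [Set.mem_union, not_or] at hx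
  rw [Set.mem_inter_iff, h x hx.1, h' x hx.2, and_self]

lemma Near.union {A B A₀ : Set (Cos g J)} (h : Near A A₀) (h' : Near B A₀) : Near (A ∪ B) A₀ := by
  obtain ⟨K, hK, h⟩ := near_iff.mp h
  obtain ⟨K', hK', h'⟩ := near_iff.mp h'
  refine near_iff.mpr ⟨K ∪ K', hK.union hK', fun x hx => ?_⟩
  simp only [Set.mem_union, not_or] at hx
  rw [Set.mem_union, h x hx.1, h' x hx.2, or_self]

lemma Near.diff {A K A₀ : Set (Cos g J)} (h : Near A A₀) (hK : K.Finite) : Near (A \ K) A₀ := by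
  obtain ⟨K', hK', h⟩ := near_iff.mp h
  refine near_iff.mpr ⟨K ∪ K', hK.union hK', fun x hx => ?_⟩
  simp only [Set.mem_union, not_or] at hx
  rw [Set.mem_diff, h x hx.2]; tauto

lemma Near.infinite {A A₀ : Set (Cos g J)} (h : Near A A₀) (hi : A₀.Infinite) : A.Infinite := by
  obtain ⟨K, hK, h⟩ := near_iff.mp h
  refine (hi.diff hK).mono ?_
  intro x hx
  exact (h x hx.2).mpr hx.1

lemma Near.diff_finite {A B A₀ : Set (Cos g J)} (h : Near A A₀) (h' : Near B A₀) : (B \ A).Finite := by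
  obtain ⟨K, hK, h⟩ := near_iff.mp h
  obtain ⟨K', hK', h'⟩ := near_iff.mp h'
  refine (hK.union hK').subset ?_
  intro x hx
  by_contra hn
  simp only [Set.mem_union, not_or] at hn
  exact hx.2 ((h x hn.1).mpr ((h' x hn.2).mp hx.1))

lemma finite_Lf_rev {K : Set (Cos g J)} (hK : K.Finite) : {d : DT g J | Lf (rev d) ∈ K}.Finite :=
  Set.Finite.preimage (f := rev) rev_inj.injOn (finite_Lf hK)

lemma Near.cut {A A₀ : Set (Cos g J)} (h : Near A A₀) (hc : (Cut A₀).Finite) : (Cut A).Finite := by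
  obtain ⟨K, hK, h⟩ := near_iff.mp h
  refine ((hc.union (finite_Lf hK)).union (finite_Lf_rev hK)).subset ?_
  intro d hd
  by_contra hn
  simp only [Set.mem_union, Set.mem_setOf_eq, not_or] at hn
  exact hn.1.1 ⟨(h _ hn.1.2).mp hd.1, fun h' => hd.2 ((h _ hn.2).mpr h')⟩

/-- minimal cuts -/
structure IsMin (A₀ A : Set (Cos g J)) : Prop where
  near : Near A A₀
  le : ∀ B, Near B A₀ → (Cut A).ncard ≤ (Cut B).ncard

lemma exists_min (A₀ : Set (Cos g J)) : ∃ A, IsMin A₀ A := by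
  obtain ⟨A, hA, h⟩ := WellFounded.has_min (measure (fun A : Set (Cos g J) => (Cut A).ncard)).wf
    {A | Near A A₀} ⟨A₀, Near.refl _⟩
  exact ⟨A, hA, fun B hB => not_lt.mp (h B hB)⟩

lemma IsMin.card_eq {A₀ A B : Set (Cos g J)} (hA : IsMin A₀ A) (hB : IsMin A₀ B) :
    (Cut A).ncard = (Cut B).ncard := le_antisymm (hA.le B hB.near) (hB.le A hA.near)

lemma cut_compl_ncard (B : Set (Cos g J)) : (Cut Bᶜ).ncard = (Cut B).ncard := by
  have : Cut Bᶜ = rev '' (Cut B) := by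
    ext d
    rw [mem_Cut_compl]
    constructor
    · intro h; exact ⟨rev d, h, rev_rev d⟩
    · rintro ⟨e, he, rfl⟩; rwa [rev_rev]
  rw [this, Set.ncard_image_of_injective _ rev_inj]

lemma IsMin.compl {A₀ A : Set (Cos g J)} (h : IsMin A₀ A) : IsMin A₀ᶜ Aᶜ := by
  refine ⟨h.near.compl, fun B hB => ?_⟩
  rw [cut_compl_ncard, ← cut_compl_ncard B]
  apply h.le
  have := hB.compl
  rwa [compl_compl] at this

lemma ncard_sum {α : Type*} (S : Set α) (T : Finset α) (h : S ⊆ T) : (S.ncard : ℤ) = ∑ d ∈ T, ind (d ∈ S) := by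
  have : S = ((T.filter (fun d => d ∈ S) : Finset α) : Set α) := by
    ext d
    simp only [Finset.coe_filter, Set.mem_setOf_eq]
    exact ⟨fun hd => ⟨h hd, hd⟩, fun hd => hd.2⟩
  conv_lhs => rw [this]
  rw [Set.ncard_coe_finset, Finset.card_filter]
  push_cast
  rfl

lemma submod {A B : Set (Cos g J)} (hA : (Cut A).Finite) (hB : (Cut B).Finite) :
    (Cut (A ∩ B)).ncard + (Cut (A ∪ B)).ncard ≤ (Cut A).ncard + (Cut B).ncard := by
  set T := hA.toFinset ∪ hB.toFinset
  have h1 := ncard_sum (Cut A) T (by intro d; simp [T]; tauto)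
  have h2 := ncard_sum (Cut B) T (by intro d; simp [T]; tauto)
  have h3 := ncard_sum (Cut (A ∩ B)) T (by intro d; simp [T, Cut]; tauto)
  have h4 := ncard_sum (Cut (A ∪ B)) T (by intro d; simp [T, Cut]; tauto)
  have : ((Cut (A ∩ B)).ncard : ℤ) + (Cut (A ∪ B)).ncard ≤ (Cut A).ncard + (Cut B).ncard := by
    rw [h1, h2, h3, h4, ← Finset.sum_add_distrib, ← Finset.sum_add_distrib]
    apply Finset.sum_le_sum
    intro d _
    simp only [Cut, Set.mem_setOf_eq, Set.mem_inter_iff, Set.mem_union]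
    by_cases a1 : Lf d ∈ A <;> by_cases a2 : Lf d ∈ B <;> by_cases a3 : Lf (rev d) ∈ A <;>
      by_cases a4 : Lf (rev d) ∈ B <;> simp [ind, a1, a2, a3, a4]
  exact_mod_cast this

section
variable {γ : Gamma g} {A₀ : Set (Cos g J)}

lemma IsMin.inter (C : Ctx γ A₀) {A B : Set (Cos g J)} (hA : IsMin A₀ A) (hB : IsMin A₀ B) : IsMin A₀ (A ∩ B) := by
  refine ⟨hA.near.inter hB.near, fun D hD => ?_⟩
  have h1 := submod (hA.near.cut C.cut) (hB.near.cut C.cut)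
  have h2 := hB.le _ (hA.near.union hB.near)
  have h3 := hA.le D hD
  omega

lemma IsMin.union (C : Ctx γ A₀) {A B : Set (Cos g J)} (hA : IsMin A₀ A) (hB : IsMin A₀ B) : IsMin A₀ (A ∪ B) := by
  refine ⟨hA.near.union hB.near, fun D hD => ?_⟩
  have h1 := submod (hA.near.cut C.cut) (hB.near.cut C.cut)
  have h2 := hB.le _ (hA.near.inter hB.near)
  have h3 := hA.le D hD
  omega

lemma exists_boundary (hg : 0 < g) {K : Set (Cos g J)} (h1 : K.Nonempty) (h2 : Kᶜ.Nonempty) : (Cut K).Nonempty := by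
  by_contra hc
  rw [Set.not_nonempty_iff_eq_empty] at hc
  obtain ⟨x, hx⟩ := h1
  obtain ⟨y, hy⟩ := h2
  have := dual_conn (fun x => x ∈ K) (by
    intro d
    have a1 : d ∉ Cut K := by rw [hc]; simp
    have a2 : rev d ∉ Cut K := by rw [hc]; simp
    simp only [Cut, Set.mem_setOf_eq, rev_rev] at a1 a2
    apply propext; tauto) hg x y
  simp only [eq_iff_iff] at this
  exact hy (this.mp hx)

/-- no finite isolated piece in a minimal cut -/
lemma IsMin.no_piece (C : Ctx γ A₀) {A K : Set (Cos g J)} (hA : IsMin A₀ A) (hK : K.Finite) (hKA : K ⊆ A)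
    (h : ∀ d, Lf d ∈ K → Lf (rev d) ∈ A → Lf (rev d) ∈ K) : K = ∅ := by
  by_contra hne
  rw [← Ne, ← Set.nonempty_iff_ne_empty] at hne
  have hinf := cos_infinite C.hJ (by have := C.hg; omega)
  obtain ⟨d, hd⟩ := exists_boundary (by have := C.hg; omega) hne hK.infinite_compl.nonempty
  have h1 := hA.le _ (hA.near.diff hK)
  have h2 : Cut (A \ K) ⊂ Cut A := by
    constructor
    · intro e he
      refine ⟨he.1.1, fun h' => he.2 ⟨h', fun h'' => ?_⟩⟩
      have := h (rev e) h'' (by rw [rev_rev]; exact he.1.1)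
      rw [rev_rev] at this
      exact he.1.2 this
    · intro hs
      have h3 : d ∈ Cut A := ⟨hKA hd.1, fun h' => hd.2 (h d hd.1 h')⟩
      exact (hs h3).1.2 hd.1
  have h3 := Set.ncard_lt_ncard h2 (hA.near.cut C.cut)
  omega

/-- KEY1 -/
lemma key1 (C : Ctx γ A₀) {A : Set (Cos g J)} (hA : IsMin A₀ A) {l : List (DT g J)} {k : ℤ} (hk : 1 ≤ k)
    {h : Cos g J → ℤ} (hh : (Function.support h).Finite) (hz : zc l = Dc (k • I A₀ + h)) :
    k * (Cut A).ncard ≤ l.length ∧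
    ((l.length : ℤ) ≤ k * (Cut A).ncard → ∀ d ∈ l, ∃ B, IsMin A₀ B ∧ d ∈ Cut B) := by
  set f : Cos g J → ℤ := k • I A₀ + h with hf
  let Ai : ℤ → Set (Cos g J) := fun i => {x | i ≤ f x}
  have hnear : ∀ i ∈ Finset.Icc 1 k, Near (Ai i) A₀ := by
    intro i hi
    rw [Finset.mem_Icc] at hi
    refine near_iff.mpr ⟨_, hh, fun x hx => ?_⟩
    simp only [Function.mem_support, not_not] at hx
    show i ≤ f x ↔ _
    simp only [hf, Pi.add_apply, hx, Pi.smul_apply, add_zero, smul_eq_mul]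
    by_cases hx0 : x ∈ A₀
    · rw [I_mem hx0]; simp [hx0]; omega
    · rw [I_not hx0]; simp [hx0]; omega
  have hcount : ∀ d, ∑ i ∈ Finset.Icc 1 k, ind (d ∈ Cut (Ai i)) ≤ l.count d := by
    intro d
    have e1 : ∑ i ∈ Finset.Icc 1 k, ind (d ∈ Cut (Ai i)) =
        (((Finset.Icc 1 k).filter (fun i => d ∈ Cut (Ai i))).card : ℤ) := by
      rw [Finset.card_filter]; push_cast; rfl
    have e2 : (Finset.Icc 1 k).filter (fun i => d ∈ Cut (Ai i)) ⊆ Finset.Ioc (f (Lf (rev d))) (f (Lf d)) := by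
      intro i hi
      rw [Finset.mem_filter] at hi
      rw [Finset.mem_Ioc]
      have h1 : i ≤ f (Lf d) := hi.2.1
      have h2 : ¬ (i ≤ f (Lf (rev d))) := hi.2.2
      exact ⟨not_le.mp h2, h1⟩
    have e3 := Finset.card_le_card e2
    rw [Int.card_Ioc] at e3
    have e4 := congrFun hz d
    simp only [zc, Dc] at e4
    rw [e1]
    have e5 : (0 : ℤ) ≤ l.count (rev d) := by positivity
    omega
  have hsub : ∀ i ∈ Finset.Icc 1 k, Cut (Ai i) ⊆ (l.toFinset : Set (DT g J)) := by
    intro i hi d hd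
    simp only [List.coe_toFinset, Set.mem_setOf_eq]
    by_contra hn
    have h1 := hcount d
    rw [List.count_eq_zero_of_not_mem hn] at h1
    have h2 : ind (d ∈ Cut (Ai i)) ≤ ∑ i ∈ Finset.Icc 1 k, ind (d ∈ Cut (Ai i)) :=
      Finset.single_le_sum (f := fun i => ind (d ∈ Cut (Ai i))) (fun i _ => ind_nonneg _) hi
    rw [ind_true hd] at h2
    simp at h1; omega
  have hlen : (l.length : ℤ) = ∑ d ∈ l.toFinset, (l.count d : ℤ) := by
    rw [← List.sum_toFinset_count_eq_length l]; push_cast; refine Finset.sum_congr rfl fun d _ => ?_; congr!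
  have hsum : ∑ i ∈ Finset.Icc 1 k, ((Cut (Ai i)).ncard : ℤ) =
      ∑ d ∈ l.toFinset, ∑ i ∈ Finset.Icc 1 k, ind (d ∈ Cut (Ai i)) := by
    rw [Finset.sum_comm]
    apply Finset.sum_congr rfl
    intro i hi
    exact ncard_sum _ _ (hsub i hi)
  have hle : ∑ i ∈ Finset.Icc 1 k, ((Cut (Ai i)).ncard : ℤ) ≤ l.length := by
    rw [hsum, hlen]
    exact Finset.sum_le_sum (fun d _ => hcount d)
  have hM : ∀ i ∈ Finset.Icc 1 k, ((Cut A).ncard : ℤ) ≤ (Cut (Ai i)).ncard := by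
    intro i hi
    exact_mod_cast hA.le _ (hnear i hi)
  have hcard : ∑ i ∈ Finset.Icc 1 k, ((Cut A).ncard : ℤ) = k * (Cut A).ncard := by
    rw [Finset.sum_const, Int.card_Icc]
    simp
    left; omega
  have hge := Finset.sum_le_sum hM
  rw [hcard] at hge
  refine ⟨hge.trans hle, fun hl d hd => ?_⟩
  have heq : ∑ d ∈ l.toFinset, ∑ i ∈ Finset.Icc 1 k, ind (d ∈ Cut (Ai i)) = ∑ d ∈ l.toFinset, (l.count d : ℤ) := by
    rw [← hlen, ← hsum]; omega
  have h1 := (Finset.sum_eq_sum_iff_of_le (fun d _ => hcount d)).mp heq d (by simpa using hd)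
  have h2 : 0 < l.count d := List.count_pos_iff.mpr hd
  have h3 : ∑ i ∈ Finset.Icc 1 k, ind (d ∈ Cut (Ai i)) ≠ 0 := by rw [h1]; exact_mod_cast h2.ne'
  obtain ⟨i, hi, hi'⟩ := Finset.exists_ne_zero_of_sum_ne_zero h3
  have hdi : d ∈ Cut (Ai i) := by
    by_contra hn; exact hi' (ind_false hn)
  have heq2 : ∑ i ∈ Finset.Icc 1 k, ((Cut A).ncard : ℤ) = ∑ i ∈ Finset.Icc 1 k, ((Cut (Ai i)).ncard : ℤ) := by
    rw [hcard]; omega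
  have h4 := (Finset.sum_eq_sum_iff_of_le hM).mp heq2 i hi
  refine ⟨Ai i, ⟨hnear i hi, fun B hB => ?_⟩, hdi⟩
  have h5 := hA.le B hB
  have h6 : (Cut A).ncard = (Cut (Ai i)).ncard := by exact_mod_cast h4
  omega

end
end Cuts
end

section
set_option linter.unusedSimpArgs false
set_option linter.deprecated false
set_option linter.unusedVariables false
open Classical
section Euler

variable {g : ℕ} {J : Subgroup (Gamma g)}

def Xd (A B : Set (Cos g J)) : Set (DT g J) :=
  {d | (Lf d ∉ A ∨ Lf (rev d) ∉ A) ∧ (Lf d ∈ B ∨ Lf (rev d) ∈ B)}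

lemma Xd_rev {A B : Set (Cos g J)} {d : DT g J} : rev d ∈ Xd A B ↔ d ∈ Xd A B := by
  simp only [Xd, Set.mem_setOf_eq, rev_rev]; tauto

lemma Xd_eq {A B : Set (Cos g J)} (h : A ⊆ B) :
    Xd A B = {d | Lf d ∈ B \ A} ∪ (Cut A ∪ rev ⁻¹' (Cut B)) := by
  ext d
  have h1 := @h (Lf d)
  have h2 := @h (Lf (rev d))
  simp only [Xd, Cut, Set.mem_setOf_eq, Set.mem_union, Set.mem_diff, Set.mem_preimage, rev_rev]
  tauto

lemma ncard_preimage_rev (S : Set (DT g J)) : (rev ⁻¹' S).ncard = S.ncard := by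
  have : rev ⁻¹' S = rev '' S := by
    ext d; constructor
    · intro h; exact ⟨rev d, h, rev_rev d⟩
    · rintro ⟨e, he, rfl⟩; simpa using he
  rw [this, Set.ncard_image_of_injective _ rev_inj]

lemma ncard_Lf {K : Set (Cos g J)} (hK : K.Finite) : {d : DT g J | Lf d ∈ K}.ncard = 4 * g * K.ncard := by
  have hA : ∀ s : Letter g, ∃ f : Cos g J ≃ Cos g J, ∀ x, f x = Lf (x, s) := by
    intro s
    exact ⟨⟨fun x => act x (pre s)⁻¹, fun x => act x (pre s), fun x => by simp [← act_mul], fun x => by simp [← act_mul]⟩, fun x => rfl⟩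
  choose f hf using hA
  have e : {d : DT g J | Lf d ∈ K} = (fun p : Cos g J × Letter g => ((f p.2).symm p.1, p.2)) '' (K ×ˢ (Set.univ : Set (Letter g))) := by
    ext ⟨x, s⟩
    simp only [Set.mem_setOf_eq, Set.mem_image, Set.mem_prod, Set.mem_univ, and_true, Prod.mk.injEq]
    constructor
    · intro h; exact ⟨(Lf (x, s), s), h, by rw [← hf]; simp, rfl⟩
    · rintro ⟨⟨y, t⟩, h, h1, h2⟩
      simp only at h1 h2 h
      subst h2
      rw [← hf, ← h1]; simpa using h
  rw [e, Set.ncard_image_of_injective, Set.ncard_prod, Set.ncard_univ]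
  · simp [Nat.card_eq_fintype_card]; ring
  · rintro ⟨x, s⟩ ⟨y, t⟩ h
    simp only [Prod.mk.injEq] at h
    obtain ⟨h1, rfl⟩ := h
    simpa using h1

lemma Xd_finite {A B : Set (Cos g J)} (h : A ⊆ B) (hA : (Cut A).Finite) (hB : (Cut B).Finite) (hD : (B \ A).Finite) :
    (Xd A B).Finite := by
  rw [Xd_eq h]
  exact (finite_Lf hD).union (hA.union (hB.preimage rev_inj.injOn))

lemma Xd_ncard {A B : Set (Cos g J)} (h : A ⊆ B) (hA : (Cut A).Finite) (hB : (Cut B).Finite) (hD : (B \ A).Finite) :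
    (Xd A B).ncard = 4 * g * (B \ A).ncard + (Cut A).ncard + (Cut B).ncard := by
  rw [Xd_eq h, Set.ncard_union_eq _ (finite_Lf hD) (hA.union (hB.preimage rev_inj.injOn)),
    Set.ncard_union_eq _ hA (hB.preimage rev_inj.injOn), ncard_Lf hD, ncard_preimage_rev]
  · ring
  · rw [Set.disjoint_left]
    intro d h1 h2
    simp only [Cut, Set.mem_setOf_eq, Set.mem_preimage, rev_rev] at h1 h2
    exact h2.2 (h h1.1)
  · rw [Set.disjoint_left]
    intro d h1 h2
    simp only [Cut, Set.mem_setOf_eq, Set.mem_preimage, rev_rev, Set.mem_union, Set.mem_diff] at h1 h2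
    tauto

lemma rn {R M N : Type} [CommRing R] [IsDomain R] [AddCommGroup M] [AddCommGroup N] [Module R M] [Module R N] [Module.Finite R M] (f : M →ₗ[R] N) :
    Module.finrank R (LinearMap.range f) + Module.finrank R (LinearMap.ker f) = Module.finrank R M := by
  rw [← f.quotKerEquivRange.finrank_eq]
  exact Submodule.finrank_quotient_add_finrank _

/-- positive darts of X -/
abbrev EX (A B : Set (Cos g J)) := {d : DT g J // d ∈ Xd A B ∧ d.2.2 = true}

lemma card_EX {A B : Set (Cos g J)} (hf : (Xd A B).Finite) : 2 * Nat.card (EX A B) = (Xd A B).ncard := by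
  have e : Xd A B = {d | d ∈ Xd A B ∧ d.2.2 = true} ∪ rev ⁻¹' {d | d ∈ Xd A B ∧ d.2.2 = true} := by
    ext d
    simp only [Set.mem_union, Set.mem_preimage, Set.mem_setOf_eq, Xd_rev, rev_snd, linv]
    cases d.2.2 <;> simp
  have hs : {d | d ∈ Xd A B ∧ d.2.2 = true}.Finite := hf.subset (fun d h => h.1)
  have h1 := congrArg Set.ncard e
  rw [Set.ncard_union_eq _ hs (hs.preimage rev_inj.injOn), ncard_preimage_rev] at h1
  · have : Nat.card (EX A B) = {d | d ∈ Xd A B ∧ d.2.2 = true}.ncard := rfl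
    omega
  · rw [Set.disjoint_left]
    intro d h1 h2
    simp only [Set.mem_preimage, Set.mem_setOf_eq, rev_snd, linv] at h1 h2
    simp [h1.2] at h2

def e0 {A B : Set (Cos g J)} (u : EX A B → ℤ) (d : DT g J) : ℤ :=
  if h : d ∈ Xd A B ∧ d.2.2 = true then u ⟨d, h⟩ else 0

def ext {A B : Set (Cos g J)} : (EX A B → ℤ) →ₗ[ℤ] (DT g J → ℤ) where
  toFun u d := e0 u d - e0 u (rev d)
  map_add' u v := by
    ext d; simp only [e0, Pi.add_apply]; split_ifs <;> ring
  map_smul' k u := by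
    ext d; simp only [e0, Pi.smul_apply, smul_eq_mul, RingHom.id_apply]; split_ifs <;> ring

lemma ext_apply {A B : Set (Cos g J)} (u : EX A B → ℤ) (d) : ext u d = e0 u d - e0 u (rev d) := rfl

lemma ext_rev {A B : Set (Cos g J)} (u : EX A B → ℤ) (d) : ext u (rev d) = - ext u d := by
  simp [ext_apply]

lemma ext_off {A B : Set (Cos g J)} (u : EX A B → ℤ) {d} (h : d ∉ Xd A B) : ext u d = 0 := by
  have h' : rev d ∉ Xd A B := fun h' => h (Xd_rev.mp h')
  simp [ext_apply, e0, h, h']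

lemma ext_pos {A B : Set (Cos g J)} (u : EX A B → ℤ) (e : EX A B) : ext u e.1 = u e := by
  have h1 : ¬ ((rev e.1) ∈ Xd A B ∧ (rev e.1).2.2 = true) := by
    simp [rev_snd, linv, e.2.2]
  rw [ext_apply, e0, e0, dif_pos e.2, dif_neg h1]; simp

lemma ext_eq {A B : Set (Cos g J)} (u : EX A B → ℤ) (z : DT g J → ℤ) (hr : ∀ d, z (rev d) = - z d)
    (ho : ∀ d, d ∉ Xd A B → z d = 0) (hp : ∀ e : EX A B, z e.1 = u e) : ext u = z := by
  funext d
  by_cases h : d ∈ Xd A B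
  · by_cases h2 : d.2.2 = true
    · exact (ext_pos u ⟨d, h, h2⟩).trans (hp ⟨d, h, h2⟩).symm
    · have h3 : (rev d).2.2 = true := by simpa [rev_snd, linv] using h2
      have h4 := (ext_pos u ⟨rev d, Xd_rev.mpr h, h3⟩).trans (hp ⟨rev d, Xd_rev.mpr h, h3⟩).symm
      simp only [ext_rev, hr] at h4
      linarith
  · rw [ext_off u h, ho d h]

lemma ext_single {A B : Set (Cos g J)} (e : EX A B) : ext (Pi.single e 1) = zc [e.1] := by
  apply ext_eq
  · exact zc_rev _
  · intro d hd
    have h1 : d ≠ e.1 := by rintro rfl; exact hd e.2.1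
    have h2 : rev d ≠ e.1 := by rintro h; exact hd (Xd_rev.mp (h ▸ e.2.1))
    simp [zc, List.count_singleton, h1.symm, h2.symm]
  · intro e'
    have h2 : rev e'.1 ≠ e.1 := by
      intro h
      have := e.2.2
      rw [← h] at this
      simp [rev_snd, linv, e'.2.2] at this
    have h2' : ¬ (e.1 = rev e'.1) := fun h => h2 h.symm
    by_cases h : e = e'
    · subst h; simp [zc, List.count_singleton, h2']
    · have h3 : ¬ (e.1 = e'.1) := fun h' => h (Subtype.ext h')
      simp [zc, List.count_singleton, h2', h3, Pi.single_apply, Ne.symm h, eq_comm]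

abbrev VX (A B : Set (Cos g J)) := {x : Cos g J // ∃ d ∈ Xd A B, d.1 = x}

def bd (A B : Set (Cos g J)) : (EX A B → ℤ) →ₗ[ℤ] (VX A B → ℤ) where
  toFun u x := ∑ s, ext u (x.1, s)
  map_add' u v := by
    funext x; simp [Finset.sum_add_distrib]
  map_smul' k u := by
    funext x; simp only [map_smul, Pi.smul_apply, smul_eq_mul, Finset.mul_sum, RingHom.id_apply]

lemma bd_apply {A B : Set (Cos g J)} (u) (x : VX A B) : bd A B u x = ∑ s, ext u (x.1, s) := rfl

lemma ext_cyc {A B : Set (Cos g J)} (hf : (Xd A B).Finite) {u} (h : bd A B u = 0) : IsCyc (ext u) where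
  anti := ext_rev u
  cons := by
    intro x
    by_cases hx : ∃ d ∈ Xd A B, d.1 = x
    · exact congrFun h ⟨x, hx⟩
    · apply Finset.sum_eq_zero
      intro s _
      exact ext_off u (fun h => hx ⟨_, h, rfl⟩)
  fin := hf.subset (fun d hd => by by_contra hn; exact hd (ext_off u hn))

def Ff (A B : Set (Cos g J)) : (((B \ A : Set (Cos g J)) → ℤ) × ℤ) →ₗ[ℤ] (Cos g J → ℤ) where
  toFun p x := if hx : x ∈ B \ A then p.1 ⟨x, hx⟩ else if x ∈ A then p.2 else 0
  map_add' u v := by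
    funext d; simp only [Pi.add_apply, Prod.fst_add, Prod.snd_add]; split_ifs <;> ring
  map_smul' k u := by
    funext d; simp only [Pi.smul_apply, Prod.smul_fst, Prod.smul_snd, smul_eq_mul, RingHom.id_apply]; split_ifs <;> ring

lemma Ff_D {A B : Set (Cos g J)} (p) (x : (B \ A : Set (Cos g J))) : Ff A B p x.1 = p.1 x := by
  change dite _ _ _ = _
  rw [dif_pos x.2]
lemma Ff_A {A B : Set (Cos g J)} (p) {x} (hx : x ∈ A) : Ff A B p x = p.2 := by
  change dite _ _ _ = _
  rw [dif_neg (fun h => h.2 hx), if_pos hx]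
lemma Ff_B {A B : Set (Cos g J)} (hAB : A ⊆ B) (p) {x} (hx : x ∉ B) : Ff A B p x = 0 := by
  change dite _ _ _ = _
  rw [dif_neg (fun h => hx h.1), if_neg (fun h => hx (hAB h))]

def Th (A B : Set (Cos g J)) : (((B \ A : Set (Cos g J)) → ℤ) × ℤ) →ₗ[ℤ] (EX A B → ℤ) where
  toFun p e := Dc (Ff A B p) e.1
  map_add' u v := by
    funext d; simp [map_add, Dc_add]
  map_smul' k u := by
    funext d; simp only [map_smul, Dc_smul, RingHom.id_apply, Pi.smul_apply]

lemma ext_Th {A B : Set (Cos g J)} (hAB : A ⊆ B) (p) : ext (Th A B p) = Dc (Ff A B p) := by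
  apply ext_eq
  · exact Dc_rev _
  · intro d hd
    simp only [Xd, Set.mem_setOf_eq] at hd
    simp only [Dc]
    by_cases h : Lf d ∈ A ∧ Lf (rev d) ∈ A
    · rw [Ff_A _ h.1, Ff_A _ h.2]; simp
    · rw [Ff_B hAB, Ff_B hAB] <;> tauto
  · intro e; rfl

variable {γ : Gamma g} {A₀ : Set (Cos g J)}

lemma Th_inj (C : Ctx γ A₀) {A B : Set (Cos g J)} (hA : IsMin A₀ A) (hB : IsMin A₀ B) (hAB : A ⊆ B) :
    Function.Injective (Th A B) := by
  rw [injective_iff_map_eq_zero]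
  intro p hp
  have h1 : Dc (Ff A B p) = 0 := by rw [← ext_Th hAB, hp, map_zero]
  have h2 : ∀ x y, Ff A B p x = Ff A B p y := fun x y => by
    refine dual_conn _ (fun d => ?_) (by have := C.hg; omega) x y
    have := congrFun h1 d
    simp only [Dc, Pi.zero_apply] at this
    linarith
  obtain ⟨b, hb⟩ := (hB.compl.near.infinite C.cinf).nonempty
  obtain ⟨a, ha⟩ := (hA.near.infinite C.inf).nonempty
  have h3 : ∀ x, Ff A B p x = 0 := fun x => (h2 x b).trans (Ff_B hAB p hb)
  refine Prod.ext (funext fun x => ?_) ?_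
  · rw [← Ff_D p x]; exact h3 _
  · rw [← Ff_A p ha]; exact h3 _

lemma range_Th (C : Ctx γ A₀) {A B : Set (Cos g J)} (hA : IsMin A₀ A) (hB : IsMin A₀ B) (hAB : A ⊆ B)
    (hf : (Xd A B).Finite) :
    LinearMap.ker (bd A B) = LinearMap.range (Th A B) := by
  apply le_antisymm
  · intro u hu
    rw [LinearMap.mem_ker] at hu
    obtain ⟨N, h, hh, hz⟩ := C.cyc _ (ext_cyc hf hu)
    set F := N • I A₀ + h with hF
    obtain ⟨K1, hK1, hK1'⟩ := near_iff.mp hA.near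
    obtain ⟨K2, hK2, hK2'⟩ := near_iff.mp hB.near
    have h0 : ∀ d, d ∉ Xd A B → F (Lf d) = F (Lf (rev d)) := by
      intro d hd
      have h1 := congrFun hz d
      rw [ext_off u hd] at h1
      simp only [Dc] at h1
      linarith
    have e1 : {x | x ∈ A ∧ F x ≠ N} = ∅ := by
      apply hA.no_piece C
      · refine (hK1.union hh).subset ?_
        rintro x ⟨hx, hn⟩
        by_contra hc
        simp only [Set.mem_union, Function.mem_support, not_or, not_not] at hc
        apply hn
        have := I_mem ((hK1' x hc.1).mp hx)
        simp [hF, this, hc.2]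
      · exact fun x hx => hx.1
      · rintro d ⟨h1, h2⟩ h3
        refine ⟨h3, ?_⟩
        rw [← h0 d]
        · exact h2
        · simp only [Xd, Set.mem_setOf_eq]; tauto
    have e2 : {x | x ∈ Bᶜ ∧ F x ≠ 0} = ∅ := by
      apply hB.compl.no_piece C.symm
      · refine (hK2.union hh).subset ?_
        rintro x ⟨hx, hn⟩
        by_contra hc
        simp only [Set.mem_union, Function.mem_support, not_or, not_not] at hc
        apply hn
        have := I_not (fun h => hx ((hK2' x hc.1).mpr h))
        simp [hF, this, hc.2]
      · exact fun x hx => hx.1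
      · rintro d ⟨h1, h2⟩ h3
        refine ⟨h3, ?_⟩
        rw [← h0 d]
        · exact h2
        · simp only [Xd, Set.mem_setOf_eq, Set.mem_compl_iff] at *; tauto
    have e3 : F = Ff A B (fun x => F x.1, N) := by
      funext x
      by_cases hx : x ∈ A
      · rw [Ff_A _ hx]; by_contra hn
        exact absurd (show x ∈ {x | x ∈ A ∧ F x ≠ N} from ⟨hx, hn⟩) (by rw [e1]; simp)
      · by_cases hx' : x ∈ B
        · exact (Ff_D (A := A) (B := B) (fun x => F x.1, N) ⟨x, hx', hx⟩).symm
        · rw [Ff_B hAB _ hx']; by_contra hn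
          exact absurd (show x ∈ {x | x ∈ Bᶜ ∧ F x ≠ 0} from ⟨hx', hn⟩) (by rw [e2]; simp)
    refine ⟨(fun x => F x.1, N), ?_⟩
    funext e
    change Dc _ e.1 = _
    rw [← e3, ← hz, ext_pos]
  · rintro _ ⟨p, rfl⟩
    rw [LinearMap.mem_ker]
    funext x
    rw [bd_apply, ext_Th hAB]
    exact sum_Dc _ _

lemma rank_eq (C : Ctx γ A₀) {A B : Set (Cos g J)} (hA : IsMin A₀ A) (hB : IsMin A₀ B) (hAB : A ⊆ B)
    (hf : (Xd A B).Finite) :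
    Nat.card (EX A B) = (B \ A).ncard + 1 + Module.finrank ℤ (LinearMap.range (bd A B)) := by
  have hD : (B \ A).Finite := hA.near.diff_finite hB.near
  have : Finite (EX A B) := (hf.subset (fun d h => h.1) : {d | d ∈ Xd A B ∧ d.2.2 = true}.Finite)
  have : Fintype (EX A B) := Fintype.ofFinite _
  have : Finite (B \ A : Set (Cos g J)) := hD
  have : Fintype (B \ A : Set (Cos g J)) := Fintype.ofFinite _
  have h1 := rn (bd A B)
  rw [range_Th C hA hB hAB hf, LinearMap.finrank_range_of_inj (Th_inj C hA hB hAB)] at h1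
  simp only [Module.finrank_prod, Module.finrank_fintype_fun_eq_card, Module.finrank_self] at h1
  rw [Nat.card_eq_fintype_card, ← h1, ← Nat.card_coe_set_eq, Nat.card_eq_fintype_card]
  ring

lemma VX_finite {A B : Set (Cos g J)} (hf : (Xd A B).Finite) : Finite (VX A B) := by
  have : (Prod.fst '' (Xd A B)).Finite := hf.image _
  exact this.subset (fun x ⟨d, hd, h⟩ => ⟨d, hd, h⟩)

lemma rank_le {A B : Set (Cos g J)} (hf : (Xd A B).Finite) :
    Module.finrank ℤ (LinearMap.range (bd A B)) ≤ Nat.card (VX A B) := by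
  have := VX_finite hf
  have : Fintype (VX A B) := Fintype.ofFinite _
  have := Submodule.finrank_le (LinearMap.range (bd A B))
  rwa [Module.finrank_fintype_fun_eq_card, ← Nat.card_eq_fintype_card] at this

/-- X-connectivity of vertices -/
def XR (X : Set (DT g J)) : Cos g J → Cos g J → Prop := Relation.ReflTransGen (fun x y => ∃ d ∈ X, d.1 = x ∧ hd d = y)

lemma bd_single {A B : Set (Cos g J)} (e : EX A B) (x : VX A B) :
    bd A B (Pi.single e 1) x = ind (e.1.1 = x.1) - ind (hd e.1 = x.1) := by
  rw [bd_apply, ext_single, sum_zc_single]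

lemma rank_conn {A B : Set (Cos g J)} (hf : (Xd A B).Finite) (hne : (Xd A B).Nonempty)
    (hc : ∀ x y : VX A B, XR (Xd A B) x.1 y.1) :
    Module.finrank ℤ (LinearMap.range (bd A B)) + 1 = Nat.card (VX A B) := by
  have := VX_finite hf
  have : Fintype (VX A B) := Fintype.ofFinite _
  have : Finite (EX A B) := (hf.subset (fun d h => h.1) : {d | d ∈ Xd A B ∧ d.2.2 = true}.Finite)
  have : Fintype (EX A B) := Fintype.ofFinite _
  let S : (VX A B → ℤ) →ₗ[ℤ] ℤ := ∑ x, LinearMap.proj x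
  have hS : ∀ f, S f = ∑ x, f x := fun f => by simp [S, LinearMap.sum_apply]
  obtain ⟨d0, hd0⟩ := hne
  let x0 : VX A B := ⟨d0.1, d0, hd0, rfl⟩
  have hstep : ∀ e : EX A B, ∀ (h1 : _) (h2 : _), bd A B (Pi.single e 1) = Pi.single ⟨e.1.1, h1⟩ 1 - Pi.single ⟨hd e.1, h2⟩ 1 := by
    intro e h1 h2
    funext x
    rw [bd_single]
    simp only [Pi.sub_apply, Pi.single_apply, ind, Subtype.ext_iff]
    congr 1 <;> simp [eq_comm]
  have hkey : ∀ x y, XR (Xd A B) x y → ∀ (h1 : _) (h2 : _), (Pi.single (⟨x, h1⟩ : VX A B) (1:ℤ) - Pi.single ⟨y, h2⟩ 1 : VX A B → ℤ) ∈ LinearMap.range (bd A B) := by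
    intro x y h
    induction h with
    | refl => intro h1 h2; simp
    | @tail b c hab hbc ih =>
      intro h1 h2
      obtain ⟨d, hd', hb, hc'⟩ := hbc
      have h3 : ∃ d ∈ Xd A B, d.1 = b := ⟨d, hd', hb⟩
      have e1 := ih h1 h3
      have e2 : (Pi.single (⟨b, h3⟩ : VX A B) (1:ℤ) - Pi.single ⟨c, h2⟩ 1 : VX A B → ℤ) ∈ LinearMap.range (bd A B) := by
        subst hb hc'
        by_cases hp : d.2.2 = true
        · exact ⟨_, hstep ⟨d, hd', hp⟩ h3 h2⟩
        · refine ⟨- Pi.single ⟨rev d, Xd_rev.mpr hd', by simpa [rev_snd, linv] using hp⟩ 1, ?_⟩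
          rw [map_neg, hstep ⟨rev d, Xd_rev.mpr hd', by simpa [rev_snd, linv] using hp⟩ (by simpa using h2) (by simpa using h3)]
          simp only [hd_rev, rev_fst]
          abel
      have := Submodule.add_mem _ e1 e2
      simpa using this
  have hr : LinearMap.range (bd A B) = LinearMap.ker S := by
    apply le_antisymm
    · rw [LinearMap.range_le_ker_iff]
      apply LinearMap.pi_ext'
      intro e
      ext
      have h1 : ∃ d ∈ Xd A B, d.1 = e.1.1 := ⟨e.1, e.2.1, rfl⟩
      have h2 : ∃ d ∈ Xd A B, d.1 = hd e.1 := ⟨rev e.1, Xd_rev.mpr e.2.1, by simp⟩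
      change S (bd A B (Pi.single e 1)) = 0
      rw [hstep e h1 h2, hS]
      simp
    · intro f hfk
      rw [LinearMap.mem_ker, hS] at hfk
      have : f = ∑ x, f x • (Pi.single x (1:ℤ) - Pi.single x0 1 : VX A B → ℤ) := by
        simp only [smul_sub, Finset.sum_sub_distrib, ← Finset.sum_smul, hfk]
        funext y
        simp [Finset.sum_apply, Pi.single_apply]
      rw [this]
      exact Submodule.sum_mem _ (fun x _ => Submodule.smul_mem _ _ (hkey x.1 x0.1 (hc x x0) x.2 x0.2))
  have h1 := rn S
  have h2 : LinearMap.range S = ⊤ := by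
    rw [LinearMap.range_eq_top]
    intro k
    exact ⟨Pi.single x0 k, by rw [hS]; simp⟩
  rw [h2, finrank_top, Module.finrank_self, Module.finrank_fintype_fun_eq_card, ← hr] at h1
  rw [Nat.card_eq_fintype_card]; omega

lemma Lf_rl0 (hg : 0 < g) (x : Cos g J) : Lf (x, rl 0 (by omega)) = x := by
  simp [Lf, pre, rp_rl, act_one]

/-- if no cut dart at `x`, membership is constant around `x` -/
lemma around {A : Set (Cos g J)} {x : Cos g J} (h : ∀ s, (x, s) ∉ Cut A ∧ rev (x, s) ∉ Cut A) (s t : Letter g) :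
    Lf (x, s) ∈ A ↔ Lf (x, t) ∈ A := by
  have : ∀ s, (Lf (x, vs s) ∈ A) = (Lf (x, s) ∈ A) := by
    intro s
    have h1 := h s
    have h2 := Lf_rev (x, s)
    simp only [Cut, Set.mem_setOf_eq, rev_rev, h2] at h1
    apply propext; tauto
  rw [vs_const (fun s => Lf (x, s) ∈ A) this s t]

lemma VX_le (C : Ctx γ A₀) {A B : Set (Cos g J)} (hA : IsMin A₀ A) (hB : IsMin A₀ B) (hAB : A ⊆ B) :
    Nat.card (VX A B) ≤ (B \ A).ncard + 4 * (Cut A).ncard := by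
  have hcA := hA.near.cut C.cut
  have hcB := hB.near.cut C.cut
  have hD : (B \ A).Finite := hA.near.diff_finite hB.near
  have hg := C.hg
  set T : Set (Cos g J) := (B \ A) ∪ ((Prod.fst '' (Cut A) ∪ Prod.fst '' (rev ⁻¹' (Cut A))) ∪ (Prod.fst '' (Cut B) ∪ Prod.fst '' (rev ⁻¹' (Cut B)))) with hT
  have hrA := hcA.preimage (f := rev) rev_inj.injOn
  have hrB := hcB.preimage (f := rev) rev_inj.injOn
  have hTf : T.Finite := hD.union (((hcA.image _).union (hrA.image _)).union ((hcB.image _).union (hrB.image _)))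
  have h1 : {x : Cos g J | ∃ d ∈ Xd A B, d.1 = x} ⊆ T := by
    rintro x ⟨⟨x', s⟩, hd, rfl⟩
    by_contra hn
    simp only [hT, Set.mem_union, not_or, Set.mem_image, not_exists, not_and, Set.mem_preimage] at hn
    obtain ⟨hn0, ⟨hn1, hn2⟩, hn3, hn4⟩ := hn
    have a1 := around (A := A) (x := x') (fun s => ⟨fun h => hn1 _ h rfl, fun h => hn2 _ h rfl⟩)
    have a2 := around (A := B) (x := x') (fun s => ⟨fun h => hn3 _ h rfl, fun h => hn4 _ h rfl⟩)
    have b := Lf_rl0 (g := g) (J := J) (by omega) x'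
    have c1 := a1 s (rl 0 (by omega))
    have c2 := a2 s (rl 0 (by omega))
    have c3 := a1 (vs s) (rl 0 (by omega))
    have c4 := a2 (vs s) (rl 0 (by omega))
    rw [b] at c1 c2 c3 c4
    simp only [Xd, Set.mem_setOf_eq, Lf_rev, c1, c2, c3, c4, or_self] at hd
    exact hn0 ⟨hd.2, hd.1⟩
  have h2 := Set.ncard_le_ncard h1 hTf
  have e : (Cut B).ncard = (Cut A).ncard := hB.card_eq hA
  have h3 : T.ncard ≤ (B \ A).ncard + 4 * (Cut A).ncard := by
    have i1 := Set.ncard_image_le (f := Prod.fst) hcA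
    have i2 := Set.ncard_image_le (f := Prod.fst) hrA
    have i3 := Set.ncard_image_le (f := Prod.fst) hcB
    have i4 := Set.ncard_image_le (f := Prod.fst) hrB
    rw [ncard_preimage_rev] at i2 i4
    have j1 := Set.ncard_union_le (Prod.fst '' (Cut A)) (Prod.fst '' (rev ⁻¹' (Cut A)))
    have j2 := Set.ncard_union_le (Prod.fst '' (Cut B)) (Prod.fst '' (rev ⁻¹' (Cut B)))
    have j3 := Set.ncard_union_le (Prod.fst '' (Cut A) ∪ Prod.fst '' (rev ⁻¹' (Cut A))) (Prod.fst '' (Cut B) ∪ Prod.fst '' (rev ⁻¹' (Cut B)))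
    have j4 := Set.ncard_union_le (B \ A) ((Prod.fst '' (Cut A) ∪ Prod.fst '' (rev ⁻¹' (Cut A))) ∪ (Prod.fst '' (Cut B) ∪ Prod.fst '' (rev ⁻¹' (Cut B))))
    rw [← hT] at j4
    omega
  have h4 : Nat.card (VX A B) = {x : Cos g J | ∃ d ∈ Xd A B, d.1 = x}.ncard := rfl
  omega

lemma diff_bound (C : Ctx γ A₀) {A B : Set (Cos g J)} (hA : IsMin A₀ A) (hB : IsMin A₀ B) (hAB : A ⊆ B) :
    (B \ A).ncard ≤ 3 * (Cut A).ncard + 1 := by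
  have hcA := hA.near.cut C.cut
  have hcB := hB.near.cut C.cut
  have hD : (B \ A).Finite := hA.near.diff_finite hB.near
  have hf := Xd_finite hAB hcA hcB hD
  have h1 := Xd_ncard hAB hcA hcB hD
  have h2 := card_EX hf
  have h3 := rank_eq C hA hB hAB hf
  have h4 := rank_le (A := A) (B := B) hf
  have h5 := VX_le C hA hB hAB
  have e : (Cut B).ncard = (Cut A).ncard := hB.card_eq hA
  have hg := C.hg
  have h6 : 8 * (B \ A).ncard ≤ 4 * g * (B \ A).ncard := Nat.mul_le_mul_right _ (by omega)
  omega

lemma exists_least (C : Ctx γ A₀) : ∃ A, IsMin A₀ A ∧ ∀ B, IsMin A₀ B → A ⊆ B := by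
  obtain ⟨A₁, h₁⟩ := exists_min A₀
  let P : ℕ → Prop := fun n => ∃ A, IsMin A₀ A ∧ A ⊆ A₁ ∧ (A₁ \ A).ncard = n
  have hb : ∀ n, P n → n ≤ 3 * (Cut A₁).ncard + 1 := by
    rintro n ⟨A, hA, hs, rfl⟩
    rw [h₁.card_eq hA]
    exact diff_bound C hA h₁ hs
  have h0 : P 0 := ⟨A₁, h₁, subset_rfl, by simp⟩
  obtain ⟨A, hA, hs, hn⟩ := Nat.findGreatest_spec (P := P) (Nat.zero_le _) h0 (n := 3 * (Cut A₁).ncard + 1)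
  refine ⟨A, hA, fun B hB => ?_⟩
  have hI := hA.inter C hB
  have h2 : P (A₁ \ (A ∩ B)).ncard := ⟨_, hI, Set.inter_subset_left.trans hs, rfl⟩
  have h3 := Nat.le_findGreatest (hb _ h2) h2
  rw [← hn] at h3
  have h4 : A₁ \ A ⊆ A₁ \ (A ∩ B) := Set.diff_subset_diff_right Set.inter_subset_left
  have h5 := Set.eq_of_subset_of_ncard_le h4 h3 (hI.near.diff_finite h₁.near)
  intro x hx
  by_contra hxB
  have : x ∈ A₁ \ (A ∩ B) := ⟨hs hx, fun h => hxB h.2⟩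
  rw [← h5] at this
  exact this.2 hx

lemma exists_greatest (C : Ctx γ A₀) : ∃ A, IsMin A₀ A ∧ ∀ B, IsMin A₀ B → B ⊆ A := by
  obtain ⟨A, hA, h⟩ := exists_least C.symm
  refine ⟨Aᶜ, ?_, fun B hB => ?_⟩
  · have := hA.compl; rwa [compl_compl] at this
  · have := h _ hB.compl
    intro x hx hx'
    exact this hx' hx

end Euler
end

section
set_option linter.unusedSimpArgs false
set_option linter.deprecated false
set_option linter.unusedVariables false
open Classical
section Orbit

variable {g : ℕ} {J : Subgroup (Gamma g)}

lemma cut_step {B : Set (Cos g J)} {d : DT g J} (hd' : d ∈ Cut B) (hg : 0 < g) :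
    ∃ j, j < 4 * g ∧ (hd d, vs^[j] (nx d.2)) ∈ Cut B ∧ ∀ i ≤ j, Lf (hd d, vs^[i] (nx d.2)) ∈ B := by
  have h0 : Lf (hd d, nx d.2) ∈ B := by
    have := Lf_fnx d
    unfold fnx at this
    rw [this]; exact hd'.1
  have h1 : Lf (hd d, vs^[4 * g - 1] (nx d.2)) ∉ B := by
    have e : vs^[4 * g - 1] (nx d.2) = linv d.2 := by
      rw [nx, ← Function.iterate_succ_apply, show (4 * g - 1).succ = 4 * g by omega, vs_iter_period]
    rw [e]; exact hd'.2
  have hex : ∃ j, Lf (hd d, vs^[j] (nx d.2)) ∉ B := ⟨_, h1⟩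
  have hf := Nat.find_spec hex
  have hle : Nat.find hex ≤ 4 * g - 1 := Nat.find_le h1
  have hne : Nat.find hex ≠ 0 := by
    intro h; rw [h] at hf; exact hf h0
  refine ⟨Nat.find hex - 1, by omega, ⟨?_, ?_⟩, ?_⟩
  · by_contra hn; have := Nat.find_min' hex hn; omega
  · rw [Lf_rev]
    simp only
    rw [← Function.iterate_succ_apply' vs, show (Nat.find hex - 1).succ = Nat.find hex by omega]
    exact hf
  · intro i hi
    by_contra hn; have := Nat.find_min' hex hn; omega

def nxt (B : Set (Cos g J)) (d : DT g J) : DT g J :=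
  if h : ∃ j, j < 4 * g ∧ (hd d, vs^[j] (nx d.2)) ∈ Cut B ∧ ∀ i ≤ j, Lf (hd d, vs^[i] (nx d.2)) ∈ B then
    (hd d, vs^[Classical.choose h] (nx d.2)) else (hd d, d.2)

lemma nxt_spec {B : Set (Cos g J)} {d : DT g J} (hd' : d ∈ Cut B) (hg : 0 < g) :
    ∃ j, j < 4 * g ∧ nxt B d = (hd d, vs^[j] (nx d.2)) ∧ nxt B d ∈ Cut B ∧ ∀ i ≤ j, Lf (hd d, vs^[i] (nx d.2)) ∈ B := by
  have h := cut_step hd' hg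
  have hs := Classical.choose_spec h
  have e : nxt B d = (hd d, vs^[Classical.choose h] (nx d.2)) := by
    unfold nxt; rw [dif_pos h]
  exact ⟨_, hs.1, e, e ▸ hs.2.1, hs.2.2⟩

lemma nxt_fst (B : Set (Cos g J)) (d : DT g J) : (nxt B d).1 = hd d := by
  unfold nxt; split_ifs <;> rfl

lemma rev_inj' {d e : DT g J} (h1 : hd d = hd e) (h2 : d.2 = e.2) : d = e := by
  apply rev_inj
  simp [rev, h1, h2]

lemma nxt_inj {B : Set (Cos g J)} (hg : 0 < g) {d e : DT g J} (hd' : d ∈ Cut B) (he : e ∈ Cut B)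
    (h : nxt B d = nxt B e) : d = e := by
  have key : ∀ {d e : DT g J} {i j : ℕ}, d ∈ Cut B → hd d = hd e → vs^[i] (nx d.2) = vs^[j] (nx e.2) →
      (∀ k ≤ j, Lf (hd e, vs^[k] (nx e.2)) ∈ B) → i ≤ j → d = e := by
    intro d e i j h1 h2 h3 h4 hij
    obtain ⟨m, rfl⟩ := Nat.exists_eq_add_of_le hij
    rw [Function.iterate_add_apply] at h3
    have h5 := (vs_inj.iterate i) h3
    rcases m with _ | m
    · apply rev_inj' h2
      have h6 : linv d.2 = linv e.2 := vs_inj h5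
      have := congrArg linv h6
      simpa using this
    · rw [Function.iterate_succ_apply'] at h5
      have h6 : linv d.2 = vs^[m] (nx e.2) := vs_inj h5
      have h7 := h4 m (by omega)
      rw [← h6, ← h2] at h7
      exact absurd h7 h1.2
  obtain ⟨i, _, e1, _, f1⟩ := nxt_spec hd' hg
  obtain ⟨j, _, e2, _, f2⟩ := nxt_spec he hg
  rw [e1, e2] at h
  obtain ⟨h1, h2⟩ := Prod.mk.inj h
  rcases le_total i j with hij | hij
  · exact key hd' h1 h2 f2 hij
  · exact (key he h1.symm h2.symm f1 hij).symm

lemma orbit_wk (B : Set (Cos g J)) (d : DT g J) (m : ℕ) :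
    (List.range m).map (fun i => (nxt B)^[i] d) = wk d.1 (((List.range m).map (fun i => (nxt B)^[i] d)).map Prod.snd) ∧
    act d.1 (wordG (((List.range m).map (fun i => (nxt B)^[i] d)).map Prod.snd)) = ((nxt B)^[m] d).1 := by
  induction m with
  | zero => simp [wk, act_one]
  | succ m ih =>
    obtain ⟨h1, h2⟩ := ih
    simp only [List.range_succ, List.map_append, List.map_cons, List.map_nil] at *
    constructor
    · rw [wk_append, h2, ← h1]
      simp [wk]
    · rw [wordG_append, act_mul, h2, Function.iterate_succ_apply', nxt_fst]
      simp [hd]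

variable {γ : Gamma g} {A₀ : Set (Cos g J)}

lemma closed_pow (hJ : J = Subgroup.zpowers γ) {x : Gamma g} {w} (h : act (mkCos g J x) (wordG w) = mkCos g J x) :
    ∃ k : ℤ, x * wordG w * x⁻¹ = γ ^ k := by
  rw [act_mk] at h
  have h1 := mk_eq.mp h.symm
  rw [hJ, Subgroup.mem_zpowers_iff] at h1
  obtain ⟨k, hk⟩ := h1
  exact ⟨k, hk.symm⟩

lemma key2 (C : Ctx γ A₀) {B : Set (Cos g J)} (hB : IsMin A₀ B) : ∃ (x : Gamma g) (w : List (Letter g)),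
    w ≠ [] ∧ x * wordG w * x⁻¹ = γ ∧ w.length = (Cut B).ncard ∧
    (∀ d, d ∈ wk (mkCos g J x) w ↔ d ∈ Cut B) ∧
    List.IsChain (fun d e => e = nxt B d) (wk (mkCos g J x) w) ∧
    ∃ d d', (wk (mkCos g J x) w).getLast? = some d ∧ (wk (mkCos g J x) w).head? = some d' ∧ d' = nxt B d := by
  have hg := C.hg
  have hg0 : 0 < g := by omega
  have hfin := hB.near.cut C.cut
  obtain ⟨d0, hd0⟩ := exists_boundary hg0 (hB.near.infinite C.inf).nonempty (hB.compl.near.infinite C.cinf).nonempty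
  let f : Cut B → Cut B := fun d => ⟨nxt B d.1, (nxt_spec d.2 hg0).choose_spec.2.2.1⟩
  have hfi : Function.Injective f := fun d e h => Subtype.ext (nxt_inj hg0 d.2 e.2 (congrArg Subtype.val h))
  have : Finite (Cut B) := hfin
  have hper := hfi.mem_periodicPts (⟨d0, hd0⟩ : Cut B)
  set n := Function.minimalPeriod f ⟨d0, hd0⟩ with hn
  have hnpos : 0 < n := Function.minimalPeriod_pos_of_mem_periodicPts hper
  have hit : ∀ i, (nxt B)^[i] d0 = (f^[i] ⟨d0, hd0⟩).1 := by
    intro i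
    induction i with
    | zero => rfl
    | succ i ih => rw [Function.iterate_succ_apply', Function.iterate_succ_apply', ih]
  have hperiod : (nxt B)^[n] d0 = d0 := by
    rw [hit, Function.iterate_minimalPeriod]
  set O := (List.range n).map (fun i => (nxt B)^[i] d0) with hO
  obtain ⟨hw1, hw2⟩ := orbit_wk B d0 n
  rw [← hO] at hw1 hw2
  rw [hperiod] at hw2
  set w := O.map Prod.snd with hw
  obtain ⟨x, hx⟩ := mk_surj d0.1
  rw [← hx] at hw1 hw2
  have hnd : O.Nodup := by
    apply List.Nodup.map_on _ List.nodup_range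
    intro i hi j hj hij
    simp only [hit] at hij
    have h1 := Subtype.ext hij
    exact Function.iterate_injOn_Iio_minimalPeriod (f := f) (x := ⟨d0, hd0⟩) (by simpa [hn] using hi) (by simpa [hn] using hj) h1
  have hsub : ∀ d ∈ O, d ∈ Cut B := by
    intro d hd
    obtain ⟨i, _, rfl⟩ := List.mem_map.mp hd
    simp only [hit]; exact (f^[i] ⟨d0, hd0⟩).2
  have hlenO : O.length = n := by simp [hO]
  have hOsub : O.toFinset ⊆ hfin.toFinset := by
    intro d hd; simpa using hsub d (by simpa using hd)
  have hcardO : O.toFinset.card = n := by rw [List.toFinset_card_of_nodup hnd, hlenO]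
  have hcardB : hfin.toFinset.card = (Cut B).ncard := (Set.ncard_eq_toFinset_card _ hfin).symm
  have hnM : n ≤ (Cut B).ncard := by rw [← hcardO, ← hcardB]; exact Finset.card_le_card hOsub
  obtain ⟨k, hk⟩ := closed_pow C.hJ hw2
  obtain ⟨h, hh, hz⟩ := C.cls x w k hk
  rw [← hw1] at hz
  have hk1 : k = 1 := by
    by_contra hne
    rcases lt_or_ge k 1 with hlt | hge
    · -- complement list
      let O' := (hfin.toFinset \ O.toFinset).toList
      have hO'len : O'.length = (Cut B).ncard - n := by
        rw [Finset.length_toList, Finset.card_sdiff_of_subset hOsub, hcardO, hcardB]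
      have hcnt : ∀ l : List (DT g J), l.Nodup → ∀ d, (l.count d : ℤ) = ind (d ∈ l) := by
        intro l hl d
        by_cases hm : d ∈ l
        · rw [List.count_eq_one_of_mem hl hm, ind_true hm]; rfl
        · rw [List.count_eq_zero_of_not_mem hm, ind_false hm]; rfl
      have hsum : ∀ d, ind (d ∈ O') + ind (d ∈ O) = ind (d ∈ Cut B) := by
        intro d
        have e1 : d ∈ O' ↔ d ∈ Cut B ∧ d ∉ O := by simp [O']
        by_cases h1 : d ∈ O
        · rw [ind_true h1, ind_true (hsub d h1), ind_false (by tauto)]; rfl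
        · rw [ind_false h1]
          by_cases h2 : d ∈ Cut B
          · rw [ind_true h2, ind_true (by tauto)]; rfl
          · rw [ind_false h2, ind_false (by tauto)]; rfl
      have e1 : zc O' = Dc (I B) - zc O := by
        funext d
        simp only [Pi.sub_apply, Dc_I, zc]
        have a := hcnt O' (Finset.nodup_toList _) d
        have b := hcnt O' (Finset.nodup_toList _) (rev d)
        have c := hcnt O hnd d
        have c' := hcnt O hnd (rev d)
        have s1 := hsum d
        have s2 := hsum (rev d)
        linarith
      have hBA : (Function.support (I B - I A₀ - h)).Finite := by
        obtain ⟨K, hK, hK'⟩ := near_iff.mp hB.near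
        refine (hK.union hh).subset ?_
        intro y hy
        by_contra hc
        simp only [Set.mem_union, Function.mem_support, not_or, not_not] at hc
        apply hy
        simp only [Pi.sub_apply, hc.2, I, hK' y hc.1]; simp
      have e2 : zc O' = Dc ((1 - k) • I A₀ + (I B - I A₀ - h)) := by
        rw [e1, hz, ← Dc_sub]
        congr 1
        funext y
        simp only [Pi.sub_apply, Pi.add_apply, Pi.smul_apply, smul_eq_mul]; ring
      have h3 := (key1 C hB (show 1 ≤ 1 - k by omega) hBA e2).1
      rw [hO'len] at h3
      have h4 : (1:ℤ) * (Cut B).ncard ≤ (1 - k) * (Cut B).ncard := mul_le_mul_of_nonneg_right (by omega) (by positivity)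
      omega
    · have h3 := (key1 C hB hge hh hz).1
      rw [hlenO] at h3
      have h4 : (2:ℤ) * (Cut B).ncard ≤ k * (Cut B).ncard := mul_le_mul_of_nonneg_right (by omega) (by positivity)
      omega
  subst hk1
  have h3 := (key1 C hB le_rfl hh hz).1
  rw [hlenO] at h3
  have hnM' : n = (Cut B).ncard := by omega
  have hOeq : O.toFinset = hfin.toFinset := Finset.eq_of_subset_of_card_le hOsub (by rw [hcardO, hcardB, hnM'])
  refine ⟨x, w, ?_, by simpa using hk, by rw [hw, List.length_map, hlenO, hnM'], ?_, ?_, ?_⟩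
  · intro h; rw [hw, List.map_eq_nil_iff] at h; rw [h] at hlenO; simp at hlenO; omega
  · intro d
    rw [← hw1, ← List.mem_toFinset, hOeq]; simp
  · rw [← hw1, List.isChain_iff_getElem]
    intro i hi
    simp only [hO, List.getElem_map, List.getElem_range, Function.iterate_succ_apply']
  · rw [← hw1]
    refine ⟨(nxt B)^[n - 1] d0, d0, ?_, ?_, ?_⟩
    · obtain ⟨m, hm⟩ : ∃ m, n = m + 1 := ⟨n - 1, by omega⟩
      rw [hO, hm, List.range_succ]; simp
    · obtain ⟨m, hm⟩ : ∃ m, n = m + 1 := ⟨n - 1, by omega⟩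
      rw [hO, hm, List.range_succ_eq_map]; simp
    · rw [← Function.iterate_succ_apply' (nxt B), show (n - 1).succ = n by omega, hperiod]

lemma conjLen_eq (C : Ctx γ A₀) {B : Set (Cos g J)} (hB : IsMin A₀ B) : conjLen γ = (Cut B).ncard := by
  obtain ⟨x, w, _, h1, h2, _⟩ := key2 C hB
  apply le_antisymm
  · exact Nat.sInf_le ⟨w, h2, x, h1⟩
  · refine le_csInf (s := {n | ∃ w : List (Letter g), w.length = n ∧ ∃ x : Gamma g, x * wordG w * x⁻¹ = γ}) ⟨w.length, w, rfl, x, h1⟩ ?_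
    rintro n ⟨w', rfl, y, hy⟩
    obtain ⟨h, hh, hz⟩ := C.cls y w' 1 (by simpa using hy)
    have := (key1 C hB le_rfl hh hz).1
    rw [wk_length] at this
    omega

end Orbit
end

section
set_option linter.unusedSimpArgs false
set_option linter.deprecated false
set_option linter.unusedVariables false
open Classical
section Homotopy

variable {g : ℕ} {J : Subgroup (Gamma g)}

lemma walk_append {Y : Complex g} {u v x : Y.V} {a r : List Y.D} (h : Y.WalkFrom u v a) (h' : Y.WalkFrom v x r) :
    Y.WalkFrom u x (a ++ r) := by
  induction h with
  | nil => exact h'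
  | cons d h ih => exact Complex.WalkFrom.cons d (ih h')

lemma inSet_univ {Y : Complex g} (l : List Y.D) : Y.InSet Set.univ l := fun _ _ => trivial

lemma homot_append {Y : Complex g} {p u v x : Y.V} {a r c c' : List Y.D} (h : Y.Homotopic Set.univ Set.univ u v c c')
    (ha : Y.WalkFrom p u a) (hr : Y.WalkFrom v x r) :
    Y.Homotopic Set.univ Set.univ p x (a ++ c ++ r) (a ++ c' ++ r) := by
  have key : ∀ {b b' : List Y.D}, Y.elemMove Set.univ Set.univ b b' → Y.elemMove Set.univ Set.univ (a ++ b ++ r) (a ++ b' ++ r) := by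
    rintro b b' (⟨l1, l2, d, h1, rfl, rfl⟩ | ⟨l1, l2, d, h1, rfl, rfl⟩)
    · exact Or.inl ⟨a ++ l1, l2 ++ r, d, h1, by simp, by simp⟩
    · exact Or.inr ⟨a ++ l1, l2 ++ r, d, h1, by simp, by simp⟩
  induction h with
  | rel b b' h =>
    obtain ⟨h1, h2, _, _, h3⟩ := h
    refine Relation.EqvGen.rel _ _ ⟨walk_append (walk_append ha h1) hr, walk_append (walk_append ha h2) hr, inSet_univ _, inSet_univ _, ?_⟩
    exact h3.imp key key
  | refl => exact Relation.EqvGen.refl _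
  | symm _ _ _ ih => exact Relation.EqvGen.symm _ _ ih
  | trans _ _ _ _ _ ih1 ih2 => exact Relation.EqvGen.trans _ _ _ ih1 ih2

lemma wordG_rotate {l : List (Letter g)} (h : wordG l = 1) (n : ℕ) : wordG (l.rotate n) = 1 := by
  induction n with
  | zero => simpa
  | succ n ih =>
    rw [← List.rotate_rotate]
    generalize l.rotate n = l' at ih
    cases l' with
    | nil => simpa using ih
    | cons a t =>
      simp only [List.rotate_cons_succ, List.rotate_zero, wordG_append, wordG_cons, wordG_nil, mul_one] at ih ⊢
      rw [mul_eq_one_iff_eq_inv] at ih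
      rw [ih]; simp

lemma wordOf_revW (l : List (cover g J).D) : (cover g J).wordOf ((cover g J).revW l) = invW ((cover g J).wordOf l) := by
  unfold Complex.wordOf Complex.revW invW
  rw [List.map_reverse, List.map_map, List.map_map]
  rfl

lemma homot_word {u v : (cover g J).V} {c c' : List (cover g J).D} (h : (cover g J).Homotopic Set.univ Set.univ u v c c') :
    wordG ((cover g J).wordOf c) = wordG ((cover g J).wordOf c') := by
  have key : ∀ {b b' : List (cover g J).D}, (cover g J).elemMove Set.univ Set.univ b b' →
      wordG ((cover g J).wordOf b) = wordG ((cover g J).wordOf b') := by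
    rintro b b' (⟨l1, l2, d, h1, rfl, rfl⟩ | ⟨l1, l2, d, ⟨f, _, n, h1⟩, rfl, rfl⟩)
    · have : (cover g J).dLet ((cover g J).dRev d) = linv ((cover g J).dLet d) := rfl
      simp [Complex.wordOf, this, letterG_linv]
    · have h0 : wordG ((cover g J).wordOf (((cover g J).bdry f).rotate n)) = 1 := by
        have : (cover g J).wordOf (((cover g J).bdry f).rotate n) = (relatorWord g).rotate n := by
          have hb : (cover g J).wordOf ((cover g J).bdry f) = relatorWord g :=
            (congrArg (List.map _) (bdry_eq (J := J) f)).trans (wordOf_wk _ _)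
          unfold Complex.wordOf at hb ⊢
          rw [List.map_rotate, hb]
        rw [this]; exact wordG_rotate wordG_relator n
      have h2 : wordG ((cover g J).wordOf d) = 1 := by
        rcases h1 with rfl | rfl
        · exact h0
        · rw [wordOf_revW, wordG_invW, h0, inv_one]
      have e : (cover g J).wordOf (l1 ++ d ++ l2) = (cover g J).wordOf l1 ++ (cover g J).wordOf d ++ (cover g J).wordOf l2 := by
        simp [Complex.wordOf]
      have e' : (cover g J).wordOf (l1 ++ l2) = (cover g J).wordOf l1 ++ (cover g J).wordOf l2 := by
        simp [Complex.wordOf]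
      rw [e, e', wordG_append, wordG_append, wordG_append, h2, mul_one]
  induction h with
  | rel b b' h =>
    obtain ⟨h1, h2, _, _, h3⟩ := h
    rcases h3 with h3 | h3
    · exact key h3
    · exact (key h3).symm
  | refl => rfl
  | symm _ _ _ ih => exact ih.symm
  | trans _ _ _ _ _ ih1 ih2 => exact ih1.trans ih2

lemma word_homot {w w' : List (Letter g)} (h : wordG w = wordG w') (u : Cos g J) :
    (cover g J).Homotopic Set.univ Set.univ u (act u (wordG w)) ((wk u w).map toD) ((wk u w').map toD) := by
  let R : List (Letter g) → List (Letter g) → Prop := fun w w' => wordG w = wordG w' ∧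
    ∀ u : Cos g J, (cover g J).Homotopic Set.univ Set.univ u (act u (wordG w)) ((wk u w).map toD) ((wk u w').map toD)
  have hR : R w w' := by
    apply cong_words R _ _ _ _ h
    · refine ⟨fun w => ⟨rfl, fun u => Relation.EqvGen.refl _⟩, ?_, ?_⟩
      · rintro w w' ⟨h1, h2⟩
        exact ⟨h1.symm, fun u => h1 ▸ Relation.EqvGen.symm _ _ (h2 u)⟩
      · rintro a b c ⟨h1, h2⟩ ⟨h3, h4⟩
        refine ⟨h1.trans h3, fun u => Relation.EqvGen.trans _ _ _ (h2 u) ?_⟩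
        have := h4 u
        rw [← h1] at this; exact this
    · rintro a b c d ⟨h1, h2⟩ ⟨h3, h4⟩
      refine ⟨by simp [h1, h3], fun u => ?_⟩
      rw [wk_append, wk_append, List.map_append, List.map_append, wordG_append, act_mul]
      have e1 := homot_append (h2 u) (Complex.WalkFrom.nil _) (walkFrom_wk (act u (wordG a)) c)
      have e2 := homot_append (h4 (act u (wordG a))) (walkFrom_wk u b |> (h1 ▸ ·)) (Complex.WalkFrom.nil _)
      simp only [List.nil_append, List.append_nil] at e1 e2
      rw [← h1]
      exact Relation.EqvGen.trans _ _ _ e1 e2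
    · intro s
      refine ⟨by simp [letterG_linv], fun u => ?_⟩
      have e1 := walkFrom_wk (J := J) u [s, linv s]
      have e2 : act u (wordG [s, linv s]) = u := by simp [letterG_linv, act_one]
      refine Relation.EqvGen.rel _ _ ⟨e1, ?_, inSet_univ _, inSet_univ _, Or.inr (Or.inl ⟨[], [], toD (u, s), trivial, ?_, ?_⟩)⟩
      · rw [e2]; exact Complex.WalkFrom.nil _
      · rfl
      · rw [dRev_toD]; rfl
    · refine ⟨by simp [wordG_relator], fun u => ?_⟩
      have e1 := walkFrom_wk (J := J) u (relatorWord g)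
      have e2 : act u (wordG (relatorWord g)) = u := by rw [wordG_relator, act_one]
      refine Relation.EqvGen.rel _ _ ⟨e1, ?_, inSet_univ _, inSet_univ _, Or.inr (Or.inr ⟨[], [], (cover g J).bdry u, ⟨u, trivial, 0, Or.inl (by simp)⟩, ?_, ?_⟩)⟩
      · rw [e2]; exact Complex.WalkFrom.nil _
      · rfl
      · rw [bdry_eq]; simp
  exact hR.2 u

lemma wk_eq_base {u v : Cos g J} {w w' : List (Letter g)} (h : (wk u w).map toD = (wk v w').map toD) (hne : w ≠ []) :
    u = v ∧ w = w' := by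
  have h1 := List.map_injective_iff.mpr toD_inj h
  have h2 := congrArg (List.map Prod.snd) h1
  rw [wk_map_snd, wk_map_snd] at h2
  refine ⟨?_, h2⟩
  subst h2
  cases w with
  | nil => exact absurd rfl hne
  | cons a t =>
    simp only [wk, List.cons.injEq] at h1
    exact congrArg Prod.fst h1.1

lemma wordG_replicate (w : List (Letter g)) (n : ℕ) : wordG ((List.replicate n w).flatten) = wordG w ^ n := by
  induction n with
  | zero => simp
  | succ n ih => rw [List.replicate_succ, List.flatten_cons, wordG_append, ih, pow_succ']

variable {γ : Gamma g} {A₀ : Set (Cos g J)}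

lemma pow_word (C : Ctx γ A₀) {B : Set (Cos g J)} (hB : IsMin A₀ B) (k : ℤ) :
    ∃ (y : Gamma g) (w : List (Letter g)), y * wordG w * y⁻¹ = γ ^ k ∧ w.length = k.natAbs * (Cut B).ncard := by
  obtain ⟨y, w, _, h1, h2, _⟩ := key2 C hB
  have hc : ∀ (z : Gamma g) (n : ℕ), y * z ^ n * y⁻¹ = (y * z * y⁻¹) ^ n := fun z n => by rw [conj_pow]
  rcases Int.natAbs_eq k with h | h
  · refine ⟨y, (List.replicate k.natAbs w).flatten, ?_, by simp [h2]⟩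
    rw [wordG_replicate, hc, h1]
    conv_rhs => rw [h]
    rw [zpow_natCast]
  · refine ⟨y, (List.replicate k.natAbs (invW w)).flatten, ?_, by simp [h2, invW]⟩
    rw [wordG_replicate, hc, wordG_invW]
    have : y * (wordG w)⁻¹ * y⁻¹ = γ⁻¹ := by rw [← h1]; group
    rw [this]
    conv_rhs => rw [h]
    rw [zpow_neg, zpow_natCast, inv_pow]

lemma wk_conj (v y : Cos g J) (q w' : List (Letter g)) (hqv : act v (wordG q) = y)
    (hcl' : act y (wordG w') = y) :
    (wk v (q ++ w' ++ invW q)).map toD = (wk v q).map toD ++ (wk y w').map toD ++ (cover g J).revW ((wk v q).map toD) := by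
  rw [wk_append, wk_append, wordG_append, act_mul, hqv, hcl', ← hqv, wk_invW, hqv, List.map_append, List.map_append]
  rw [revW_map]

lemma good_mem (C : Ctx γ A₀) {c : List (cover g J).D} (hc : (cover g J).GoodCycle c) {d : DT g J} (hd : toD d ∈ c) :
    ∃ B, IsMin A₀ B ∧ (d ∈ Cut B ∨ rev d ∈ Cut B) := by
  obtain ⟨⟨hne, v, hw⟩, ⟨_, _, hess⟩, hsh⟩ := hc
  obtain ⟨w, rfl, hv⟩ := walkFrom_iff.mp hw
  obtain ⟨x, hx⟩ := mk_surj (v : Cos g J)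
  have hcl : act (mkCos g J x) (wordG w) = mkCos g J x := by rw [hx]; exact hv.symm
  obtain ⟨k, hk⟩ := closed_pow C.hJ hcl
  obtain ⟨h, hh, hz⟩ := C.cls x w k hk
  have hk0 : k ≠ 0 := by
    rintro rfl
    apply hess
    refine ⟨v, hw, ?_⟩
    have h1 : wordG w = wordG [] := by
      have : wordG w = x⁻¹ * γ ^ (0:ℤ) * x := by rw [← hk]; group
      rw [this]; simp
    have h2 := word_homot (J := J) h1 v
    rw [← hv] at h2
    exact h2
  obtain ⟨A, hA⟩ := exists_min A₀
  obtain ⟨y, w', hy, hlen⟩ := pow_word C hA k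
  obtain ⟨q, hq⟩ := wordG_surj (x⁻¹ * y)
  have hqv : act (v : Cos g J) (wordG q) = mkCos g J y := by
    rw [← hx, hq, act_mk]; congr 1; group
  have hcl' : act (mkCos g J y) (wordG w') = mkCos g J y := by
    rw [act_mk]
    symm
    rw [mk_eq, hy, C.hJ]
    exact Subgroup.zpow_mem_zpowers γ k
  have hle : (wk (v : Cos g J) w).length ≤ k.natAbs * (Cut A).ncard := by
    have h1 := hsh ((wk (mkCos g J y) w').map toD) ⟨v, mkCos g J y, (wk v q).map toD, hw, ?_, ?_, inSet_univ _, inSet_univ _, inSet_univ _, ?_⟩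
    · simp only [List.length_map, wk_length, hlen] at h1 ⊢; exact h1
    · have := walkFrom_wk (mkCos g J y) w'
      rwa [hcl'] at this
    · have := walkFrom_wk v q
      rwa [hqv] at this
    · have e : wordG w = wordG (q ++ w' ++ invW q) := by
        rw [wordG_append, wordG_append, wordG_invW, hq]
        have e1 : wordG w = x⁻¹ * γ ^ k * x := by rw [← hk]; group
        rw [e1, ← hy]; group
      have h2 := word_homot (J := J) e v
      have h3 := wk_conj (J := J) v _ q w' hqv hcl'
      rw [← hv, h3] at h2
      exact h2
  rw [hx] at hz
  have hd' : d ∈ wk (v : Cos g J) w := by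
    obtain ⟨e, he, h⟩ := List.mem_map.mp hd
    rwa [← toD_inj h]
  rcases lt_or_gt_of_ne hk0 with hlt | hgt
  · have hz' : zc (((wk (v : Cos g J) w).map rev).reverse) = Dc ((-k) • I A₀ + (-h)) := by
      rw [zc_map_rev, hz]
      funext e; simp [Dc]; ring
    have h1 := (key1 C hA (show 1 ≤ -k by omega) (by simpa using hh) hz').2 ?_ (rev d) ?_
    · obtain ⟨B, hB, h⟩ := h1
      exact ⟨B, hB, Or.inr h⟩
    · rw [show -k = (k.natAbs : ℤ) by omega]
      simp only [List.length_reverse, List.length_map]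
      exact_mod_cast hle
    · simp only [List.mem_reverse, List.mem_map]; exact ⟨d, hd', rfl⟩
  · have h1 := (key1 C hA (show 1 ≤ k by omega) hh hz).2 ?_ d hd'
    · obtain ⟨B, hB, h⟩ := h1
      exact ⟨B, hB, Or.inl h⟩
    · rw [show k = (k.natAbs : ℤ) by omega]
      exact_mod_cast hle

lemma min_good (C : Ctx γ A₀) {B : Set (Cos g J)} (hB : IsMin A₀ B) :
    ∃ c, (cover g J).GoodCycle c ∧ ∀ d ∈ Cut B, toD d ∈ c := by
  obtain ⟨x, w, hne, h1, h2, h3, _⟩ := key2 C hB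
  have hcl : act (mkCos g J x) (wordG w) = mkCos g J x := by
    rw [act_mk]
    symm
    rw [mk_eq, h1, C.hJ]
    exact Subgroup.mem_zpowers γ
  have hwk := walkFrom_wk (mkCos g J x) w
  rw [hcl] at hwk
  have hne' : (wk (mkCos g J x) w).map toD ≠ [] := by
    intro h
    have := congrArg List.length h
    simp [wk_length] at this
    exact hne this
  refine ⟨(wk (mkCos g J x) w).map toD, ⟨⟨hne', _, hwk⟩, ⟨⟨hne', _, hwk⟩, inSet_univ _, ?_⟩, ?_⟩, ?_⟩
  · rintro ⟨v, _, hh⟩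
    have := homot_word hh
    rw [wordOf_wk] at this
    have e : wordG w = 1 := this
    rw [e] at h1
    exact C.ne (by rw [← h1]; group)
  · rintro c' ⟨u, v, q, hu, hv, hq, _, _, _, hh⟩
    obtain ⟨w1, e1, _⟩ := walkFrom_iff.mp hu
    obtain ⟨rfl, rfl⟩ := wk_eq_base (v := (u : Cos g J)) e1 hne
    obtain ⟨q', rfl, hq'⟩ := walkFrom_iff.mp hq
    obtain ⟨w', rfl, _⟩ := walkFrom_iff.mp hv
    have h4 := homot_word hh
    rw [wordOf_wk] at h4
    have e : ∀ a b c : List (cover g J).D, (cover g J).wordOf (a ++ b ++ c) = (cover g J).wordOf a ++ (cover g J).wordOf b ++ (cover g J).wordOf c := by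
      intro a b c; simp [Complex.wordOf]
    have e9 : (cover g J).wordOf (List.map toD (wk (v : Cos g J) w')) = w' := wordOf_wk _ _
    rw [e, wordOf_revW, wordOf_wk, e9, wordG_append, wordG_append, wordG_invW] at h4
    have h5 : (x * wordG q') * wordG w' * (x * wordG q')⁻¹ = γ ^ (1:ℤ) := by
      rw [zpow_one, ← h1, h4]; group
    obtain ⟨h, hh', hz⟩ := C.cls _ _ _ h5
    have h6 := (key1 C hB le_rfl hh' hz).1
    simp only [List.length_map, wk_length] at h6 ⊢
    have e8 : (wk (v : Cos g J) w').length = w'.length := wk_length _ _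
    have e10 : w.length ≤ w'.length := by omega
    exact e10.trans_eq e8.symm
  · intro d hd
    exact List.mem_map.mpr ⟨d, (h3 d).mpr hd, rfl⟩

lemma coreE1_iff (C : Ctx γ A₀) (d : DT g J) :
    (toD d).1 ∈ coreE1 g J ↔ ∃ B, IsMin A₀ B ∧ (d ∈ Cut B ∨ rev d ∈ Cut B) := by
  constructor
  · rintro ⟨c, hc, b, hb⟩
    obtain ⟨e, he⟩ : ∃ e : DT g J, toD e = ((toD d).1, b) := ⟨ofD _, toD_ofD _⟩
    rw [← he] at hb
    obtain ⟨B, hB, h⟩ := good_mem C hc hb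
    have : (toD e).1 = (toD d).1 := by rw [he]
    rcases toD_fst_eq this with rfl | rfl
    · exact ⟨B, hB, h⟩
    · rw [rev_rev] at h; exact ⟨B, hB, h.symm⟩
  · rintro ⟨B, hB, h⟩
    obtain ⟨c, hc, hm⟩ := min_good C hB
    rcases h with h | h
    · exact ⟨c, hc, (toD d).2, hm d h⟩
    · refine ⟨c, hc, (toD (rev d)).2, ?_⟩
      rw [← toD_fst_rev]; exact hm _ h

end Homotopy
end

section
set_option linter.unusedSimpArgs false
set_option linter.deprecated false
set_option linter.unusedVariables false
open Classical
section Ident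

variable {g : ℕ} {J : Subgroup (Gamma g)} {γ : Gamma g} {A₀ : Set (Cos g J)}

/-- the forward dart of an edge -/
def fwd (e : (cover g J).E) : DT g J := ofD (e, true)

lemma toD_fwd (e : (cover g J).E) : (toD (fwd e)).1 = e := by
  unfold fwd; rw [toD_ofD]

lemma fwd_fst (e : (cover g J).E) : (fwd e).1 = (cover g J).src e := rfl

lemma hd_fwd (e : (cover g J).E) : hd (fwd e) = (cover g J).dst e := by
  rw [← dHead_toD]; unfold fwd; rw [toD_ofD]; rfl

lemma fwd_or (d : DT g J) : fwd (toD d).1 = d ∨ fwd (toD d).1 = rev d :=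
  toD_fst_eq (toD_fwd _)

/-- which zone a cell belongs to -/
def zn (Z : Set (Cos g J)) (c : (cover g J).Cell) : Prop :=
  match c with
  | Sum.inl v => (v : Cos g J) ∈ Z
  | Sum.inr (Sum.inl e) => Lf (fwd e) ∈ Z
  | Sum.inr (Sum.inr f) => (f : Cos g J) ∈ Z

/-- saturated sets -/
def Sat (Z : Set (Cos g J)) : Prop := ∀ d : DT g J, (toD d).1 ∉ coreE1 g J → (Lf d ∈ Z ↔ Lf (rev d) ∈ Z)

lemma Sat.fwd {Z : Set (Cos g J)} (h : Sat Z) (d : DT g J) (hd : (toD d).1 ∉ coreE1 g J) : Lf (fwd (toD d).1) ∈ Z ↔ Lf d ∈ Z := by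
  rcases fwd_or d with h1 | h1 <;> rw [h1]
  exact (h d hd).symm

lemma not_coreE1 {v : Cos g J} (hv : v ∉ coreV1 g J) {d : DT g J} (hd' : d.1 = v) : (toD d).1 ∉ coreE1 g J := by
  intro h
  apply hv
  refine ⟨_, h, ?_⟩
  rcases fwd_or d with h1 | h1
  · left; rw [← fwd_fst, h1]; exact hd'
  · right; rw [← hd_fwd, h1, hd_rev]; exact hd'

lemma Sat.around {Z : Set (Cos g J)} (h : Sat Z) (hg : 0 < g) {v : Cos g J} (hv : v ∉ coreV1 g J) {d : DT g J} (hd' : d.1 = v) :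
    Lf d ∈ Z ↔ v ∈ Z := by
  have h1 : ∀ s, (v, s) ∉ Cut Z ∧ rev (v, s) ∉ Cut Z := by
    intro s
    have := h (v, s) (not_coreE1 hv rfl)
    constructor
    · intro h'; exact h'.2 (this.mp h'.1)
    · intro h'; have h2 := h'.2; rw [rev_rev] at h2; exact h2 (this.mpr h'.1)
  have h2 := CS.around h1 d.2 (rl 0 (by omega))
  rw [Lf_rl0 hg] at h2
  rw [← h2, ← hd']

lemma Sat.inc {Z : Set (Cos g J)} (h : Sat Z) (hg : 0 < g) {a b : (cover g J).Cell} (hab : (cover g J).inc0 a b)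
    (ha : ¬ (cover g J).inSub (coreS1 g J) a) (hb : ¬ (cover g J).inSub (coreS1 g J) b) : zn Z a ↔ zn Z b := by
  rcases a with v | e | f <;> rcases b with v' | e' | f' <;> try exact hab.elim
  · rcases hab with h1 | h1
    · exact (h.around hg (v := v) ha (d := CS.fwd e') h1).symm
    · have h2 : (rev (CS.fwd e')).1 = v := by rw [← h1, ← hd_fwd]; rfl
      have h3 := h.around hg (v := v) ha h2
      have h4 := h (CS.fwd e') (by rw [toD_fwd]; exact hb)
      exact (h4.trans h3).symm
  · obtain ⟨d, hd, hv⟩ := hab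
    rw [← toD_ofD d] at hd
    have h5 : toD (ofD d) ∈ (wk (f' : Cos g J) (relatorWord g)).map toD := bdry_eq (J := J) f' ▸ hd
    obtain ⟨d', hd', he⟩ := List.mem_map.mp h5
    have h6 := toD_inj he
    replace hd' : Lf d' = (f' : Cos g J) := mem_bdry.mp hd'
    rw [h6] at hd'
    have := h.around hg (v := v) ha (d := ofD d) hv
    rw [hd'] at this
    exact this.symm
  · obtain ⟨bb, hd⟩ := hab
    have h5 : (e, bb) ∈ (wk (f' : Cos g J) (relatorWord g)).map toD := bdry_eq (J := J) f' ▸ hd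
    obtain ⟨d', hd', he⟩ := List.mem_map.mp h5
    replace hd' : Lf d' = (f' : Cos g J) := mem_bdry.mp hd'
    have h7 : (toD d').1 = e := by rw [he]
    have h8 := h.fwd d' (by rw [h7]; exact ha)
    rw [h7, hd'] at h8
    exact h8

lemma Sat.reach {Z : Set (Cos g J)} (h : Sat Z) (hg : 0 < g) {a b : (cover g J).Cell}
    (hab : (cover g J).reachS (coreS1 g J) a b) : zn Z a ↔ zn Z b := by
  induction hab with
  | refl => exact Iff.rfl
  | tail _ h1 ih =>
    rw [ih]
    rcases h1 with ⟨h1 | h1, h2, h3⟩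
    · exact h.inc hg h1 h2 h3
    · exact (h.inc hg h1 h3 h2).symm

lemma face_not (f : (cover g J).F) : ¬ (cover g J).inSub (coreS1 g J) ((cover g J).fCell f) := fun h => h

lemma mem_bdry' (d : DT g J) : toD d ∈ (cover g J).bdry (Lf d) := by
  have h : toD d ∈ (wk (Lf d) (relatorWord g)).map toD := List.mem_map.mpr ⟨d, mem_bdry.mpr rfl, rfl⟩
  rw [← bdry_eq] at h; exact h

lemma inc_ef (d : DT g J) : (cover g J).inc0 ((cover g J).eCell (toD d).1) ((cover g J).fCell (Lf d)) :=
  ⟨(toD d).2, mem_bdry' d⟩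

lemma reach_face (hg : 0 < g) (c : (cover g J).Cell) (hc : ¬ (cover g J).inSub (coreS1 g J) c) :
    ∃ f, (cover g J).reachS (coreS1 g J) c ((cover g J).fCell f) := by
  rcases c with v | e | f
  · refine ⟨Lf ((v : Cos g J), rl 0 (by omega)), Relation.ReflTransGen.single ⟨Or.inl ?_, hc, face_not _⟩⟩
    exact ⟨_, mem_bdry' _, dTail_toD _⟩
  · refine ⟨Lf (fwd e), Relation.ReflTransGen.single ⟨Or.inl ?_, hc, face_not _⟩⟩
    have := inc_ef (fwd e)
    rw [toD_fwd] at this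
    exact this
  · exact ⟨f, Relation.ReflTransGen.refl⟩

lemma reach_cross {c : (cover g J).Cell} {d : DT g J} (hd : (toD d).1 ∉ coreE1 g J)
    (h : (cover g J).reachS (coreS1 g J) c ((cover g J).fCell (Lf d))) :
    (cover g J).reachS (coreS1 g J) c ((cover g J).fCell (Lf (rev d))) := by
  refine (h.tail ⟨Or.inr (inc_ef d), face_not _, hd⟩).tail ⟨Or.inl ?_, hd, face_not _⟩
  rw [← toD_fst_rev]; exact inc_ef _

lemma zone_inf (C : Ctx γ A₀) {A : Set (Cos g J)} (hA : IsMin A₀ A)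
    (hno : ∀ d, Lf d ∈ A → Lf (rev d) ∈ A → (toD d).1 ∉ coreE1 g J) (hs : Sat A)
    {c : (cover g J).Cell} (hc : ¬ (cover g J).inSub (coreS1 g J) c) (hz : zn A c) :
    ¬ {f : (cover g J).F | (cover g J).reachS (coreS1 g J) c ((cover g J).fCell f)}.Finite := by
  intro hf
  have hg : 0 < g := by have := C.hg; omega
  have h1 := IsMin.no_piece C hA (K := {f : Cos g J | (cover g J).reachS (coreS1 g J) c ((cover g J).fCell f)}) hf
    (fun f hf => (hs.reach hg hf).mp hz) (by
      intro d hd hA'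
      have h2 : Lf d ∈ A := (hs.reach hg hd).mp hz
      exact reach_cross (hno d h2 hA') hd)
  obtain ⟨f, hf'⟩ := reach_face hg c hc
  have : (f : Cos g J) ∈ (∅ : Set (Cos g J)) := h1 ▸ hf'
  exact this

/-- extremal minimal cuts -/
structure Ext (A₀ A B : Set (Cos g J)) : Prop where
  hA : IsMin A₀ A
  hB : IsMin A₀ B
  le : ∀ B', IsMin A₀ B' → A ⊆ B' ∧ B' ⊆ B

variable {A B : Set (Cos g J)}

lemma Ext.AB (E : Ext A₀ A B) : A ⊆ B := (E.le B E.hB).1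

lemma Ext.noA (C : Ctx γ A₀) (E : Ext A₀ A B) (d : DT g J) (h1 : Lf d ∈ A) (h2 : Lf (rev d) ∈ A) : (toD d).1 ∉ coreE1 g J := by
  rw [coreE1_iff C]
  rintro ⟨B', hB', h | h⟩
  · exact h.2 ((E.le _ hB').1 h2)
  · have := h.2; rw [rev_rev] at this; exact this ((E.le _ hB').1 h1)

lemma Ext.noB (C : Ctx γ A₀) (E : Ext A₀ A B) (d : DT g J) (h1 : Lf d ∈ Bᶜ) (h2 : Lf (rev d) ∈ Bᶜ) : (toD d).1 ∉ coreE1 g J := by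
  rw [coreE1_iff C]
  rintro ⟨B', hB', h | h⟩
  · exact h1 ((E.le _ hB').2 h.1)
  · exact h2 ((E.le _ hB').2 h.1)

lemma sat_min (C : Ctx γ A₀) (hA : IsMin A₀ A) : Sat A := by
  intro d hd
  rw [coreE1_iff C] at hd
  by_contra hn
  apply hd
  refine ⟨A, hA, ?_⟩
  by_cases h1 : Lf d ∈ A
  · left; exact ⟨h1, by tauto⟩
  · right; exact ⟨by tauto, by rwa [rev_rev]⟩

lemma Ext.satD (C : Ctx γ A₀) (E : Ext A₀ A B) : Sat (B \ A) := by
  intro d hd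
  have h1 := sat_min C E.hA d hd
  have h2 := sat_min C E.hB d hd
  simp only [Set.mem_diff]; tauto

lemma sat_compl {Z : Set (Cos g J)} (h : Sat Z) : Sat Zᶜ := by
  intro d hd
  have h1 := h d hd
  simp only [Set.mem_compl_iff]; tauto

lemma zn_diff (c : (cover g J).Cell) : zn (B \ A) c ↔ zn B c ∧ ¬ zn A c := by
  rcases c with v | e | f <;> exact Iff.rfl

lemma zn_compl (c : (cover g J).Cell) : zn (Bᶜ) c ↔ ¬ zn B c := by
  rcases c with v | e | f <;> exact Iff.rfl

lemma coreFin_iff (C : Ctx γ A₀) (E : Ext A₀ A B) (c : (cover g J).Cell) :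
    coreFin g J c ↔ ¬ (cover g J).inSub (coreS1 g J) c ∧ zn (B \ A) c := by
  have hg : 0 < g := by have := C.hg; omega
  unfold coreFin
  refine and_congr_right fun hc => ⟨fun hf => ?_, fun hz => ?_⟩
  · by_contra hn
    rw [zn_diff] at hn
    by_cases h1 : zn A c
    · exact zone_inf C E.hA (E.noA C) (sat_min C E.hA) hc h1 hf
    · exact zone_inf C.symm E.hB.compl (E.noB C) (sat_compl (sat_min C E.hB)) hc ((zn_compl c).mpr (by tauto)) hf
  · have hD : (B \ A).Finite := E.hA.near.diff_finite E.hB.near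
    exact Set.Finite.subset (s := B \ A) hD (fun f hf => ((E.satD C).reach hg hf).mp hz)

lemma coreE1_X (C : Ctx γ A₀) (E : Ext A₀ A B) {d : DT g J} (h : (toD d).1 ∈ coreE1 g J) : d ∈ Xd A B := by
  rw [coreE1_iff C] at h
  obtain ⟨B', hB', h⟩ := h
  obtain ⟨h1, h2⟩ := E.le B' hB'
  rcases h with h | h
  · exact ⟨Or.inr fun h' => h.2 (h1 h'), Or.inl (h2 h.1)⟩
  · have h3 := h.2; rw [rev_rev] at h3
    exact ⟨Or.inl fun h' => h3 (h1 h'), Or.inr (h2 h.1)⟩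

lemma X_D (C : Ctx γ A₀) (E : Ext A₀ A B) {d : DT g J} (h : d ∈ Xd A B) (hn : (toD d).1 ∉ coreE1 g J) : Lf d ∈ B \ A := by
  have h1 := sat_min C E.hA d hn
  have h2 := sat_min C E.hB d hn
  obtain ⟨h3, h4⟩ := h
  constructor <;> tauto

lemma D_X {d : DT g J} (h : Lf d ∈ B \ A) : d ∈ Xd A B := ⟨Or.inl h.2, Or.inl h.1⟩

lemma ne_bot (C : Ctx γ A₀) : J ≠ ⊥ := by
  rw [C.hJ]; intro h; exact C.ne (Subgroup.zpowers_eq_bot.mp h)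

lemma sF_eq (C : Ctx γ A₀) (E : Ext A₀ A B) : (coreSub g J).sF = (B \ A : Set (Cos g J)) := by
  unfold coreSub; rw [if_neg (ne_bot C)]
  ext f
  show coreFin g J _ ↔ _
  rw [coreFin_iff C E]
  exact ⟨fun h => h.2, fun h => ⟨face_not _, h⟩⟩

lemma sE_iff (C : Ctx γ A₀) (E : Ext A₀ A B) (d : DT g J) : (toD d).1 ∈ (coreSub g J).sE ↔ d ∈ Xd A B := by
  unfold coreSub; rw [if_neg (ne_bot C)]
  show (toD d).1 ∈ coreE1 g J ∨ coreFin g J _ ↔ _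
  rw [coreFin_iff C E]
  have e : zn (B \ A) ((cover g J).eCell (toD d).1) = (Lf (fwd (toD d).1) ∈ B \ A) := rfl
  rw [e]
  by_cases h : (toD d).1 ∈ coreE1 g J
  · exact ⟨fun _ => coreE1_X C E h, fun _ => Or.inl h⟩
  · rw [(E.satD C).fwd d h]
    exact ⟨fun h' => h'.elim (fun h' => absurd h' h) fun h' => D_X h'.2, fun h' => Or.inr ⟨h, X_D C E h' h⟩⟩

lemma sV_iff (C : Ctx γ A₀) (E : Ext A₀ A B) (v : Cos g J) : v ∈ (coreSub g J).sV ↔ ∃ d ∈ Xd A B, d.1 = v := by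
  have hg : 0 < g := by have := C.hg; omega
  unfold coreSub; rw [if_neg (ne_bot C)]
  show v ∈ coreV1 g J ∨ coreFin g J _ ↔ _
  rw [coreFin_iff C E]
  constructor
  · rintro (⟨e, he, h⟩ | ⟨h1, h2⟩)
    · have h1 : fwd e ∈ Xd A B := coreE1_X C E (by rwa [toD_fwd])
      rcases h with h | h
      · exact ⟨_, h1, h⟩
      · exact ⟨rev (fwd e), Xd_rev.mpr h1, (hd_fwd e).trans h⟩
    · refine ⟨(v, rl 0 (by omega)), D_X ?_, rfl⟩
      rw [Lf_rl0 hg]; exact h2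
  · rintro ⟨d, hd, hv⟩
    by_cases h : v ∈ coreV1 g J
    · exact Or.inl h
    · exact Or.inr ⟨h, ((E.satD C).around hg h hv).mp (X_D C E hd (not_coreE1 h hv))⟩

end Ident
end

section
set_option linter.unusedSimpArgs false
set_option linter.deprecated false
set_option linter.unusedVariables false
open Classical
section Final

variable {g : ℕ} {J : Subgroup (Gamma g)} {γ : Gamma g} {A₀ A B : Set (Cos g J)}

lemma XR_symm {x y : Cos g J} (h : XR (Xd A B) x y) : XR (Xd A B) y x := by
  induction h with
  | refl => exact Relation.ReflTransGen.refl
  | tail _ h ih =>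
    obtain ⟨d, hd, rfl, rfl⟩ := h
    exact Relation.ReflTransGen.head ⟨rev d, Xd_rev.mpr hd, rfl, hd_rev d⟩ ih

lemma XR_wk (w : List (Letter g)) (v : Cos g J) (h : ∀ d ∈ wk v w, d ∈ Xd A B) : ∀ d ∈ wk v w, XR (Xd A B) v d.1 := by
  induction w generalizing v with
  | nil => intro d hd; simp [wk] at hd
  | cons s w ih =>
    intro d hd
    simp only [wk, List.mem_cons] at hd h
    rcases hd with rfl | hd
    · exact Relation.ReflTransGen.refl
    · exact Relation.ReflTransGen.head ⟨(v, s), h _ (Or.inl rfl), rfl, rfl⟩ (ih _ (fun e he => h e (Or.inr he)) d hd)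

lemma X_conn (C : Ctx γ A₀) (E : Ext A₀ A B) : ∃ x₀, ∀ d ∈ Xd A B, XR (Xd A B) x₀ d.1 := by
  have hg : 0 < g := by have := C.hg; omega
  have hAB := E.AB
  obtain ⟨x, w, _, _, _, hm, _⟩ := key2 C E.hA
  refine ⟨mkCos g J x, ?_⟩
  set x₀ := mkCos g J x
  have hcA : ∀ d ∈ Cut A, d ∈ Xd A B := fun d hd => ⟨Or.inr hd.2, Or.inl (hAB hd.1)⟩
  have hA : ∀ d ∈ Cut A, XR (Xd A B) x₀ d.1 := fun d hd =>
    XR_wk w x₀ (fun e he => hcA e ((hm e).mp he)) d ((hm d).mpr hd)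
  have hstep : ∀ d ∈ Xd A B, (XR (Xd A B) x₀ d.1 ↔ XR (Xd A B) x₀ (hd d)) := by
    intro d hd'
    constructor
    · intro h; exact h.tail ⟨d, hd', rfl, rfl⟩
    · intro h; exact h.tail ⟨rev d, Xd_rev.mpr hd', rfl, hd_rev d⟩
  have hface : ∀ d e : DT g J, Lf d = Lf e → Lf d ∈ B \ A → XR (Xd A B) x₀ d.1 → XR (Xd A B) x₀ e.1 := by
    intro d e hde hd' h
    have := face_const (fun d => (Lf d ∈ B \ A → XR (Xd A B) x₀ d.1)) (by
      intro d
      apply propext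
      rw [Lf_fnx]
      refine imp_congr_right fun h => ?_
      exact (hstep d (D_X h)).symm) hde
    have h2 : Lf e ∈ B \ A → XR (Xd A B) x₀ e.1 := this.mp (fun _ => h)
    exact h2 (hde ▸ hd')
  have hD : (B \ A).Finite := E.hA.near.diff_finite E.hB.near
  let K : Set (Cos g J) := {f | f ∈ B \ A ∧ ∀ d, Lf d = f → ¬ XR (Xd A B) x₀ d.1}
  have hK : K = ∅ := by
    apply IsMin.no_piece C E.hB (hD.subset fun f h => h.1) (fun f h => h.1.1)
    intro d hd' hB
    have h1 : ¬ XR (Xd A B) x₀ d.1 := hd'.2 d rfl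
    have h1' : ¬ XR (Xd A B) x₀ (rev d).1 := fun h => h1 ((hstep d (D_X hd'.1)).mpr h)
    have hnA : Lf (rev d) ∉ A := by
      intro h
      apply h1'
      apply hA
      exact ⟨h, by rw [rev_rev]; exact hd'.1.2⟩
    refine ⟨⟨hB, hnA⟩, ?_⟩
    intro e he hR
    exact h1' (hface e (rev d) he (he ▸ ⟨hB, hnA⟩) hR)
  have hDR : ∀ d, Lf d ∈ B \ A → XR (Xd A B) x₀ d.1 := by
    intro d hd'
    by_contra hn
    have : Lf d ∈ K := ⟨hd', fun e he hR => hn (hface e d he (he ▸ hd') hR)⟩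
    rw [hK] at this; exact this
  have hB : ∀ d ∈ Cut B, XR (Xd A B) x₀ d.1 := by
    intro d hd'
    by_cases h : Lf d ∈ A
    · exact hA d ⟨h, fun h' => hd'.2 (hAB h')⟩
    · exact hDR d ⟨hd'.1, h⟩
  intro d hd'
  have h := hd'
  rw [Xd_eq hAB] at h
  rcases h with h | h | h
  · exact hDR d h
  · exact hA d h
  · have h1 := hB (rev d) h
    exact (hstep d hd').mpr h1

lemma XR_walk (C : Ctx γ A₀) (E : Ext A₀ A B) {x y : Cos g J} (h : XR (Xd A B) x y) :
    ∃ l, (cover g J).WalkFrom x y l ∧ (cover g J).InSet (coreSub g J).sE l := by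
  induction h using Relation.ReflTransGen.head_induction_on with
  | refl => exact ⟨[], Complex.WalkFrom.nil _, fun d hd => by simp at hd⟩
  | head h _ ih =>
    obtain ⟨d, hd', rfl, rfl⟩ := h
    obtain ⟨l, h1, h2⟩ := ih
    refine ⟨toD d :: l, ?_, ?_⟩
    · have h3 : (cover g J).WalkFrom ((cover g J).dHead (toD d)) y l := by rw [dHead_toD]; exact h1
      have h4 := Complex.WalkFrom.cons (toD d) h3
      rw [dTail_toD] at h4; exact h4
    · intro e he
      rcases List.mem_cons.mp he with rfl | he
      · exact (sE_iff C E d).mpr hd'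
      · exact h2 e he

lemma core_conn (C : Ctx γ A₀) (E : Ext A₀ A B) (hne : (Xd A B).Nonempty) : (coreSub g J).Connected := by
  obtain ⟨x₀, h⟩ := X_conn C E
  obtain ⟨d0, hd0⟩ := hne
  refine ⟨⟨d0.1, (sV_iff C E _).mpr ⟨d0, hd0, rfl⟩⟩, ?_⟩
  intro v hv w hw
  obtain ⟨d, hd', h1⟩ := (sV_iff C E v).mp hv
  obtain ⟨e, he, h2⟩ := (sV_iff C E w).mp hw
  have := XR_walk C E ((XR_symm (h d hd')).trans (h e he))
  rw [h1, h2] at this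
  exact this

lemma X_fin (C : Ctx γ A₀) (E : Ext A₀ A B) : (Xd A B).Finite :=
  Xd_finite E.AB (E.hA.near.cut C.cut) (E.hB.near.cut C.cut) (E.hA.near.diff_finite E.hB.near)

lemma sE_eq (C : Ctx γ A₀) (E : Ext A₀ A B) : (coreSub g J).sE = (fun d => (toD d).1) '' {d : DT g J | d ∈ Xd A B ∧ d.2.2 = true} := by
  ext e
  constructor
  · intro h
    rw [← toD_fwd e, sE_iff C E] at h
    exact ⟨fwd e, ⟨h, rfl⟩, toD_fwd e⟩
  · rintro ⟨d, ⟨h, _⟩, rfl⟩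
    exact (sE_iff C E d).mpr h

lemma sE_ncard (C : Ctx γ A₀) (E : Ext A₀ A B) : (coreSub g J).sE.ncard = Nat.card (EX A B) := by
  rw [sE_eq C E, Set.ncard_image_of_injOn]
  · rfl
  · rintro d ⟨_, h1⟩ e ⟨_, h2⟩ h
    rcases toD_fst_eq h with h | h
    · exact h
    · rw [h] at h1
      simp [rev, linv, h2] at h1

lemma sV_eq (C : Ctx γ A₀) (E : Ext A₀ A B) : (coreSub g J).sV = {x : Cos g J | ∃ d ∈ Xd A B, d.1 = x} := by
  ext v; exact sV_iff C E v

lemma core_compact (C : Ctx γ A₀) (E : Ext A₀ A B) : (coreSub g J).Compact := by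
  refine ⟨?_, ?_, ?_⟩
  · rw [sV_eq C E]; exact VX_finite (X_fin C E)
  · rw [sE_eq C E]; exact ((X_fin C E).subset fun d h => h.1).image _
  · rw [sF_eq C E]; exact E.hA.near.diff_finite E.hB.near

lemma X_ne (C : Ctx γ A₀) (E : Ext A₀ A B) : (Xd A B).Nonempty := by
  have hg : 0 < g := by have := C.hg; omega
  obtain ⟨d, hd'⟩ := exists_boundary hg (E.hA.near.infinite C.inf).nonempty (E.hA.compl.near.infinite C.cinf).nonempty
  exact ⟨d, Or.inr hd'.2, Or.inl (E.AB hd'.1)⟩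

lemma core_euler (C : Ctx γ A₀) (E : Ext A₀ A B) :
    (coreSub g J).sV.ncard + (coreSub g J).sF.ncard = (coreSub g J).sE.ncard := by
  obtain ⟨x₀, h⟩ := X_conn C E
  have h1 := rank_eq C E.hA E.hB E.AB (X_fin C E)
  have h2 := rank_conn (X_fin C E) (X_ne C E) (by
    rintro ⟨x, d, hd', rfl⟩ ⟨y, e, he, rfl⟩
    exact (XR_symm (h d hd')).trans (h e he))
  have h3 : (coreSub g J).sV.ncard = Nat.card (VX A B) := by rw [sV_eq C E]; rfl
  have h4 : (coreSub g J).sF.ncard = (B \ A : Set (Cos g J)).ncard := by rw [sF_eq C E]; rfl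
  have h5 := sE_ncard C E
  omega

lemma get_bdry (d : DT g J) : (wk (Lf d) (relatorWord g))[rp d.2]? = some d := by
  have hl : rp d.2 < (wk (Lf d) (relatorWord g)).length := by
    rw [wk_length, length_relator]; exact rp_lt _
  rw [List.getElem?_eq_getElem hl, wk_get, relator_get]
  congr 1
  refine Prod.ext ?_ (rl_rp _)
  show act (act d.1 (pre d.2)⁻¹) (pre d.2) = d.1
  rw [← act_mul]; simp [act_one]

lemma infix_two {α : Type*} {l : List α} {p : ℕ} {a b : α} (h1 : l[p]? = some a) (h2 : l[p+1]? = some b) : [a, b] <:+: l := by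
  obtain ⟨hp, rfl⟩ := List.getElem?_eq_some_iff.mp h1
  obtain ⟨hp', rfl⟩ := List.getElem?_eq_some_iff.mp h2
  refine ⟨l.take p, l.drop (p + 2), ?_⟩
  conv_rhs => rw [← List.take_append_drop p l, List.drop_eq_getElem_cons hp, List.drop_eq_getElem_cons hp']
  simp

lemma rp_nx (s : Letter g) : rp (nx s) = (rp s + 1) % (4 * g) := by
  conv_lhs => rw [← rl_rp s, nx_rl, rp_rl]

lemma face_step (d : DT g J) : [d, fnx d] <:+: (wk (Lf d) (relatorWord g) ++ wk (Lf d) (relatorWord g)) := by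
  have hp := rp_lt d.2
  have hl : (wk (Lf d) (relatorWord g)).length = 4 * g := by rw [wk_length, length_relator]
  have h1 := get_bdry d
  have h2 := get_bdry (fnx d)
  rw [Lf_fnx] at h2
  have e : (fnx d).2 = nx d.2 := rfl
  rw [e, rp_nx] at h2
  apply infix_two (p := rp d.2)
  · rw [List.getElem?_append_left (by omega)]; exact h1
  · by_cases h : rp d.2 + 1 < 4 * g
    · rw [List.getElem?_append_left (by omega)]
      rwa [Nat.mod_eq_of_lt h] at h2
    · rw [List.getElem?_append_right (by omega), hl]
      rw [show rp d.2 + 1 = 4 * g by omega, Nat.mod_self] at h2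
      rwa [show rp d.2 + 1 - 4 * g = 0 by omega]

lemma faceStep_Lf {S : Set (Cos g J)} {d d' : DT g J} (h : (cover g J).faceStep S (toD d) (toD d')) : Lf d ∈ S := by
  obtain ⟨f, hf, h⟩ := h
  have h1 : toD d ∈ (cover g J).bdry f ++ (cover g J).bdry f := h.subset (by simp)
  have h2 : toD d ∈ (cover g J).bdry f := by simpa using h1
  have h5 : toD d ∈ (wk (f : Cos g J) (relatorWord g)).map toD := bdry_eq (J := J) f ▸ h2
  obtain ⟨e, he, h6⟩ := List.mem_map.mp h5
  have h7 : Lf e = (f : Cos g J) := mem_bdry.mp he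
  rw [← toD_inj h6, h7]; exact hf

lemma faceStep_fnx {S : Set (Cos g J)} {d : DT g J} (h : Lf d ∈ S) : (cover g J).faceStep S (toD d) (toD (fnx d)) := by
  refine ⟨Lf d, h, ?_⟩
  have h1 := List.IsInfix.map (toD (g := g) (J := J)) (face_step d)
  rw [List.map_append] at h1
  have e := bdry_eq (J := J) (Lf d)
  rw [e]
  exact h1

lemma bstep_cut (C : Ctx γ A₀) (E : Ext A₀ A B) {Z : Set (Cos g J)} {d : DT g J} (hd' : d ∈ Cut Z)
    (hcut : ∀ e ∈ Cut Z, e ∈ Xd A B) (hZ : ∀ e, Lf e ∈ Z → Lf (rev e) ∈ Z → e ∉ Xd A B)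
    (hZD : ∀ x ∈ Z, x ∉ B \ A) :
    (cover g J).bStep (coreSub g J).sE (coreSub g J).sF (toD d) (toD (nxt Z d)) := by
  have hg : 0 < g := by have := C.hg; omega
  obtain ⟨j, hj, e1, h1, h2⟩ := nxt_spec hd' hg
  refine ⟨(sE_iff C E d).mpr (hcut d hd'), ⟨(sE_iff C E _).mpr (hcut _ h1), (adj_toD _ _).mpr (nxt_fst _ _).symm, ?_⟩, ?_⟩
  · intro d'' hX hadj
    obtain ⟨e, rfl⟩ : ∃ e : DT g J, toD e = d'' := ⟨ofD d'', toD_ofD _⟩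
    rw [sE_iff C E] at hX
    rw [adj_toD] at hadj
    rw [dLet_toD, dLet_toD, dLet_toD, e1]
    show gapN d.2 (vs^[j] (nx d.2)) ≤ _
    rw [gapN_iter _ _ hj]
    by_contra hlt
    push_neg at hlt
    have he : e = (hd d, vs^[gapN d.2 e.2] (nx d.2)) := Prod.ext hadj.symm (iter_gapN _ _).symm
    refine hZ e ?_ ?_ hX
    · rw [he]; exact h2 _ hlt.le
    · rw [Lf_rev, he]
      have := h2 (gapN d.2 e.2 + 1) hlt
      rw [Function.iterate_succ_apply'] at this
      exact this
  · rw [sF_eq C E]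
    intro h
    exact hZD _ hd'.1 (faceStep_Lf h)

lemma bcycle (C : Ctx γ A₀) (E : Ext A₀ A B) {γ' : Gamma g} {A₁ Z : Set (Cos g J)} (C' : Ctx γ' A₁) (hm : IsMin A₁ Z)
    (hcut : ∀ e ∈ Cut Z, e ∈ Xd A B) (hZ : ∀ e, Lf e ∈ Z → Lf (rev e) ∈ Z → e ∉ Xd A B)
    (hZD : ∀ x ∈ Z, x ∉ B \ A) :
    ∃ δ, (cover g J).BCycle (coreSub g J).sE (coreSub g J).sF δ ∧ δ.length = (Cut Z).ncard ∧ ∀ d, toD d ∈ δ ↔ d ∈ Cut Z := by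
  obtain ⟨x, w, hw, _, hlen, hmem, hch, d, d', h1, h2, h3⟩ := key2 C' hm
  have hmm : ∀ e, toD e ∈ (wk (mkCos g J x) w).map toD ↔ e ∈ Cut Z := by
    intro e
    rw [← hmem e, List.mem_map]
    exact ⟨fun ⟨a, ha, h⟩ => toD_inj h ▸ ha, fun h => ⟨e, h, rfl⟩⟩
  have hl := wk_length (mkCos g J x) w
  refine ⟨(wk (mkCos g J x) w).map toD, ⟨⟨?_, ?_, ?_⟩, toD d, toD d', ?_, ?_, ?_⟩, by rw [List.length_map, hl, hlen], hmm⟩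
  · intro h
    have := congrArg List.length h
    rw [List.length_map, hl] at this
    exact hw (List.length_eq_zero_iff.mp this)
  · intro e he
    obtain ⟨a, rfl⟩ : ∃ a : DT g J, toD a = e := ⟨ofD e, toD_ofD _⟩
    exact (sE_iff C E a).mpr (hcut a ((hmm a).mp he))
  · show List.IsChain _ _
    rw [List.isChain_map]
    rw [List.isChain_iff_getElem] at hch ⊢
    intro i hi
    rw [hch i hi]
    exact bstep_cut C E ((hmem _).mp (List.getElem_mem _)) hcut hZ hZD
  · rw [List.getLast?_map, h1]; rfl
  · rw [List.head?_map, h2]; rfl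
  · rw [h3]
    exact bstep_cut C E ((hmem _).mp (List.mem_of_getLast? h1)) hcut hZ hZD

lemma bdart (C : Ctx γ A₀) (E : Ext A₀ A B) {d : DT g J}
    (h : (cover g J).IsBDart (coreSub g J).sE (coreSub g J).sF (toD d)) : d ∈ Cut A ∨ d ∈ Cut Bᶜ := by
  have hg : 0 < g := by have := C.hg; omega
  obtain ⟨h1, d'', ⟨h2, h3, h4⟩, h5⟩ := h
  rw [sE_iff C E] at h1
  have hn : Lf d ∉ B \ A := by
    intro hD
    apply h5
    have hf : fnx d ∈ Xd A B := D_X (by rw [Lf_fnx]; exact hD)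
    obtain ⟨e, rfl⟩ : ∃ e : DT g J, toD e = d'' := ⟨ofD d'', toD_ofD _⟩
    have h6 := h4 (toD (fnx d)) ((sE_iff C E _).mpr hf) ((adj_toD _ _).mpr rfl)
    rw [adj_toD] at h3
    rw [dLet_toD, dLet_toD, dLet_toD] at h6
    have h7 : gapN d.2 (fnx d).2 = 0 := gapN_iter d.2 0 (by omega)
    rw [h7] at h6
    have h8 : gapN d.2 e.2 = 0 := by omega
    have h9 := iter_gapN d.2 e.2
    rw [h8] at h9
    have : e = fnx d := Prod.ext h3.symm h9.symm
    rw [this, sF_eq C E]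
    exact faceStep_fnx hD
  rw [Xd_eq E.AB] at h1
  rcases h1 with h1 | h1 | h1
  · exact absurd h1 hn
  · exact Or.inl h1
  · exact Or.inr (mem_Cut_compl.mpr h1)

lemma final (hg : 2 ≤ g) (hγ : γ ≠ 1) (hJ : J = Subgroup.zpowers γ) :
    (coreSub g J).Connected ∧ (coreSub g J).Compact ∧
    (coreSub g J).sV.ncard + (coreSub g J).sF.ncard = (coreSub g J).sE.ncard ∧
    ∃ δ₁ δ₂ : List ((cover g J).D),
      (cover g J).BCycle (coreSub g J).sE (coreSub g J).sF δ₁ ∧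
      (cover g J).BCycle (coreSub g J).sE (coreSub g J).sF δ₂ ∧
      δ₁.Disjoint δ₂ ∧
      (∀ d, (cover g J).IsBDart (coreSub g J).sE (coreSub g J).sF d →
        d ∈ δ₁ ∨ d ∈ δ₂) ∧
      δ₁.length = conjLen γ ∧ δ₂.length = conjLen γ := by
  obtain ⟨A₀, C⟩ := exists_ctx hg hJ hγ
  obtain ⟨A, hA, hA'⟩ := exists_least C
  obtain ⟨B, hB, hB'⟩ := exists_greatest C
  have E : Ext A₀ A B := ⟨hA, hB, fun B' h => ⟨hA' B' h, hB' B' h⟩⟩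
  have hAB := E.AB
  refine ⟨core_conn C E (X_ne C E), core_compact C E, core_euler C E, ?_⟩
  obtain ⟨δ₁, h1, h2, h3⟩ := bcycle C E C hA (fun e he => ⟨Or.inr he.2, Or.inl (hAB he.1)⟩)
    (fun e h1 h2 hX => hX.1.elim (fun h => h h1) (fun h => h h2)) (fun x hx h => h.2 hx)
  obtain ⟨δ₂, h4, h5, h6⟩ := bcycle C E C.symm hB.compl
    (fun e he => ⟨Or.inl fun h => he.1 (hAB h), Or.inr (not_not.mp he.2)⟩)
    (fun e h1 h2 hX => hX.2.elim (fun h => h1 h) (fun h => h2 h)) (fun x hx h => hx h.1)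
  refine ⟨δ₁, δ₂, h1, h4, ?_, ?_, ?_, ?_⟩
  · intro d hd1 hd2
    rw [← toD_ofD d] at hd1 hd2
    rw [h3] at hd1
    rw [h6] at hd2
    exact hd2.1 (hAB hd1.1)
  · intro d hd'
    rw [← toD_ofD d] at hd' ⊢
    rw [h3, h6]
    exact bdart C E hd'
  · rw [h2, conjLen_eq C hA]
  · rw [h5, conjLen_eq C hB, cut_compl_ncard]

end Final
end

/-- For `1 ≠ γ ∈ Γ_g`, the core surface `Core(⟨γ⟩)` is connected
and compact, its thick version is homeomorphic to an annulus (rendered: a compact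
connected orientable surface with Euler characteristic `0` and exactly two
boundary cycles), and both boundary cycles have length `ℓ(γ^{Γ_g})`. -/
theorem statement_9 (g : ℕ) (hg : 2 ≤ g) (γ : Gamma g) (hγ : γ ≠ 1)
    (J : Subgroup (Gamma g)) (hJ : J = Subgroup.zpowers γ) :
    (coreSub g J).Connected ∧ (coreSub g J).Compact ∧
    (coreSub g J).sV.ncard + (coreSub g J).sF.ncard = (coreSub g J).sE.ncard ∧
    ∃ δ₁ δ₂ : List ((cover g J).D),
      (cover g J).BCycle (coreSub g J).sE (coreSub g J).sF δ₁ ∧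
      (cover g J).BCycle (coreSub g J).sE (coreSub g J).sF δ₂ ∧
      δ₁.Disjoint δ₂ ∧
      (∀ d, (cover g J).IsBDart (coreSub g J).sE (coreSub g J).sF d →
        d ∈ δ₁ ∨ d ∈ δ₂) ∧
      δ₁.length = conjLen γ ∧ δ₂.length = conjLen γ := by
  exact final hg hγ hJ

end CS

end
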